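/- For every f ∈ 𝒮 with logarithmic coefficients γ_n, the inequality ∑_{n=1}^∞ (n²/(n+1)³) |γ_n|² ≤ ζ(3) − 1 holds, where ζ is the Riemann zeta function; the inequality is strict unless f(z) = z/(1−e^{iθ}z)² for some θ ∈ ℝ. -/

import Mathlib

/-!
The inequality is a consequence of the Milin inequalities, which are proved here by a discrete form of
the argument of de Branges that needs no Löwner chains.

Write `log (f z / z) = ∑ c_k z ^ k`, so `c_k = 2 γ_k`. The dilation `f (r z) / M` is a univalent
self-map of the disk fixing `0`. As long as such a map omits a point near the circle, it omits one on a
prescribed circle of radius `b ^ 2 < 1` (`omit_circle`), and the osculation step of Koebe factors it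
through a Blaschke product of degree two (`Uni.step`). Each step divides the derivative at `0` by
`β = 2 b / (1 + b ^ 2) = 1 - ε`, so after finitely many steps the remaining map is close to the
identity (`reach_end`, `jets_near`). Hence the coefficients of `log (ω z / z)` are limits, as `ε → 0`,
of the end points of chains of explicit maps `stepMap` on coefficient sequences (`chain_limit`).

Along a chain, the energy `EE` with the weights `TT m` of de Branges, taken at the current derivative
`y`, changes at each step by `-ε * DD + O(ε ^ 2)` (`EE_Ap`, resting on `DB_identity`). The dissipation
`DD` is a combination of squares with coefficients `QQ m k (y)`. These are nonnegative on `[0, 1]`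
(`QQ_nonneg`), because their generating function in `k` is the trace of a symmetric power of a product
of two conjugate reflections. The energy starts nonpositive and ends, at `y = 1`, as the Milin
functional; letting `ε → 0` and `r → 1` gives `milin`.

For the equality case the systems of order at most `m` are added, so that all squares carry positive
weights. Unless the coefficients are those of a rotation of the Koebe function, the squares cannot all
vanish (`gap_or_extremal`), the chain loses a definite amount of energy shortly before its end
(`chain_strict`), and some Milin inequality is strict (`milin_strict`).

Finally `n ^ 2 / (n + 1) ^ 3 * |γ_n| ^ 2` is `n * |γ_n| ^ 2` times the weight `n / (n + 1) ^ 3`. These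
weights are strictly convex from the start, so summing by parts twice expresses the partial sums of
`n / (n + 1) ^ 3 * (n * |γ_n| ^ 2 - 1 / n)` through the Milin functionals with positive coefficients, up
to a boundary term tending to `0` (`tsum_bound`); the comparison series `∑ 1 / (n + 1) ^ 3` is `ζ(3) - 1`.
-/

open Complex Metric Real

/-- The class `𝒮` of normalized univalent (analytic and injective) functions
on the unit disk. -/
def InClassS (f : ℂ → ℂ) : Prop :=
  AnalyticOnNhd ℂ f (ball (0 : ℂ) 1) ∧ Set.InjOn f (ball (0 : ℂ) 1) ∧
    f 0 = 0 ∧ deriv f 0 = 1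

/-- `γ` are the logarithmic coefficients of `f`: there is an analytic branch `g`
of `log (f z / z)` on the unit disk with `g 0 = 0` whose Taylor coefficients at `0`
are `2 * γ n` for `n ≥ 1`. -/
def IsLogCoeffs (f : ℂ → ℂ) (γ : ℕ → ℂ) : Prop :=
  ∃ g : ℂ → ℂ, AnalyticOnNhd ℂ g (ball (0 : ℂ) 1) ∧ g 0 = 0 ∧
    (∀ z ∈ ball (0 : ℂ) 1, z ≠ 0 → Complex.exp (g z) = f z / z) ∧
    ∀ n : ℕ, 1 ≤ n → iteratedDeriv n g 0 = (n.factorial : ℂ) * (2 * γ n)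

/-- `f` coincides on the unit disk with a rotation `z / (1 - e^{iθ} z)^2`
of the Koebe function. -/
def IsKoebeRotation (f : ℂ → ℂ) : Prop :=
  ∃ θ : ℝ, Set.EqOn f
    (fun z => z / (1 - Complex.exp (θ * Complex.I) * z) ^ 2) (ball (0 : ℂ) 1)

/-! ### The de Branges polynomials -/

section

open Polynomial in
/-- The de Branges polynomials, as coefficients of a Laurent polynomial in an auxiliary variable `z`:
`∑ₖ QQ m k * z ^ k = U_m(s / 2)` with `s = 2 * (1 - X) + X * (z + z⁻¹)` and `U_m` the Chebyshev
polynomial of the second kind. The definition is the three-term recursion of `U_m`. -/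
noncomputable def QQ : ℕ → ℤ → ℝ[X]
  | 0, k => if k = 0 then 1 else 0
  | 1, k => if k = 0 then 2 * (1 - X) else if k = 1 ∨ k = -1 then X else 0
  | (m + 2), k => 2 * (1 - X) * QQ (m + 1) k + X * (QQ (m + 1) (k - 1) + QQ (m + 1) (k + 1)) - QQ m k

section QQ
open Polynomial

lemma QQ_rec (m : ℕ) (k : ℤ) : QQ (m + 2) k =
    2 * (1 - X) * QQ (m + 1) k + X * (QQ (m + 1) (k - 1) + QQ (m + 1) (k + 1)) - QQ m k := by
  rw [QQ]

lemma QQ_zero_of_lt (m : ℕ) : ∀ k : ℤ, (m : ℤ) < |k| → QQ m k = 0 := by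
  induction m using Nat.twoStepInduction with
  | zero => intro k hk; rw [QQ]; rw [if_neg]; rintro rfl; simp at hk
  | one =>
    intro k hk; rw [QQ, if_neg, if_neg]
    · rintro (rfl | rfl) <;> simp at hk
    · rintro rfl; simp at hk
  | more m h1 h2 =>
    intro k hk
    push_cast at hk h2
    rw [QQ_rec, h2 k (by grind), h2 (k-1) (by grind), h2 (k+1) (by grind), h1 k (by grind)]
    simp

lemma QQ_neg (m : ℕ) : ∀ k : ℤ, QQ m (-k) = QQ m k := by
  induction m using Nat.twoStepInduction with
  | zero => intro k; simp [QQ]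
  | one => intro k; simp only [QQ, neg_eq_zero, neg_inj]; congr 2; simp only [eq_iff_iff]; grind
  | more m h1 h2 =>
    intro k
    rw [QQ_rec, QQ_rec, h1, h2, ← h2 (-k-1), ← h2 (-k+1)]
    rw [show -(-k-1) = k+1 by ring, show -(-k+1) = k - 1 by ring]; ring

/-- The differential relation that makes `TT` (the sums of consecutive `QQ`) satisfy the system
`X * derivative (T k) = k * Q k`. -/
lemma QQ_ode (m : ℕ) : ∀ k : ℤ, (k : ℝ[X]) * QQ m k - ((k : ℝ[X]) + 1) * QQ m (k + 1) =
    X * (derivative (QQ m k) + derivative (QQ m (k + 1))) := by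
  induction m using Nat.twoStepInduction with
  | zero =>
    intro k
    simp only [QQ]
    by_cases h0 : k = 0
    · subst h0; simp
    · by_cases h1 : k = -1
      · subst h1; simp
      · rw [if_neg h0, if_neg (by grind)]; simp
  | one =>
    intro k
    simp only [QQ]
    rcases lt_trichotomy k (-2) with h | rfl | h
    · simp [show k ≠ 0 by grind, show k ≠ 1 by grind, show k ≠ -1 by grind, show k + 1 ≠ 0 by grind,
        show k +1 ≠ -1 by grind]
    · norm_num
    · rcases lt_trichotomy k 1 with h' | rfl | h'
      · interval_cases k <;> norm_num
      · norm_num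
      · simp [show k ≠ 0 by grind, show k ≠ 1 by grind, show k ≠ -1 by grind, show k + 1 ≠ 0 by grind,
        show k +1 ≠ -1 by grind]
  | more m h1 h2 =>
    intro k
    have e1 := h1 k
    have e2 := h2 k
    have e3 := h2 (k-1)
    have e4 := h2 (k+1)
    simp only [QQ_rec, derivative_add, derivative_sub, derivative_mul, derivative_X, derivative_one,
      show derivative (2 : ℝ[X]) = 0 from derivative_ofNat 2]
    push_cast at e3 e4
    rw [show k - 1 + 1 = k by ring] at e3
    rw [show k + 1 - 1 = k by ring]
    linear_combination 2 * (1 - X) * e2 + X * (e3 + e4) - e1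

lemma QQ_top (m : ℕ) : QQ m m = X ^ m := by
  induction m using Nat.twoStepInduction with
  | zero => simp [QQ]
  | one => simp [QQ]
  | more m h1 h2 =>
    rw [QQ_rec, QQ_zero_of_lt (m+1) _ (by push_cast; grind), QQ_zero_of_lt (m+1) (((m+2 : ℕ):ℤ)+1) (by push_cast; grind),
      QQ_zero_of_lt m _ (by push_cast; grind)]
    rw [show (((m+2 : ℕ):ℤ)-1) = ((m+1 : ℕ) : ℤ) by push_cast; ring, h2]; ring

lemma QQ_eval_one (m : ℕ) : ∀ k : ℤ, (QQ m k).eval 1 = if |k| ≤ m ∧ 2 ∣ (k - m) then 1 else 0 := by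
  induction m using Nat.twoStepInduction with
  | zero =>
    intro k; simp only [QQ]
    by_cases h : k = 0
    · simp [h]
    · rw [if_neg h, if_neg (by simp [h])]; simp
  | one =>
    intro k; simp only [QQ]
    by_cases h : k = 0
    · simp [h]
    · rw [if_neg h]
      by_cases h : k = 1 ∨ k = -1
      · rw [if_pos h, if_pos (by rcases h with rfl | rfl <;> norm_num)]; simp
      · rw [if_neg h, if_neg (by grind)]; simp
  | more m h1 h2 =>
    intro k
    rw [QQ_rec]
    simp only [eval_sub, eval_add, eval_mul, eval_X, eval_one, eval_ofNat, h1, h2, sub_self, mul_zero,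
      zero_mul, zero_add, one_mul]
    push_cast
    have a1 : (2 ∣ k - 1 - ((m:ℤ) + 1)) ↔ 2 ∣ k - m := by omega
    have a2 : (2 ∣ k + 1 - ((m:ℤ) + 1)) ↔ 2 ∣ k - m := by omega
    have a3 : (2 ∣ k - ((m:ℤ) + 2)) ↔ 2 ∣ k - m := by omega
    simp only [a1, a2, a3]
    by_cases hd : (2:ℤ) ∣ k - m
    · simp only [hd, and_true]
      by_cases b1 : |k| ≤ m
      · rw [if_pos (by grind), if_pos (by grind), if_pos b1, if_pos (by grind)]; simp
      · by_cases b2 : |k| ≤ m + 2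
        · rw [if_neg b1, if_pos b2]
          rcases le_total 0 k with hk | hk
          · rw [if_pos (by grind), if_neg (by grind)]; simp
          · rw [if_neg (by grind), if_pos (by grind)]; simp
        · rw [if_neg b1, if_neg b2, if_neg (by grind), if_neg (by grind)]; simp
    · simp [hd]
end QQ

end

/-! ### Nonnegativity via symmetric powers -/

section

section SymPow
open Polynomial Matrix

/-- The value at `(u, v)` of the degree-`m` homogenization of `p`. -/
noncomputable def homz {A : Type*} [CommRing A] [Algebra ℂ A] (m : ℕ) (p : ℂ[X]) (u v : A) : A :=
  ∑ j ∈ Finset.range (m + 1), algebraMap ℂ A (p.coeff j) * (u ^ j * v ^ (m - j))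

lemma homz_mul {A : Type*} [CommRing A] [Algebra ℂ A] (m : ℕ) (p : ℂ[X]) (hp : p.natDegree ≤ m) (u v : A)
    (a b : ℂ) : homz (m + 1) ((C a * X + C b) * p) u v =
      (algebraMap ℂ A a * u + algebraMap ℂ A b * v) * homz m p u v := by
  unfold homz
  have h1 : ∀ j, ((C a * X + C b) * p).coeff j = a * (X * p).coeff j + b * p.coeff j := by
    intro j; rw [add_mul, coeff_add, mul_assoc, coeff_C_mul, coeff_C_mul]
  simp only [h1]
  simp only [map_add, map_mul, add_mul, Finset.sum_add_distrib]
  congr 1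
  · rw [Finset.sum_range_succ']
    simp only [coeff_X_mul, coeff_X_mul_zero, map_zero, mul_zero, zero_mul, add_zero]
    rw [Finset.mul_sum]
    refine Finset.sum_congr rfl fun j hj => ?_
    rw [show m + 1 - (j + 1) = m - j by omega]; ring
  · rw [Finset.sum_range_succ, coeff_eq_zero_of_natDegree_lt (by omega)]
    simp only [map_zero, mul_zero, zero_mul, add_zero]
    rw [Finset.mul_sum]
    refine Finset.sum_congr rfl fun j hj => ?_
    rw [Finset.mem_range] at hj
    rw [show m + 1 - j = (m - j) + 1 by omega]; ring

lemma lin_natDegree (a b : ℂ) : (C a * X + C b).natDegree ≤ 1 := natDegree_linear_le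

lemma homz_prod {A : Type*} [CommRing A] [Algebra ℂ A] (u v : A) (a b c d : ℂ) (i k : ℕ) :
    homz (i + k) ((C a * X + C b) ^ i * (C c * X + C d) ^ k) u v =
      (algebraMap ℂ A a * u + algebraMap ℂ A b * v) ^ i *
      (algebraMap ℂ A c * u + algebraMap ℂ A d * v) ^ k := by
  induction i with
  | zero =>
    induction k with
    | zero => simp [homz]
    | succ k ih =>
      rw [pow_zero, one_mul, pow_succ', zero_add] at *
      rw [homz_mul, ih, pow_succ']; ring
      exact (natDegree_pow_le_of_le k (lin_natDegree c d)).trans (by simp)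
  | succ i ih =>
    rw [show i + 1 + k = (i + k) + 1 by ring, pow_succ', mul_assoc, homz_mul, ih, pow_succ']
    · ring
    · refine natDegree_mul_le.trans (add_le_add ?_ ?_)
      · exact (natDegree_pow_le_of_le i (lin_natDegree a b)).trans (by simp)
      · exact (natDegree_pow_le_of_le k (lin_natDegree c d)).trans (by simp)

/-- The dehomogenized image of the monomial `u ^ i * v ^ (m - i)` under the linear substitution `g`. -/
noncomputable def rowP (m : ℕ) (g : Matrix (Fin 2) (Fin 2) ℂ) (i : ℕ) : ℂ[X] :=
  (C (g 0 0) * X + C (g 0 1)) ^ i * (C (g 1 0) * X + C (g 1 1)) ^ (m - i)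

/-- The matrix of the `m`-th symmetric power of `g`, in the basis of monomials. -/
noncomputable def SymP (m : ℕ) (g : Matrix (Fin 2) (Fin 2) ℂ) : Matrix (Fin (m + 1)) (Fin (m + 1)) ℂ :=
  Matrix.of fun i j => (rowP m g i).coeff j

lemma SymP_mul (m : ℕ) (g h : Matrix (Fin 2) (Fin 2) ℂ) : SymP m (g * h) = SymP m g * SymP m h := by
  ext i j
  have hi : (i : ℕ) ≤ m := by omega
  have key := homz_prod (C (h 0 0) * X + C (h 0 1)) (C (h 1 0) * X + C (h 1 1)) (g 0 0) (g 0 1) (g 1 0) (g 1 1) i (m - i)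
  rw [Matrix.mul_apply]
  simp only [SymP, Matrix.of_apply]
  have e : rowP m (g * h) i = homz (i + (m - i)) ((C (g 0 0) * X + C (g 0 1)) ^ (i:ℕ) * (C (g 1 0) * X + C (g 1 1)) ^ (m - (i:ℕ))) (C (h 0 0) * X + C (h 0 1)) (C (h 1 0) * X + C (h 1 1)) := by
    rw [key]
    simp only [rowP, Matrix.mul_apply, Fin.sum_univ_two, map_add, map_mul, algebraMap_eq]
    ring
  rw [e]
  simp only [homz, finsetSum_coeff, algebraMap_eq, coeff_C_mul]
  rw [show (i:ℕ) + (m - i) = m by omega, Finset.sum_range]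
  rfl

lemma SymP_one (m : ℕ) : SymP m 1 = 1 := by
  ext i j
  simp [SymP, rowP, Matrix.one_apply, coeff_X_pow, Fin.ext_iff, eq_comm]

lemma trace_conj {n : ℕ} (A B P : Matrix (Fin n) (Fin n) ℂ) (Pi : Matrix (Fin n) (Fin n) ℂ) (h1 : P * Pi = 1)
    (h : A * P = P * B) : A.trace = B.trace := by
  have : A = P * B * Pi := by rw [← h, mul_assoc, h1, mul_one]
  rw [this, Matrix.trace_mul_comm, ← mul_assoc, mul_eq_one_comm.mp h1, one_mul]

/-- The trace of the `m`-th symmetric power is the complete homogeneous symmetric polynomial of the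
eigenvalues `l`, `μ`. The condition `g 1 0 ≠ 0` provides an explicit triangularization, which avoids
any diagonalizability assumption. -/
lemma trace_SymP (m : ℕ) (g : Matrix (Fin 2) (Fin 2) ℂ) (hc : g 1 0 ≠ 0) (l μ : ℂ)
    (h1 : l + μ = g 0 0 + g 1 1) (h2 : l * μ = g 0 0 * g 1 1 - g 0 1 * g 1 0) :
    (SymP m g).trace = ∑ i ∈ Finset.range (m + 1), l ^ i * μ ^ (m - i) := by
  have hP : SymP m g * SymP m !![l - g 1 1, 1; g 1 0, 0] = SymP m !![l - g 1 1, 1; g 1 0, 0] * SymP m !![l, 1; 0, μ] := by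
    rw [← SymP_mul, ← SymP_mul]; congr 1
    ext i j; fin_cases i <;> fin_cases j <;> simp [Matrix.mul_apply, Fin.sum_univ_two]
    · linear_combination h2 - l * h1
    · linear_combination -h1
    · ring
  have hQ : SymP m !![l - g 1 1, 1; g 1 0, 0] * SymP m !![0, 1 / g 1 0; 1, - (l - g 1 1) / g 1 0] = 1 := by
    rw [← SymP_mul, ← SymP_one]; congr 1
    ext i j; fin_cases i <;> fin_cases j <;> simp [Matrix.mul_apply, Fin.sum_univ_two] <;> field_simp <;> ring
  rw [trace_conj _ _ _ _ hQ hP, Matrix.trace, Finset.sum_range]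
  refine Finset.sum_congr rfl fun i _ => ?_
  simp only [SymP, rowP, Matrix.diag_apply, Matrix.of_apply]
  simp only [Matrix.cons_val_zero, Matrix.cons_val_one, Matrix.cons_val', Matrix.cons_val_fin_one, map_zero, zero_mul, zero_add]
  rw [← C_pow, coeff_mul_C]
  congr 1
  have := coeff_pow_of_natDegree_le (p := C l * X + C 1) (n := 1) (m := i) natDegree_linear_le
  simpa [coeff_one] using this


lemma bivar_ext (m : ℕ) (M N : ℕ → ℕ → ℂ)
    (h : ∀ u v : ℂ, ∑ a ∈ Finset.range (m + 1), (∑ b ∈ Finset.range (m + 1), M a b * u ^ b) * v ^ a =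
      ∑ a ∈ Finset.range (m + 1), (∑ b ∈ Finset.range (m + 1), N a b * u ^ b) * v ^ a)
    (a b : ℕ) (ha : a ≤ m) (hb : b ≤ m) : M a b = N a b := by
  have uni : ∀ F G : ℕ → ℂ, (∀ v : ℂ, ∑ a ∈ Finset.range (m + 1), F a * v ^ a =
      ∑ a ∈ Finset.range (m + 1), G a * v ^ a) → ∀ a ≤ m, F a = G a := by
    intro F G hFG a ha
    have : (∑ a ∈ Finset.range (m + 1), C (F a) * X ^ a : ℂ[X]) = ∑ a ∈ Finset.range (m + 1), C (G a) * X ^ a := by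
      refine Polynomial.funext fun v => ?_
      simpa [eval_finsetSum] using hFG v
    have := congrArg (fun p => coeff p a) this
    simpa [finsetSum_coeff, coeff_C_mul, coeff_X_pow, Nat.lt_succ_iff.mpr ha] using this
  exact uni (M a) (N a) (fun u => uni _ _ (h u) a ha) b hb

lemma rowP_natDegree (m : ℕ) (g : Matrix (Fin 2) (Fin 2) ℂ) (i : ℕ) (hi : i ≤ m) : (rowP m g i).natDegree ≤ m := by
  refine (natDegree_mul_le.trans (add_le_add ?_ ?_)).trans (Nat.add_sub_of_le hi).le
  · exact (natDegree_pow_le_of_le i (lin_natDegree _ _)).trans (by simp)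
  · exact (natDegree_pow_le_of_le (m - i) (lin_natDegree _ _)).trans (by simp)

/-- For symmetric `g`, the symmetric power is symmetric up to the binomial rescaling of the basis:
both sides are the coefficient of `u ^ b * v ^ a` in `(g₀₀ u v + g₀₁ v + g₁₀ u + g₁₁) ^ m`. -/
lemma rowP_symm (m : ℕ) (g : Matrix (Fin 2) (Fin 2) ℂ) (hg : g 0 1 = g 1 0) (a b : ℕ) (ha : a ≤ m) (hb : b ≤ m) :
    (m.choose a : ℂ) * (rowP m g a).coeff b = (m.choose b : ℂ) * (rowP m g b).coeff a := by
  have gen : ∀ u v : ℂ, ∑ a ∈ Finset.range (m + 1), (∑ b ∈ Finset.range (m + 1),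
      (m.choose a : ℂ) * (rowP m g a).coeff b * u ^ b) * v ^ a =
      (v * (g 0 0 * u + g 0 1) + (g 1 0 * u + g 1 1)) ^ m := by
    intro u v
    rw [add_pow]
    refine Finset.sum_congr rfl fun a ha => ?_
    have ha' : a ≤ m := by simpa [Nat.lt_succ_iff] using ha
    have : ∑ b ∈ Finset.range (m + 1), (m.choose a : ℂ) * (rowP m g a).coeff b * u ^ b =
      (m.choose a : ℂ) * (rowP m g a).eval u := by
      rw [eval_eq_sum_range' (Nat.lt_succ_iff.mpr (rowP_natDegree m g a ha')), Finset.mul_sum]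
      exact Finset.sum_congr rfl fun b _ => by ring
    rw [this]
    simp only [rowP, eval_mul, eval_pow, eval_add, eval_C, eval_X, mul_pow]
    ring
  refine bivar_ext m (fun a b => (m.choose a : ℂ) * (rowP m g a).coeff b)
    (fun a b => (m.choose b : ℂ) * (rowP m g b).coeff a) (fun u v => ?_) a b ha hb
  rw [gen u v]
  have := gen v u
  rw [show (v * (g 0 0 * u + g 0 1) + (g 1 0 * u + g 1 1)) = (u * (g 0 0 * v + g 0 1) + (g 1 0 * v + g 1 1)) by
    rw [hg]; ring, ← this]
  simp only [Finset.sum_mul]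
  rw [Finset.sum_comm]
  exact Finset.sum_congr rfl fun b _ => Finset.sum_congr rfl fun a _ => by ring

/-- For real symmetric `g`, opposite entries of the symmetric power differ by a positive factor, so
their product is nonnegative. -/
lemma rowP_prod_nonneg (m : ℕ) (g : Matrix (Fin 2) (Fin 2) ℝ) (hg : g 0 1 = g 1 0) (a b : ℕ) (ha : a ≤ m) (hb : b ≤ m) :
    ∃ r : ℝ, 0 ≤ r ∧ (rowP m (g.map (fun x : ℝ => (x : ℂ))) a).coeff b * (rowP m (g.map (fun x : ℝ => (x : ℂ))) b).coeff a = r := by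
  have real : ∀ a b, ∃ r : ℝ, (rowP m (g.map (fun x : ℝ => (x : ℂ))) a).coeff b = r := by
    intro a b
    refine ⟨((C (g 0 0) * X + C (g 0 1)) ^ a * (C (g 1 0) * X + C (g 1 1)) ^ (m - a) : ℝ[X]).coeff b, ?_⟩
    have : rowP m (g.map (fun x : ℝ => (x : ℂ))) a = ((C (g 0 0) * X + C (g 0 1)) ^ a * (C (g 1 0) * X + C (g 1 1)) ^ (m - a) : ℝ[X]).map Complex.ofRealHom := by
      simp [rowP]
    rw [this, coeff_map]; rfl
  obtain ⟨r, hr⟩ := real a b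
  obtain ⟨s, hs⟩ := real b a
  have h := rowP_symm m (g.map (fun x : ℝ => (x : ℂ))) (by simp [hg]) a b ha hb
  rw [hr, hs] at h ⊢
  have h' : (m.choose a : ℝ) * r = m.choose b * s := by exact_mod_cast h
  have pa : (0:ℝ) < m.choose a := by exact_mod_cast Nat.choose_pos ha
  have pb : (0:ℝ) < m.choose b := by exact_mod_cast Nat.choose_pos hb
  refine ⟨r * s, ?_, by push_cast; rfl⟩
  have : r * s * m.choose b = m.choose a * r ^ 2 := by linear_combination -r * h'
  have h3 : 0 ≤ r * s * m.choose b := by rw [this]; positivity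
  exact nonneg_of_mul_nonneg_left h3 pb

/-- The generating function of `QQ m` in `k`. The sum is finite; `HasSum` is only a convenient way of
shifting the index `k` over `ℤ`. -/
lemma QQ_hasSum (y : ℝ) (z l μ : ℂ) (hz : z ≠ 0) (h1 : l + μ = 2 * (1 - y) + y * (z + z⁻¹)) (h2 : l * μ = 1) (m : ℕ) :
    HasSum (fun k : ℤ => (((QQ m k).eval y : ℝ) : ℂ) * z ^ k) (∑ i ∈ Finset.range (m + 1), l ^ i * μ ^ (m - i)) := by
  have hh : ∀ m, ∑ i ∈ Finset.range (m + 2 + 1), l ^ i * μ ^ (m + 2 - i) =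
      (l + μ) * ∑ i ∈ Finset.range (m + 1 + 1), l ^ i * μ ^ (m + 1 - i) -
      l * μ * ∑ i ∈ Finset.range (m + 1), l ^ i * μ ^ (m - i) := by
    have e : ∀ m, ∑ i ∈ Finset.range (m + 1 + 1), l ^ i * μ ^ (m + 1 - i) =
        μ * ∑ i ∈ Finset.range (m + 1), l ^ i * μ ^ (m - i) + l ^ (m + 1) := by
      intro m
      rw [Finset.sum_range_succ, Finset.mul_sum]
      congr 1
      · refine Finset.sum_congr rfl fun i hi => ?_
        rw [Finset.mem_range] at hi
        rw [show m + 1 - i = (m - i) + 1 by omega]; ring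
      · simp
    intro m
    rw [e (m+1), e m]; ring
  induction m using Nat.twoStepInduction with
  | zero =>
    have := hasSum_single (f := fun k : ℤ => (((QQ 0 k).eval y : ℝ) : ℂ) * z ^ k) 0 (by intro b hb; simp [QQ, hb])
    simpa [QQ] using this
  | one =>
    have := hasSum_sum_of_ne_finset_zero (f := fun k : ℤ => (((QQ 1 k).eval y : ℝ) : ℂ) * z ^ k) (s := {0, 1, -1})
      (L := .unconditional ℤ)
      (by intro b hb; simp at hb; simp [QQ, hb])
    convert this using 1
    have : (∑ i ∈ Finset.range (1 + 1), l ^ i * μ ^ (1 - i)) = l + μ := by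
      rw [Finset.sum_range_succ, Finset.sum_range_one]; simp; ring
    rw [this, h1]
    simp [QQ]; ring
  | more m i1 i2 =>
    rw [hh, h1, h2]
    have s1 : HasSum (fun k : ℤ => (((QQ (m+1) (k-1)).eval y : ℝ) : ℂ) * z ^ (k-1)) (∑ i ∈ Finset.range (m + 1 + 1), l ^ i * μ ^ (m + 1 - i)) :=
      ((Equiv.subRight (1:ℤ)).hasSum_iff (f := fun k : ℤ => (((QQ (m+1) k).eval y : ℝ) : ℂ) * z ^ k)).mpr i2
    have s2 : HasSum (fun k : ℤ => (((QQ (m+1) (k+1)).eval y : ℝ) : ℂ) * z ^ (k+1)) (∑ i ∈ Finset.range (m + 1 + 1), l ^ i * μ ^ (m + 1 - i)) :=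
      ((Equiv.addRight (1:ℤ)).hasSum_iff (f := fun k : ℤ => (((QQ (m+1) k).eval y : ℝ) : ℂ) * z ^ k)).mpr i2
    have := (((i2.mul_left (2 * (1 - (y:ℂ)))).add ((s1.mul_left (y * z)).add (s2.mul_left (y * z⁻¹))))).sub i1
    have E : (2 * (1 - (y:ℂ)) + y * (z + z⁻¹)) * ∑ i ∈ Finset.range (m + 1 + 1), l ^ i * μ ^ (m + 1 - i) -
      1 * ∑ i ∈ Finset.range (m + 1), l ^ i * μ ^ (m - i) = 2 * (1 - (y:ℂ)) * ∑ i ∈ Finset.range (m + 1 + 1), l ^ i * μ ^ (m + 1 - i) +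
        (↑y * z * ∑ i ∈ Finset.range (m + 1 + 1), l ^ i * μ ^ (m + 1 - i) +
          ↑y * z⁻¹ * ∑ i ∈ Finset.range (m + 1 + 1), l ^ i * μ ^ (m + 1 - i)) -
      ∑ i ∈ Finset.range (m + 1), l ^ i * μ ^ (m - i) := by ring
    rw [E]
    rw [show (fun k : ℤ => (((QQ (m+2) k).eval y : ℝ) : ℂ) * z ^ k) = _ from funext fun k => ?_]
    · exact this
    rw [QQ_rec, zpow_sub_one₀ hz, zpow_add_one₀ hz]
    simp
    field_simp

/-- With `R` the reflection `!![c, s; s, -c]`, `c ^ 2 = 1 - y`, `s ^ 2 = y`, the matrix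
`diag(z, 1) * R * diag(z⁻¹, 1) * R` has determinant `1` and trace `2 * (1 - y) + y * (z + z⁻¹)`, so
`∑ₖ QQ m k (y) * z ^ k` is the trace of its `m`-th symmetric power. Expanding that trace over the
diagonal factors leaves products of opposite entries of the symmetric power of `R` as coefficients. -/
lemma QQ_nonneg_aux (m : ℕ) (y : ℝ) (h0 : 0 < y) (h1 : y < 1) (k : ℤ) : 0 ≤ (QQ m k).eval y := by
  set c := √(1 - y)
  set s := √y
  have hc : c ^ 2 = 1 - y := Real.sq_sqrt (by linarith)
  have hs : s ^ 2 = y := Real.sq_sqrt h0.le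
  have hc0 : 0 < c := Real.sqrt_pos.mpr (by linarith)
  have hs0 : 0 < s := Real.sqrt_pos.mpr h0
  have hcC : (c:ℂ) ^ 2 = 1 - y := by exact_mod_cast hc
  have hsC : (s:ℂ) ^ 2 = y := by exact_mod_cast hs
  set R : Matrix (Fin 2) (Fin 2) ℝ := !![c, s; s, -c] with hR
  set RC := R.map (fun x : ℝ => (x : ℂ)) with hRC
  have hex := fun a b : Fin (m+1) => rowP_prod_nonneg m R (by simp [hR]) a b (by omega) (by omega)
  choose n hn0 hn using hex
  have tr : ∀ z : ℂ, z ≠ 0 → z ≠ 1 → HasSum (fun k : ℤ => (((QQ m k).eval y : ℝ) : ℂ) * z ^ k)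
      (∑ a : Fin (m+1), ∑ b : Fin (m+1), (n a b : ℂ) * z ^ ((a:ℤ) - b)) := by
    intro z hz hz1
    set g : Matrix (Fin 2) (Fin 2) ℂ := !![z, 0; 0, 1] * RC * (!![z⁻¹, 0; 0, 1] * RC) with hg
    have g00 : g 0 0 = c ^ 2 + z * s ^ 2 := by
      simp only [hg, Matrix.mul_apply, Fin.sum_univ_two]; simp [hRC, hR]; field_simp
    have g11 : g 1 1 = z⁻¹ * s ^ 2 + c ^ 2 := by
      simp only [hg, Matrix.mul_apply, Fin.sum_univ_two]; simp [hRC, hR]; ring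
    have g10 : g 1 0 = c * s * (z⁻¹ - 1) := by
      simp only [hg, Matrix.mul_apply, Fin.sum_univ_two]; simp [hRC, hR]; ring
    have g01 : g 0 1 = c * s * (1 - z) := by
      simp only [hg, Matrix.mul_apply, Fin.sum_univ_two]; simp [hRC, hR]; field_simp; ring
    have hne : g 1 0 ≠ 0 := by
      rw [g10]
      refine mul_ne_zero (mul_ne_zero (by exact_mod_cast hc0.ne') (by exact_mod_cast hs0.ne')) ?_
      rw [sub_ne_zero]; simpa using hz1
    obtain ⟨l, hl⟩ : ∃ l : ℂ, l * l = (g 0 0 + g 1 1) * l - 1 := by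
      obtain ⟨w, hw⟩ := IsAlgClosed.exists_pow_nat_eq ((g 0 0 + g 1 1)^2 - 4) (n := 2) (by norm_num)
      refine ⟨((g 0 0 + g 1 1) + w) / 2, by linear_combination hw / 4⟩
    set μ := g 0 0 + g 1 1 - l with hμ
    have hlm : l * μ = 1 := by rw [hμ]; linear_combination -hl
    have hdet : g 0 0 * g 1 1 - g 0 1 * g 1 0 = 1 := by
      have : g 0 0 * g 1 1 - g 0 1 * g 1 0 = ((c:ℂ) ^ 2 + (s:ℂ) ^ 2) ^ 2 := by
        rw [g00, g01, g10, g11]; field_simp; ring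
      rw [this, hcC, hsC]; ring
    have t1 := trace_SymP m g hne l μ (by rw [hμ]; ring) (by rw [hlm, hdet])
    have t2 := QQ_hasSum y z l μ hz (by rw [hμ, g00, g11, hsC, hcC]; ring) hlm m
    rw [← t1] at t2
    convert t2 using 1
    have dg : ∀ w : ℂ, SymP m !![w, 0; 0, 1] = Matrix.diagonal (fun i : Fin (m+1) => w ^ (i:ℕ)) := by
      intro w
      ext i j
      have e : rowP m !![w, 0; 0, 1] i = C (w ^ (i:ℕ)) * X ^ (i:ℕ) := by simp [rowP, mul_pow]
      simp only [SymP, Matrix.of_apply, Matrix.diagonal_apply, e, coeff_C_mul, coeff_X_pow]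
      by_cases h : i = j
      · simp [h]
      · rw [if_neg (fun h' => h (Fin.ext h'.symm)), if_neg h, mul_zero]
    rw [hg, SymP_mul, SymP_mul, SymP_mul, dg, dg, Matrix.trace]
    refine Finset.sum_congr rfl fun a _ => ?_
    rw [Matrix.diag_apply, Matrix.mul_apply]
    refine Finset.sum_congr rfl fun b _ => ?_
    rw [Matrix.diagonal_mul, Matrix.diagonal_mul, ← hn]
    simp only [SymP, Matrix.of_apply]
    rw [zpow_sub₀ hz]
    simp [hRC]
    field_simp
  by_cases hk : (m:ℤ) < |k|
  · rw [QQ_zero_of_lt m k hk]; simp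
  push Not at hk
  set P1 : ℂ[X] := ∑ j ∈ Finset.range (2 * m + 1), C (((QQ m ((j:ℤ) - m)).eval y : ℝ) : ℂ) * X ^ j
  set P2 : ℂ[X] := ∑ a : Fin (m+1), ∑ b : Fin (m+1), C (n a b : ℂ) * X ^ (m + a - b)
  have hP : P1 = P2 := by
    refine Polynomial.eq_of_infinite_eval_eq _ _ (Set.Infinite.mono (s := {0, 1}ᶜ) ?_ (Set.Finite.infinite_compl (by simp)))
    intro z hz
    simp at hz
    have h := tr z hz.1 hz.2
    have h' : HasSum (fun k : ℤ => (((QQ m k).eval y : ℝ) : ℂ) * z ^ k) _ := hasSum_sum_of_ne_finset_zero (s := (Finset.range (2*m+1)).map ⟨fun j : ℕ => (j:ℤ) - m, fun a b hab => by simpa using hab⟩) (by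
      intro b hb
      rw [QQ_zero_of_lt m b]; simp
      by_contra hcon
      apply hb
      simp only [Finset.mem_map, Finset.mem_range]
      refine ⟨(b + m).toNat, by grind, ?_⟩
      change (((b+m).toNat : ℤ)) - m = b
      grind)
    have e := h.unique h'
    rw [Finset.sum_map] at e
    have e2 := congrArg (fun w => z ^ m * w) e
    simp only [Function.Embedding.coeFn_mk, Finset.mul_sum] at e2
    show P1.eval z = P2.eval z
    simp only [P1, P2, eval_finsetSum, eval_mul, eval_C, eval_pow, eval_X]
    convert e2.symm using 1
    · refine Finset.sum_congr rfl fun j _ => ?_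
      change _ = z ^ m * ((((QQ m ((j:ℤ) - m)).eval y : ℝ) : ℂ) * z ^ ((j:ℤ) - m))
      rw [zpow_sub₀ hz.1, zpow_natCast, zpow_natCast]; have := pow_ne_zero m hz.1; field_simp
    · refine Finset.sum_congr rfl fun a _ => Finset.sum_congr rfl fun b _ => ?_
      have : z ^ (m + (a:ℕ) - b) = z ^ m * z ^ ((a:ℤ) - b) := by
        rw [← zpow_natCast, ← zpow_natCast, ← zpow_add₀ hz.1]
        congr 1; have := b.2; push_cast [show (b:ℕ) ≤ m + a by omega]; ring
      rw [this]; ring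
  have hco := congrArg (fun p => (coeff p (k + m).toNat)) hP
  simp only [P1, P2, finsetSum_coeff, coeff_C_mul, coeff_X_pow, mul_ite, mul_one, mul_zero] at hco
  rw [Finset.sum_ite_eq, if_pos (by grind), show (((k+m).toNat : ℤ)) - m = k by grind] at hco
  have : (QQ m k).eval y = ∑ a : Fin (m+1), ∑ b : Fin (m+1), (if (k+m).toNat = m + a - b then n a b else 0) := by
    apply Complex.ofReal_injective
    rw [hco]; push_cast
    exact Finset.sum_congr rfl fun a _ => Finset.sum_congr rfl fun b _ => by split_ifs <;> simp
  rw [this]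
  exact Finset.sum_nonneg fun a _ => Finset.sum_nonneg fun b _ => by split_ifs <;> simp [hn0]

lemma QQ_nonneg (m : ℕ) (y : ℝ) (h : y ∈ Set.Icc (0:ℝ) 1) (k : ℤ) : 0 ≤ (QQ m k).eval y := by
  have : closure (Set.Ioo (0:ℝ) 1) ⊆ {y | 0 ≤ (QQ m k).eval y} :=
    closure_minimal (fun y hy => QQ_nonneg_aux m y hy.1 hy.2 k) (isClosed_le continuous_const (QQ m k).continuous)
  rw [closure_Ioo (by norm_num)] at this
  exact this h

end SymPow

end

/-! ### Weight systems -/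

section

section DB
open Polynomial

/-- A de Branges weight system of order `m`: weights `T k` in the variable `y = exp (-t)`, together with
their scaled derivatives `Q k`, subject to the two linear relations and the sign conditions that make
the energy `EE` monotone. -/
structure DBSystem (m : ℕ) (Q T : ℕ → ℝ[X]) : Prop where
  diff : ∀ k, T k - T (k + 1) = Q k + Q (k + 1)
  ode : ∀ k, X * derivative (T k) = (k : ℝ[X]) * Q k
  Q_nonneg : ∀ k, ∀ y ∈ Set.Icc (0:ℝ) 1, 0 ≤ (Q k).eval y
  T_nonneg : ∀ k, ∀ y ∈ Set.Icc (0:ℝ) 1, 0 ≤ (T k).eval y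
  Q_zero : ∀ k, m < k → Q k = 0
  T_zero : ∀ k, m < k → T k = 0

/-- The de Branges weights: `TT m k = ∑_{j ≥ k} (QQ m j + QQ m (j + 1))`. The sum stops at `j = m`
because `QQ m j = 0` beyond. -/
noncomputable def TT (m k : ℕ) : ℝ[X] :=
  ∑ j ∈ Finset.range (m + 1 - k), (QQ m ((k + j : ℕ) : ℤ) + QQ m ((k + j + 1 : ℕ) : ℤ))

lemma TT_system (m : ℕ) : DBSystem m (fun k => QQ m (k : ℤ)) (TT m) where
  diff k := by
    unfold TT
    by_cases hk : k ≤ m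
    · rw [show m + 1 - k = (m + 1 - (k + 1)) + 1 by omega, Finset.sum_range_succ']
      have : ∀ j, k + 1 + j = k + (j + 1) := by intro j; ring
      simp only [this]; simp
    · have h1 : m + 1 - k = 0 := by omega
      have h2 : m + 1 - (k + 1) = 0 := by omega
      rw [h1, h2, QQ_zero_of_lt m _ (by rw [Nat.abs_cast]; omega), QQ_zero_of_lt m _ (by rw [Nat.abs_cast]; omega)]; simp
  ode k := by
    unfold TT
    simp only [derivative_sum, derivative_add, Finset.mul_sum]
    have h : ∀ j ∈ Finset.range (m + 1 - k), X * (derivative (QQ m ((k + j : ℕ) : ℤ)) + derivative (QQ m ((k + j + 1 : ℕ) : ℤ))) =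
        ((k + j : ℕ) : ℝ[X]) * QQ m ((k + j : ℕ) : ℤ) - ((k + (j + 1) : ℕ) : ℝ[X]) * QQ m ((k + (j + 1) : ℕ) : ℤ) := by
      intro j _
      have := QQ_ode m ((k + j : ℕ) : ℤ)
      rw [show ((k + j + 1 : ℕ) : ℤ) = ((k + j : ℕ) : ℤ) + 1 by push_cast; ring, ← this]
      push_cast
      ring_nf
    rw [Finset.sum_congr rfl h, Finset.sum_range_sub' (fun j => ((k + j : ℕ) : ℝ[X]) * QQ m ((k + j : ℕ) : ℤ))]
    rw [QQ_zero_of_lt m ((k + (m + 1 - k) : ℕ) : ℤ) (by rw [Nat.abs_cast]; omega)]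
    simp
  Q_nonneg k y hy := QQ_nonneg m y hy k
  T_nonneg k y hy := by
    unfold TT
    rw [eval_finsetSum]
    exact Finset.sum_nonneg fun j _ => by
      rw [eval_add]; exact add_nonneg (QQ_nonneg m y hy _) (QQ_nonneg m y hy _)
  Q_zero k hk := QQ_zero_of_lt m _ (by rw [Nat.abs_cast]; omega)
  T_zero k hk := by unfold TT; rw [show m + 1 - k = 0 by omega]; simp

/-- At the end of the evolution the weights are those of the Milin functional of order `m`. -/
lemma TT_one (m k : ℕ) : (TT m k).eval 1 = ((m + 1 - k : ℕ) : ℝ) := by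
  unfold TT
  rw [eval_finsetSum]
  rw [Finset.sum_congr rfl (g := fun _ => (1:ℝ))]
  · simp
  · intro j hj
    rw [Finset.mem_range] at hj
    rw [eval_add, QQ_eval_one, QQ_eval_one]
    simp only [Nat.abs_cast]
    by_cases h : (2:ℤ) ∣ ((k + j : ℕ) : ℤ) - m
    · rw [if_pos ⟨by omega, h⟩, if_neg (by omega)]; simp
    · rw [if_neg (by omega), if_pos ⟨by omega, by omega⟩]; simp

/-- The systems of order `0, …, m` added up. Unlike the system of order `m` alone, all its `Q k` with
`k ≤ m` are positive for `y > 0` (`sum_system_Q_ge`), which is what the equality case needs. -/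
lemma sum_system (m : ℕ) : DBSystem m (fun k => ∑ i ∈ Finset.range (m + 1), QQ i (k : ℤ))
    (fun k => ∑ i ∈ Finset.range (m + 1), TT i k) where
  diff k := by
    simp only [← Finset.sum_sub_distrib, ← Finset.sum_add_distrib]
    exact Finset.sum_congr rfl fun i _ => (TT_system i).diff k
  ode k := by
    simp only [derivative_sum, Finset.mul_sum]
    exact Finset.sum_congr rfl fun i _ => (TT_system i).ode k
  Q_nonneg k y hy := by
    rw [eval_finsetSum]; exact Finset.sum_nonneg fun i _ => (TT_system i).Q_nonneg k y hy
  T_nonneg k y hy := by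
    rw [eval_finsetSum]; exact Finset.sum_nonneg fun i _ => (TT_system i).T_nonneg k y hy
  Q_zero k hk := Finset.sum_eq_zero fun i hi => (TT_system i).Q_zero k (by
    rw [Finset.mem_range] at hi; omega)
  T_zero k hk := Finset.sum_eq_zero fun i hi => (TT_system i).T_zero k (by
    rw [Finset.mem_range] at hi; omega)

lemma sum_system_Q_ge (m k : ℕ) (hk : k ≤ m) (y : ℝ) (hy : y ∈ Set.Icc (0:ℝ) 1) :
    y ^ k ≤ (∑ i ∈ Finset.range (m + 1), QQ i (k : ℤ)).eval y := by
  rw [eval_finsetSum]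
  have := Finset.single_le_sum (f := fun i => (QQ i (k:ℤ)).eval y) (s := Finset.range (m+1))
    (fun i _ => QQ_nonneg i y hy k) (Finset.mem_range.mpr (by omega : k < m + 1))
  simpa [QQ_top] using this

end DB

end

/-! ### First-order expansions in the step size -/

section

section Ap
variable {ι : Type*} {S : Set ι}

/-- `u i ε = u0 i + ε * u1 i + O(ε ^ 2)` for `0 ≤ ε ≤ 1 / 2`, uniformly over `i ∈ S`, with `u0` and
`u1` bounded on `S`. -/
def Ap (S : Set ι) (u : ι → ℝ → ℂ) (u0 u1 : ι → ℂ) : Prop :=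
  ∃ C : ℝ, 0 ≤ C ∧ ∀ i ∈ S, ‖u0 i‖ ≤ C ∧ ‖u1 i‖ ≤ C ∧
    ∀ ε : ℝ, 0 ≤ ε → ε ≤ 1 / 2 → ‖u i ε - u0 i - ε * u1 i‖ ≤ C * ε ^ 2

lemma Ap.congr {u : ι → ℝ → ℂ} {u0 u1 v0 v1 : ι → ℂ} (h : Ap S u u0 u1) (h0 : ∀ i ∈ S, u0 i = v0 i)
    (h1 : ∀ i ∈ S, u1 i = v1 i) : Ap S u v0 v1 := by
  obtain ⟨C, hC, h⟩ := h
  exact ⟨C, hC, fun i hi => by rw [← h0 i hi, ← h1 i hi]; exact h i hi⟩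

lemma Ap.congrF {u v : ι → ℝ → ℂ} {u0 u1 : ι → ℂ} (h : Ap S u u0 u1) (h0 : ∀ i, ∀ ε, u i ε = v i ε) : Ap S v u0 u1 := by
  have : u = v := by ext i ε; exact h0 i ε
  rwa [← this]

lemma Ap.const {u : ι → ℂ} (B : ℝ) (h : ∀ i ∈ S, ‖u i‖ ≤ B) : Ap S (fun i _ => u i) u (fun _ => 0) :=
  ⟨max B 0, le_max_right _ _, fun i hi => ⟨(h i hi).trans (le_max_left _ _), by simp, fun ε _ _ => by
    simp; positivity⟩⟩

lemma Ap.one_sub : Ap S (fun _ ε => ((1 - ε : ℝ) : ℂ)) (fun _ => 1) (fun _ => -1) :=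
  ⟨1, zero_le_one, fun i hi => ⟨by simp, by simp, fun ε _ _ => by
    have : ((1 - ε : ℝ) : ℂ) - 1 - ε * (-1) = 0 := by push_cast; ring
    rw [this]; simp; positivity⟩⟩

lemma Ap.one_sub_inv : Ap S (fun _ ε => (((1 - ε)⁻¹ : ℝ) : ℂ)) (fun _ => 1) (fun _ => 1) :=
  ⟨2, zero_le_two, fun i hi => ⟨by simp, by simp, fun ε h0 h1 => by
    have h2 : (0:ℝ) < 1 - ε := by linarith
    have : (((1 - ε)⁻¹ : ℝ) : ℂ) - 1 - ε * 1 = ((ε ^ 2 * (1 - ε)⁻¹ : ℝ) : ℂ) := by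
      have : (1 - ε)⁻¹ - 1 - ε * 1 = ε ^ 2 * (1 - ε)⁻¹ := by field_simp; ring
      exact_mod_cast this
    rw [this, Complex.norm_real, Real.norm_of_nonneg (by positivity), mul_comm]
    refine mul_le_mul_of_nonneg_right ?_ (by positivity)
    rw [inv_le_comm₀ h2 (by norm_num)]; linarith⟩⟩

lemma Ap.add {u v : ι → ℝ → ℂ} {u0 u1 v0 v1 : ι → ℂ} (hu : Ap S u u0 u1) (hv : Ap S v v0 v1) :
    Ap S (fun i ε => u i ε + v i ε) (fun i => u0 i + v0 i) (fun i => u1 i + v1 i) := by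
  obtain ⟨C, hC, h⟩ := hu
  obtain ⟨D, hD, k⟩ := hv
  refine ⟨C + D, by positivity, fun i hi => ⟨(norm_add_le _ _).trans (add_le_add (h i hi).1 (k i hi).1),
    (norm_add_le _ _).trans (add_le_add (h i hi).2.1 (k i hi).2.1), fun ε h0 h1 => ?_⟩⟩
  have := (norm_add_le _ _).trans (add_le_add ((h i hi).2.2 ε h0 h1) ((k i hi).2.2 ε h0 h1))
  rw [add_mul]
  refine le_trans (le_of_eq ?_) this
  congr 1; ring

lemma Ap.mul {u v : ι → ℝ → ℂ} {u0 u1 v0 v1 : ι → ℂ} (hu : Ap S u u0 u1) (hv : Ap S v v0 v1) :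
    Ap S (fun i ε => u i ε * v i ε) (fun i => u0 i * v0 i) (fun i => u0 i * v1 i + u1 i * v0 i) := by
  obtain ⟨C, hC, h⟩ := hu
  obtain ⟨D, hD, k⟩ := hv
  refine ⟨6 * (C * D), by positivity, fun i hi => ?_⟩
  obtain ⟨a0, a1, a2⟩ := h i hi
  obtain ⟨b0, b1, b2⟩ := k i hi
  have hCD : 0 ≤ C * D := by positivity
  refine ⟨?_, ?_, fun ε h0 h1 => ?_⟩
  · rw [norm_mul]; have := mul_le_mul a0 b0 (norm_nonneg _) hC; linarith
  · refine (norm_add_le _ _).trans ?_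
    rw [norm_mul, norm_mul]
    have := mul_le_mul a0 b1 (norm_nonneg _) hC
    have := mul_le_mul a1 b0 (norm_nonneg _) hC
    linarith
  · have e1 := a2 ε h0 h1
    have e2 := b2 ε h0 h1
    set du := u i ε - u0 i - ε * u1 i with hdu
    set dv := v i ε - v0 i - ε * v1 i with hdv
    have id : u i ε * v i ε - u0 i * v0 i - ε * (u0 i * v1 i + u1 i * v0 i) =
        ε ^ 2 * (u1 i * v1 i) + (u0 i + ε * u1 i) * dv + du * (v0 i + ε * v1 i) + du * dv := by
      rw [hdu, hdv]; ring
    have nε : ‖(ε:ℂ)‖ = ε := by rw [Complex.norm_real, Real.norm_of_nonneg h0]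
    have f1 : ‖u0 i + ε * u1 i‖ ≤ 3/2 * C := by
      refine (norm_add_le _ _).trans ?_
      rw [norm_mul, nε]; nlinarith [norm_nonneg (u1 i)]
    have f2 : ‖v0 i + ε * v1 i‖ ≤ 3/2 * D := by
      refine (norm_add_le _ _).trans ?_
      rw [norm_mul, nε]; nlinarith [norm_nonneg (v1 i)]
    have g1 : ‖(ε:ℂ) ^ 2 * (u1 i * v1 i)‖ ≤ C * D * ε ^ 2 := by
      rw [norm_mul, norm_pow, nε, norm_mul, mul_comm]
      gcongr
    have g2 : ‖(u0 i + ε * u1 i) * dv‖ ≤ 3/2 * C * (D * ε ^ 2) := by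
      rw [norm_mul]; gcongr
    have g3 : ‖du * (v0 i + ε * v1 i)‖ ≤ C * ε ^ 2 * (3/2 * D) := by
      rw [norm_mul]; gcongr
    have g4 : ‖du * dv‖ ≤ C * ε ^ 2 * (D * ε ^ 2) := by
      rw [norm_mul]; gcongr
    have g5 : C * ε ^ 2 * (D * ε ^ 2) ≤ C * D * ε ^ 2 := by
      have : ε ^ 2 ≤ 1 := by nlinarith
      have : C * D * ε ^ 2 * ε ^ 2 ≤ C * D * ε ^ 2 * 1 := by gcongr
      nlinarith
    rw [id]
    refine (norm_add_le _ _).trans ?_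
    have := norm_add₃_le (a := (ε:ℂ) ^ 2 * (u1 i * v1 i)) (b := (u0 i + ε * u1 i) * dv) (c := du * (v0 i + ε * v1 i))
    have : 0 ≤ C * D * ε ^ 2 := by positivity
    nlinarith

lemma Ap.const_mul {u : ι → ℝ → ℂ} {u0 u1 : ι → ℂ} (a : ℂ) (hu : Ap S u u0 u1) :
    Ap S (fun i ε => a * u i ε) (fun i => a * u0 i) (fun i => a * u1 i) :=
  ((Ap.const (u := fun _ => a) ‖a‖ (fun _ _ => le_rfl)).mul hu).congr (fun _ _ => rfl) (fun _ _ => by ring)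

lemma Ap.sub {u v : ι → ℝ → ℂ} {u0 u1 v0 v1 : ι → ℂ} (hu : Ap S u u0 u1) (hv : Ap S v v0 v1) :
    Ap S (fun i ε => u i ε - v i ε) (fun i => u0 i - v0 i) (fun i => u1 i - v1 i) :=
  ((hu.add (hv.const_mul (-1))).congr (fun _ _ => by ring) (fun _ _ => by ring)).congrF (fun _ _ => by ring)

lemma Ap.sum {κ : Type*} (s : Finset κ) {u : κ → ι → ℝ → ℂ} {u0 u1 : κ → ι → ℂ} (h : ∀ k ∈ s, Ap S (u k) (u0 k) (u1 k)) :
    Ap S (fun i ε => ∑ k ∈ s, u k i ε) (fun i => ∑ k ∈ s, u0 k i) (fun i => ∑ k ∈ s, u1 k i) := by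
  classical
  induction s using Finset.induction_on with
  | empty => simp only [Finset.sum_empty]; exact Ap.const 0 (by simp)
  | insert a s ha ih =>
    simp only [Finset.sum_insert ha]
    exact (h a (by simp)).add (ih fun k hk => h k (by simp [hk]))

lemma Ap.pow {u : ι → ℝ → ℂ} {u0 u1 : ι → ℂ} (hu : Ap S u u0 u1) (n : ℕ) :
    Ap S (fun i ε => u i ε ^ n) (fun i => u0 i ^ n) (fun i => n * u0 i ^ (n - 1) * u1 i) := by
  induction n with
  | zero => simp only [pow_zero]; exact (Ap.const (u := fun _ => 1) 1 (by simp)).congr (fun _ _ => rfl) (by simp)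
  | succ n ih =>
    refine ((ih.mul hu).congr (fun i _ => (pow_succ _ _).symm) (fun i _ => ?_)).congrF (fun _ _ => (pow_succ _ _).symm)
    rcases n with _ | n
    · simp
    · simp only [Nat.add_sub_cancel]; push_cast; ring

lemma Ap.conj {u : ι → ℝ → ℂ} {u0 u1 : ι → ℂ} (hu : Ap S u u0 u1) :
    Ap S (fun i ε => (starRingEnd ℂ) (u i ε)) (fun i => (starRingEnd ℂ) (u0 i)) (fun i => (starRingEnd ℂ) (u1 i)) := by
  obtain ⟨C, hC, h⟩ := hu
  refine ⟨C, hC, fun i hi => ?_⟩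
  obtain ⟨a0, a1, a2⟩ := h i hi
  refine ⟨by simpa using a0, by simpa using a1, fun ε h0 h1 => ?_⟩
  have := a2 ε h0 h1
  rw [← RCLike.norm_conj] at this
  simpa using this

/-- Expansion of `p ((1 - ε) * y)`, uniform for `y ∈ [0, 1]`. -/
lemma Ap.poly (p : Polynomial ℝ) (y : ι → ℝ) (hy : ∀ i ∈ S, y i ∈ Set.Icc (0:ℝ) 1) :
    Ap S (fun i ε => ((p.eval ((1 - ε) * y i) : ℝ) : ℂ)) (fun i => ((p.eval (y i) : ℝ) : ℂ))
      (fun i => ((-((Polynomial.X * p.derivative).eval (y i)) : ℝ) : ℂ)) := by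
  have base : Ap S (fun i ε => (((1 - ε) * y i : ℝ) : ℂ)) (fun i => (y i : ℂ)) (fun i => -(y i : ℂ)) := by
    refine ((Ap.one_sub.mul (Ap.const (u := fun i => (y i : ℂ)) 1 (fun i hi => ?_))).congr (fun _ _ => by ring) (fun _ _ => by ring)).congrF (fun _ _ => by push_cast; ring)
    rw [Complex.norm_real, Real.norm_of_nonneg (hy i hi).1]; exact (hy i hi).2
  induction p using Polynomial.induction_on' with
  | add p q hp hq =>
    refine ((hp.add hq).congr (fun i _ => ?_) (fun i _ => ?_)).congrF (fun i ε => ?_)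
    · simp
    · simp; ring
    · simp
  | monomial n a =>
    refine (((base.pow n).const_mul (a:ℂ)).congr (fun i _ => ?_) (fun i _ => ?_)).congrF (fun i ε => ?_)
    · simp
    · rcases n with _ | n
      · simp
      · simp [Polynomial.derivative_monomial]; ring
    · simp

end Ap

/-- `AA β k i` is the coefficient of `z ^ i` in `(z * (β - z) / (1 - β * z)) ^ k`. The recursion is
`φ ^ (k + 1) * (1 - β * z) = φ ^ k * z * (β - z)`. -/
noncomputable def AA (β : ℝ) : ℕ → ℕ → ℝ
  | 0, i => if i = 0 then 1 else 0
  | _ + 1, 0 => 0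
  | k + 1, 1 => β * AA β k 0
  | k + 1, i + 2 => β * AA β (k + 1) (i + 1) + β * AA β k (i + 1) - AA β k i

lemma AA_Ap {ι : Type*} {S : Set ι} (k i : ℕ) : Ap S (fun _ ε => ((AA (1 - ε) k i : ℝ) : ℂ)) (fun _ => if i = k then 1 else 0)
    (fun _ => -k * ((if i = k then 1 else 0) + 2 * (if k < i then 1 else 0))) := by
  induction k generalizing i with
  | zero =>
    simp only [AA]
    refine ((Ap.const (S := S) (u := fun _ => ((if i = 0 then 1 else 0 : ℝ) : ℂ)) 1 ?_)).congr ?_ ?_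
    · intro _ _; split_ifs <;> simp
    · intro _ _; split_ifs <;> simp
    · intro _ _; simp
  | succ k ih =>
    induction i using Nat.twoStepInduction with
    | zero => simpa [AA] using Ap.const (S := S) (u := fun _ => 0) 1 (by simp)
    | one =>
      refine ((Ap.one_sub.mul (ih 0)).congr (fun _ _ => ?_) (fun _ _ => ?_)).congrF (fun _ _ => by simp [AA])
      · rcases k with _ | k <;> simp
      · rcases k with _ | k <;> simp
    | more i _ h2 =>
      refine ((((Ap.one_sub.mul h2).add (Ap.one_sub.mul (ih (i+1)))).sub (ih i)).congr (fun _ _ => ?_) (fun _ _ => ?_)).congrF (fun _ _ => by simp [AA])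
      · grind
      · push_cast
        rcases lt_trichotomy i k with h | rfl | h
        · by_cases h' : i + 1 = k
          · subst h'; simp; ring
          · simp [show i ≠ k by omega, show i + 1 ≠ k by omega, show ¬ (k < i) by omega, show ¬ (k < i+1) by omega, show ¬ (k+1 < i+2) by omega]
        · simp; ring
        · by_cases h' : i = k + 1
          · subst h'; simp [show k + 1 + 1 ≠ k by omega]
          · simp [show i ≠ k by omega, show i + 1 ≠ k by omega, show i ≠ k + 1 by omega, show  (k < i) by omega, show (k < i+1) by omega, show (k+1 < i+2) by omega]

end

/-! ### The step map on logarithmic coefficients and the energy identity -/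

section

/-- Effect of one Koebe step on coefficients: if `c` are the coefficients of `F`, then
`stepMap β κ c i` is, for `i ≥ 1`, the `i`-th coefficient of
`F (φ w) + log (φ w / w)`, where `φ w = w * (β - κ * w) / (1 - β * κ * w)`; see `jet_step`. -/
noncomputable def stepMap (β : ℝ) (κ : ℂ) (c : ℕ → ℂ) (i : ℕ) : ℂ :=
  ∑ k ∈ Finset.range (i + 1), c k * κ ^ (i - k) * (AA β k i : ℂ) + κ ^ i * (((β ^ i - β⁻¹ ^ i) / i : ℝ) : ℂ)

lemma stepMap_rot (β : ℝ) (κ : ℂ) (hκ : κ ≠ 0) (c : ℕ → ℂ) (i : ℕ) :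
    stepMap β κ c i = κ ^ i * stepMap β 1 (fun k => κ⁻¹ ^ k * c k) i := by
  unfold stepMap
  rw [mul_add, Finset.mul_sum]
  congr 1
  · refine Finset.sum_congr rfl fun k hk => ?_
    rw [Finset.mem_range] at hk
    have : κ ^ i = κ ^ (i - k) * κ ^ k := by rw [← pow_add]; congr 1; omega
    simp only [this, inv_pow, one_pow]
    have := pow_ne_zero k hκ
    field_simp
  · simp

/-- The partial sums of the sequence `j * c j`. -/
noncomputable def bb (c : ℕ → ℂ) (k : ℕ) : ℂ := ∑ j ∈ Finset.range (k + 1), (j : ℂ) * c j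

lemma bb_zero (c : ℕ → ℂ) : bb c 0 = 0 := by simp [bb]

lemma bb_succ (c : ℕ → ℂ) (k : ℕ) : bb c (k + 1) = bb c k + (k + 1) * c (k + 1) := by
  rw [bb, Finset.sum_range_succ, bb]; push_cast; ring

/-- The parameters `(c, y)` with `‖c k‖ ≤ B` for `k ≤ m` and `0 ≤ y ≤ 1`, over which the
expansions in `ε` are uniform. -/
def parS (m : ℕ) (B : ℝ) : Set ((ℕ → ℂ) × ℝ) := {p | (∀ k ≤ m, ‖p.1 k‖ ≤ B) ∧ p.2 ∈ Set.Icc (0:ℝ) 1}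

/-- The infinitesimal form of a step with `κ = 1`: a discrete version of the Löwner equation for
logarithmic coefficients. -/
lemma stepMap_Ap (m : ℕ) (B : ℝ) (i : ℕ) (hi : i + 1 ≤ m) :
    Ap (parS m B) (fun p ε => stepMap (1 - ε) 1 p.1 (i + 1)) (fun p => p.1 (i + 1))
      (fun p => -(bb p.1 (i + 1) + bb p.1 i + 2)) := by
  have h1 : Ap (parS m B) (fun p ε => ∑ k ∈ Finset.range (i + 1 + 1), p.1 k * ((AA (1 - ε) k (i + 1) : ℝ) : ℂ)) _ _ :=
    Ap.sum (Finset.range (i + 1 + 1)) (fun k hk =>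
      (Ap.const (u := fun p : (ℕ → ℂ) × ℝ => p.1 k) B (fun p hp => hp.1 k (by rw [Finset.mem_range] at hk; omega))).mul (AA_Ap k (i + 1)))
  have h2 : Ap (parS m B) (fun p ε => (((i + 1 : ℝ)⁻¹ : ℝ) : ℂ) * (((1 - ε : ℝ) : ℂ) ^ (i + 1) - (((1 - ε)⁻¹ : ℝ) : ℂ) ^ (i + 1))) _ _ :=
    ((Ap.one_sub.pow (i + 1)).sub (Ap.one_sub_inv.pow (i + 1))).const_mul _
  refine ((h1.add h2).congr (fun p _ => ?_) (fun p _ => ?_)).congrF (fun p ε => ?_)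
  · simp
  · have hb : bb p.1 i = ∑ k ∈ Finset.range (i + 1), (k : ℂ) * p.1 k := rfl
    rw [bb_succ, hb, Finset.sum_range_succ]
    have : ∀ k ∈ Finset.range (i + 1), (p.1 k * (-(k:ℂ) * ((if i + 1 = k then 1 else 0) + 2 * (if k < i + 1 then 1 else 0))) + 0 * (if i + 1 = k then (1:ℂ) else 0)) = -2 * (k * p.1 k) := by
      intro k hk
      rw [Finset.mem_range] at hk
      rw [if_neg (by omega), if_pos hk]; ring
    rw [Finset.sum_congr rfl this, ← Finset.mul_sum]
    have hne : ((i:ℂ) + 1) ≠ 0 := by exact_mod_cast Nat.succ_ne_zero i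
    simp
    field_simp
    ring
  · unfold stepMap
    simp only [one_pow, mul_one, one_mul]
    congr 1
    push_cast
    field_simp

/-- The de Branges energy of the coefficient sequence `c` at time `y`. The constant coefficient `c 0`
does not enter. At `y = 1` and with the weights `TT m` it is the Milin functional. -/
noncomputable def EE (m : ℕ) (T : ℕ → Polynomial ℝ) (y : ℝ) (c : ℕ → ℂ) : ℝ :=
  ∑ k ∈ Finset.range m, (T (k + 1)).eval y * ((k + 1) * ‖c (k + 1)‖ ^ 2 - 4 / (k + 1))

/-- The dissipation: the rate at which the energy decreases along steps with `κ = 1`. -/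
noncomputable def DD (m : ℕ) (Q : ℕ → Polynomial ℝ) (y : ℝ) (c : ℕ → ℂ) : ℝ :=
  ∑ k ∈ Finset.range m, (Q (k + 1)).eval y * ‖bb c (k + 1) + bb c k + 2‖ ^ 2

/-- The computation of de Branges: summation by parts with the relations of a `DBSystem` turns the
first-order variation of the energy into minus a sum of weighted squares. -/
lemma DB_identity {m : ℕ} {Q T : ℕ → Polynomial ℝ} (h : DBSystem m Q T) (y : ℝ) (c : ℕ → ℂ) :
    ∑ k ∈ Finset.range m, ((T (k + 1)).eval y * ((k + 1) * (-2 * ((starRingEnd ℂ) (c (k+1)) * (bb c (k + 1) + bb c k + 2)).re)) +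
      ((Polynomial.X * (T (k + 1)).derivative).eval y) * ((k + 1) * ‖c (k + 1)‖ ^ 2 - 4 / (k + 1))) = - DD m Q y c := by
  set B : ℕ → ℝ := fun k => ‖bb c k‖ ^ 2 + 2 * (bb c k).re with hB
  have abel : ∀ n, ∑ k ∈ Finset.range n, (T (k + 1)).eval y * (B (k + 1) - B k) =
      ∑ k ∈ Finset.range n, (Q (k + 1)).eval y * (B (k + 1) + B k) + ((T (n + 1)).eval y + (Q (n + 1)).eval y) * B n := by
    intro n
    induction n with
    | zero => simp [hB, bb_zero]
    | succ n ih =>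
      rw [Finset.sum_range_succ, Finset.sum_range_succ, ih]
      have := congrArg (Polynomial.eval y) (h.diff (n + 1))
      simp only [Polynomial.eval_sub, Polynomial.eval_add] at this
      linear_combination (B (n + 1)) * this
  have A := abel m
  rw [h.Q_zero (m + 1) (by omega), h.T_zero (m + 1) (by omega)] at A
  simp only [Polynomial.eval_zero, add_zero, zero_mul] at A
  have e1 : ∀ k : ℕ, ((k:ℝ) + 1) * (-2 * ((starRingEnd ℂ) (c (k+1)) * (bb c (k + 1) + bb c k + 2)).re) = -2 * (B (k + 1) - B k) := by
    intro k
    simp only [hB, bb_succ]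
    rw [← Complex.normSq_eq_norm_sq, ← Complex.normSq_eq_norm_sq, Complex.normSq_apply, Complex.normSq_apply]
    simp
    ring
  have e2 : ∀ k : ℕ, ((Polynomial.X * (T (k + 1)).derivative).eval y) * ((k + 1) * ‖c (k + 1)‖ ^ 2 - 4 / (k + 1)) =
      (Q (k + 1)).eval y * (‖((k:ℂ) + 1) * c (k + 1)‖ ^ 2 - 4) := by
    intro k
    rw [h.ode, norm_mul, show ‖(k:ℂ) + 1‖ = k + 1 by
      rw [show (k:ℂ) + 1 = ((k + 1 : ℝ) : ℂ) by push_cast; rfl, Complex.norm_real, Real.norm_of_nonneg (by positivity)]]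
    simp
    field_simp
  have e3 : ∀ k : ℕ, ‖((k:ℂ) + 1) * c (k + 1)‖ ^ 2 - 4 - 2 * (B (k + 1) + B k) = - ‖bb c (k + 1) + bb c k + 2‖ ^ 2 := by
    intro k
    have : ((k:ℂ) + 1) * c (k + 1) = bb c (k + 1) - bb c k := by rw [bb_succ]; ring
    rw [this]
    simp only [hB, ← Complex.normSq_eq_norm_sq, Complex.normSq_apply]
    simp
    ring
  calc _ = -2 * (∑ k ∈ Finset.range m, (T (k + 1)).eval y * (B (k + 1) - B k)) + ∑ k ∈ Finset.range m, (Q (k + 1)).eval y * (‖((k:ℂ) + 1) * c (k + 1)‖ ^ 2 - 4) := by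
        rw [Finset.mul_sum, ← Finset.sum_add_distrib]
        exact Finset.sum_congr rfl fun k _ => by rw [e1, e2]; ring
    _ = ∑ k ∈ Finset.range m, (Q (k + 1)).eval y * (‖((k:ℂ) + 1) * c (k + 1)‖ ^ 2 - 4 - 2 * (B (k + 1) + B k)) := by
        rw [A, Finset.mul_sum, ← Finset.sum_add_distrib]
        exact Finset.sum_congr rfl fun k _ => by ring
    _ = _ := by
        rw [DD, ← Finset.sum_neg_distrib]
        exact Finset.sum_congr rfl fun k _ => by rw [e3]; ring

/-- One step changes the energy by `-ε * DD + O(ε ^ 2)`; the time `y` advances by the factor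
`(1 - ε)⁻¹`. -/
lemma EE_Ap {m : ℕ} {Q T : ℕ → Polynomial ℝ} (h : DBSystem m Q T) (B : ℝ) :
    Ap (parS m B) (fun p ε => ((EE m T p.2 (fun i => stepMap (1 - ε) 1 p.1 i) - EE m T ((1 - ε) * p.2) p.1 : ℝ) : ℂ))
      (fun _ => 0) (fun p => ((- DD m Q p.2 p.1 : ℝ) : ℂ)) := by
  have hT : ∀ p : Polynomial ℝ, Ap (parS m B) (fun q ε => ((p.eval ((1 - ε) * q.2) : ℝ) : ℂ)) (fun q => ((p.eval q.2 : ℝ) : ℂ))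
      (fun q => ((-((Polynomial.X * p.derivative).eval q.2) : ℝ) : ℂ)) := fun p => Ap.poly (S := parS m B) p (fun q => q.2) (fun q hq => hq.2)
  have hT0 : ∀ p : Polynomial ℝ, Ap (parS m B) (fun q _ => ((p.eval q.2 : ℝ) : ℂ)) (fun q => ((p.eval q.2 : ℝ) : ℂ)) (fun _ => 0) := by
    intro p
    obtain ⟨C, hC, hp⟩ := hT p
    exact Ap.const C (fun q hq => (hp q hq).1)
  have hc : ∀ k < m, Ap (parS m B) (fun q _ => ((((k:ℝ) + 1) * ‖q.1 (k + 1)‖ ^ 2 - 4 / ((k:ℝ) + 1) : ℝ) : ℂ)) (fun q => ((((k:ℝ) + 1) * ‖q.1 (k + 1)‖ ^ 2 - 4 / ((k:ℝ) + 1) : ℝ) : ℂ)) (fun _ => 0) := by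
    intro k hk
    refine Ap.const ((k + 1) * B ^ 2 + 4 / (k + 1)) (fun q hq => ?_)
    have := hq.1 (k + 1) (by omega)
    have h2 : ‖q.1 (k + 1)‖ ^ 2 ≤ B ^ 2 := by gcongr
    rw [Complex.norm_real]
    refine (norm_sub_le _ _).trans ?_
    rw [Real.norm_of_nonneg (by positivity), Real.norm_of_nonneg (by positivity)]
    gcongr
  have hs : ∀ k < m, Ap (parS m B) (fun q ε => ((((k:ℝ) + 1) * ‖stepMap (1 - ε) 1 q.1 (k + 1)‖ ^ 2 - 4 / ((k:ℝ) + 1) : ℝ) : ℂ)) (fun q => ((((k:ℝ) + 1) * ‖q.1 (k + 1)‖ ^ 2 - 4 / ((k:ℝ) + 1) : ℝ) : ℂ))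
      (fun q => (((k + 1) * (-2 * ((starRingEnd ℂ) (q.1 (k+1)) * (bb q.1 (k + 1) + bb q.1 k + 2)).re) : ℝ) : ℂ)) := by
    intro k hk
    have a := stepMap_Ap m B k (by omega)
    have b := (a.mul a.conj).const_mul ((k + 1 : ℝ) : ℂ)
    have d := b.sub (Ap.const (S := parS m B) (u := fun _ => ((4 / ((k:ℝ) + 1) : ℝ) : ℂ)) _ (fun _ _ => le_rfl))
    refine (d.congr (fun p _ => ?_) (fun p _ => ?_)).congrF (fun p ε => ?_)
    · rw [Complex.mul_conj, Complex.normSq_eq_norm_sq]; push_cast; ring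
    · apply Complex.ext
      · simp; ring
      · simp; ring_nf; simp
    · rw [Complex.mul_conj, Complex.normSq_eq_norm_sq]; push_cast; ring
  have tot := Ap.sum (Finset.range m) (fun k hk => (((hT0 (T (k + 1))).mul (hs k (Finset.mem_range.mp hk))).sub
    ((hT (T (k + 1))).mul (hc k (Finset.mem_range.mp hk)))))
  refine (tot.congr (fun p _ => ?_) (fun p _ => ?_)).congrF (fun p ε => ?_)
  · exact Finset.sum_eq_zero fun k _ => by ring
  · rw [← DB_identity h]
    push_cast
    refine Finset.sum_congr rfl fun k _ => ?_
    ring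
  · simp only [EE]
    rw [← Finset.sum_sub_distrib]
    push_cast
    rfl

end

/-! ### Chains of steps -/

section

/-- The `ℓ¹` norm of the coefficients of index `1, …, m`. -/
noncomputable def NN (m : ℕ) (c : ℕ → ℂ) : ℝ := ∑ k ∈ Finset.range m, ‖c (k + 1)‖

lemma NN_nonneg (m : ℕ) (c : ℕ → ℂ) : 0 ≤ NN m c := Finset.sum_nonneg fun _ _ => norm_nonneg _

lemma NN_add_le (m : ℕ) (c d : ℕ → ℂ) : NN m (c + d) ≤ NN m c + NN m d := by
  unfold NN; rw [← Finset.sum_add_distrib]; exact Finset.sum_le_sum fun k _ => norm_add_le _ _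

lemma NN_sub_comm (m : ℕ) (c d : ℕ → ℂ) : NN m (c - d) = NN m (d - c) := by
  unfold NN; exact Finset.sum_congr rfl fun k _ => norm_sub_rev _ _

lemma NN_tri (m : ℕ) (a b c : ℕ → ℂ) : NN m (a - c) ≤ NN m (a - b) + NN m (b - c) := by
  have := NN_add_le m (a - b) (b - c); simpa using this

lemma NN_le (m : ℕ) (a b : ℕ → ℂ) : NN m a ≤ NN m (a - b) + NN m b := by
  have := NN_add_le m (a - b) b; simpa using this

lemma norm_le_NN (m : ℕ) (c : ℕ → ℂ) (h0 : c 0 = 0) (k : ℕ) (hk : k ≤ m) : ‖c k‖ ≤ NN m c := by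
  rcases k with _ | k
  · rw [h0, norm_zero]; exact NN_nonneg _ _
  · exact Finset.single_le_sum (f := fun k => ‖c (k + 1)‖) (fun _ _ => norm_nonneg _) (Finset.mem_range.mpr (by omega))

lemma norm_rot {κ : ℂ} (hκ : ‖κ‖ = 1) (k : ℕ) (z : ℂ) : ‖κ ^ k * z‖ = ‖z‖ := by simp [hκ]
lemma norm_rot' {κ : ℂ} (hκ : ‖κ‖ = 1) (k : ℕ) (z : ℂ) : ‖κ⁻¹ ^ k * z‖ = ‖z‖ := by simp [hκ]

lemma EE_congr (m : ℕ) (T : ℕ → Polynomial ℝ) (y : ℝ) (c d : ℕ → ℂ) (h : ∀ k, ‖c k‖ = ‖d k‖) : EE m T y c = EE m T y d := by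
  simp only [EE, h]

/-- The one-step energy estimate, for a step in any direction `κ`. It reduces to `κ = 1` by rotating
the coefficients, which leaves the energy unchanged. -/
lemma one_step {m : ℕ} {Q T : ℕ → Polynomial ℝ} (h : DBSystem m Q T) (B : ℝ) :
    ∃ C : ℝ, 0 ≤ C ∧ ∀ ε : ℝ, 0 ≤ ε → ε ≤ 1 / 2 → ∀ κ : ℂ, ‖κ‖ = 1 → ∀ c : ℕ → ℂ, (∀ k ≤ m, ‖c k‖ ≤ B) →
      ∀ y ∈ Set.Icc (0:ℝ) 1, EE m T y (stepMap (1 - ε) κ c) ≤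
        EE m T ((1 - ε) * y) c - ε * DD m Q y (fun k => κ⁻¹ ^ k * c k) + C * ε ^ 2 := by
  obtain ⟨C, hC, hA⟩ := EE_Ap h B
  refine ⟨C, hC, fun ε h0 h1 κ hκ c hc y hy => ?_⟩
  have hκ0 : κ ≠ 0 := by rintro rfl; simp at hκ
  have := (hA (fun k => κ⁻¹ ^ k * c k, y) ⟨fun k hk => by simpa [hκ] using hc k hk, hy⟩).2.2 ε h0 h1
  simp only [sub_zero] at this
  rw [EE_congr m T y (stepMap (1 - ε) κ c) (stepMap (1 - ε) 1 (fun k => κ⁻¹ ^ k * c k)) (fun k => by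
    rw [stepMap_rot _ κ hκ0, norm_rot hκ])]
  rw [EE_congr m T ((1 - ε) * y) c (fun k => κ⁻¹ ^ k * c k) (fun k => by rw [norm_rot' hκ])]
  rw [← Complex.ofReal_mul, ← Complex.ofReal_sub, Complex.norm_real] at this
  have := (le_abs_self _).trans this
  linarith

lemma step_zero (β : ℝ) (κ : ℂ) (c : ℕ → ℂ) (h0 : c 0 = 0) : stepMap β κ c 0 = 0 := by
  simp [stepMap, h0]

lemma AA_zero_succ (β : ℝ) (i : ℕ) : AA β 0 (i + 1) = 0 := by simp [AA]

lemma Ap.lip {u : Unit → ℝ → ℂ} {u0 u1 : Unit → ℂ} (h : Ap Set.univ u u0 u1) :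
    ∃ K : ℝ, 0 ≤ K ∧ ∀ ε : ℝ, 0 ≤ ε → ε ≤ 1 / 2 → ‖u () ε - u0 ()‖ ≤ K * ε := by
  obtain ⟨C, hC, h⟩ := h
  obtain ⟨-, h1, h2⟩ := h () trivial
  refine ⟨2 * C, by positivity, fun ε e0 e1 => ?_⟩
  have := norm_add_le (u () ε - u0 () - ε * u1 ()) (ε * u1 ())
  rw [sub_add_cancel, norm_mul, Complex.norm_real, Real.norm_of_nonneg e0] at this
  have h3 := h2 ε e0 e1
  have : C * ε ^ 2 ≤ C * ε := by nlinarith [mul_nonneg hC e0]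
  have : ε * ‖u1 ()‖ ≤ ε * C := by gcongr
  linarith

/-- A step of size `ε` moves the coefficients by `O(ε)`, with at most linear growth. -/
lemma step_speed (m : ℕ) : ∃ K : ℝ, 0 ≤ K ∧ ∀ ε : ℝ, 0 ≤ ε → ε ≤ 1 / 2 → ∀ κ : ℂ, ‖κ‖ = 1 → ∀ c : ℕ → ℂ, c 0 = 0 →
    NN m (stepMap (1 - ε) κ c - c) ≤ K * ε * (1 + NN m c) := by
  have hA : ∀ k i : ℕ, ∃ K : ℝ, 0 ≤ K ∧ ∀ ε : ℝ, 0 ≤ ε → ε ≤ 1 / 2 → ‖((AA (1 - ε) k i : ℝ) : ℂ) - (if i = k then 1 else 0)‖ ≤ K * ε :=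
    fun k i => (AA_Ap (S := (Set.univ : Set Unit)) k i).lip
  have hL : ∀ i : ℕ, ∃ K : ℝ, 0 ≤ K ∧ ∀ ε : ℝ, 0 ≤ ε → ε ≤ 1 / 2 → ‖((((1 - ε) ^ i - (1 - ε)⁻¹ ^ i) / i : ℝ) : ℂ)‖ ≤ K * ε := by
    intro i
    obtain ⟨K, hK, h⟩ := (((Ap.one_sub.pow i).sub (Ap.one_sub_inv.pow i)).const_mul (S := (Set.univ : Set Unit)) (((i : ℝ)⁻¹ : ℝ) : ℂ)).lip
    refine ⟨K, hK, fun ε h0 h1 => ?_⟩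
    have := h ε h0 h1
    convert this using 2
    push_cast; simp; ring
  choose K1 hK1 hA using hA
  choose K2 hK2 hL using hL
  set K0 := ∑ i ∈ Finset.range (m + 1), (∑ k ∈ Finset.range (m + 1), K1 k i + K2 i) with hK0
  have hK0' : 0 ≤ K0 := Finset.sum_nonneg fun i _ => add_nonneg (Finset.sum_nonneg fun k _ => hK1 k i) (hK2 i)
  refine ⟨K0, hK0', fun ε h0 h1 κ hκ c hc => ?_⟩
  have bound : ∀ i ∈ Finset.range m, ‖(stepMap (1 - ε) κ c - c) (i + 1)‖ ≤
      (∑ k ∈ Finset.range (m + 1), K1 k (i + 1) + K2 (i + 1)) * ε * (1 + NN m c) := by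
    intro i hi
    rw [Finset.mem_range] at hi
    have e : (stepMap (1 - ε) κ c - c) (i + 1) = ∑ k ∈ Finset.range (i + 1 + 1), c k * κ ^ (i + 1 - k) * (((AA (1 - ε) k (i + 1) : ℝ) : ℂ) - (if i + 1 = k then 1 else 0)) + κ ^ (i + 1) * ((((1 - ε) ^ (i + 1) - (1 - ε)⁻¹ ^ (i + 1)) / (i + 1 : ℕ) : ℝ) : ℂ) := by
      simp only [Pi.sub_apply, stepMap, mul_sub, Finset.sum_sub_distrib, mul_ite, mul_one, mul_zero]
      rw [Finset.sum_ite_eq (Finset.range (i + 1 + 1)) (i + 1), if_pos (by simp)]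
      simp; ring
    rw [e]
    refine (norm_add_le _ _).trans ?_
    rw [norm_rot hκ]
    have s1 : ‖∑ k ∈ Finset.range (i + 1 + 1), c k * κ ^ (i + 1 - k) * (((AA (1 - ε) k (i + 1) : ℝ) : ℂ) - (if i + 1 = k then 1 else 0))‖ ≤ ∑ k ∈ Finset.range (m + 1), NN m c * (K1 k (i + 1) * ε) := by
      refine (norm_sum_le _ _).trans ?_
      refine (Finset.sum_le_sum (g := fun k => NN m c * (K1 k (i + 1) * ε)) fun k hk => ?_).trans
        (Finset.sum_le_sum_of_subset_of_nonneg (Finset.range_mono (by omega)) fun k _ _ => by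
          have := NN_nonneg m c; have := hK1 k (i + 1); positivity)
      rw [Finset.mem_range] at hk
      rw [norm_mul, norm_mul, norm_pow, hκ, one_pow, mul_one]
      exact mul_le_mul (norm_le_NN m c hc k (by omega)) (hA k (i + 1) ε h0 h1) (norm_nonneg _) (NN_nonneg _ _)
    have s2 := hL (i + 1) ε h0 h1
    refine (add_le_add s1 s2).trans ?_
    rw [← Finset.mul_sum, ← Finset.sum_mul]
    have := NN_nonneg m c
    have a1 : 0 ≤ ∑ k ∈ Finset.range (m + 1), K1 k (i + 1) := Finset.sum_nonneg fun k _ => hK1 k (i + 1)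
    have a2 := hK2 (i + 1)
    have : 0 ≤ (∑ k ∈ Finset.range (m + 1), K1 k (i + 1)) * ε := by positivity
    have : 0 ≤ K2 (i + 1) * ε * NN m c := by positivity
    nlinarith
  unfold NN at *
  refine (Finset.sum_le_sum bound).trans ?_
  rw [← Finset.sum_mul, ← Finset.sum_mul]
  have := NN_nonneg m c
  unfold NN at this
  gcongr
  rw [hK0, Finset.sum_range_succ' (fun i => ∑ k ∈ Finset.range (m + 1), K1 k i + K2 i)]
  have : 0 ≤ ∑ k ∈ Finset.range (m + 1), K1 k 0 + K2 0 := add_nonneg (Finset.sum_nonneg fun k _ => hK1 k 0) (hK2 0)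
  linarith

/-- The coefficients after `j` steps with directions `κ 0, …, κ (j - 1)`, starting from `0`. -/
noncomputable def chainC (β : ℝ) (κ : ℕ → ℂ) : ℕ → ℕ → ℂ
  | 0 => 0
  | j + 1 => stepMap β (κ j) (chainC β κ j)

lemma chainC_zero (β : ℝ) (κ : ℕ → ℂ) (j : ℕ) : chainC β κ j 0 = 0 := by
  induction j with
  | zero => rfl
  | succ j ih => exact step_zero _ _ _ ih

lemma chain_time {ε y0 : ℝ} {n : ℕ} (h0 : 0 < ε) (h1 : ε ≤ 1 / 2) (hy : 0 < y0) (hn : y0 ≤ (1 - ε) ^ n) {j : ℕ} (hj : j ≤ n) :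
    j * ε ≤ - Real.log y0 := by
  have hb : (0:ℝ) < 1 - ε := by linarith
  have h2 := Real.log_le_log hy hn
  rw [Real.log_pow] at h2
  have h3 := Real.log_le_sub_one_of_pos hb
  have : (j:ℝ) * ε ≤ n * ε := by gcongr
  nlinarith

/-- A discrete Gronwall bound: along a chain of total time `-log y0` the coefficients stay bounded,
uniformly in the step size and in the directions. -/
lemma chain_bound (m : ℕ) (y0 : ℝ) (hy : 0 < y0) : ∃ B : ℝ, 0 ≤ B ∧ ∀ ε : ℝ, 0 < ε → ε ≤ 1 / 2 → ∀ n : ℕ, y0 ≤ (1 - ε) ^ n →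
    ∀ κ : ℕ → ℂ, (∀ j, ‖κ j‖ = 1) → ∀ j ≤ n, NN m (chainC (1 - ε) κ j) ≤ B := by
  obtain ⟨K, hK, hs⟩ := step_speed m
  refine ⟨Real.exp (K * (- Real.log y0)), (Real.exp_pos _).le, fun ε h0 h1 n hn κ hκ j hj => ?_⟩
  have key : ∀ j, 1 + NN m (chainC (1 - ε) κ j) ≤ Real.exp (K * (j * ε)) := by
    intro j
    induction j with
    | zero => simp [chainC, NN]
    | succ j ih =>
      have a := hs ε h0.le h1 (κ j) (hκ j) _ (chainC_zero (1 - ε) κ j)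
      have b := NN_le m (chainC (1 - ε) κ (j + 1)) (chainC (1 - ε) κ j)
      have e : chainC (1 - ε) κ (j + 1) = stepMap (1 - ε) (κ j) (chainC (1 - ε) κ j) := rfl
      rw [← e] at a
      have d : 1 + K * ε ≤ Real.exp (K * ε) := by have := Real.add_one_le_exp (K * ε); linarith
      have pos := NN_nonneg m (chainC (1 - ε) κ j)
      calc 1 + NN m (chainC (1 - ε) κ (j + 1)) ≤ (1 + NN m (chainC (1 - ε) κ j)) * (1 + K * ε) := by nlinarith
        _ ≤ Real.exp (K * (j * ε)) * Real.exp (K * ε) := by gcongr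
        _ = _ := by rw [← Real.exp_add]; push_cast; ring_nf
  have := key j
  have t := chain_time h0 h1 hy hn hj
  have : Real.exp (K * (j * ε)) ≤ Real.exp (K * (- Real.log y0)) := by gcongr
  linarith [key j]

lemma y_mem {ε y0 : ℝ} {n : ℕ} (h0 : 0 < ε) (h1 : ε ≤ 1 / 2) (hy : 0 < y0) (hn : y0 ≤ (1 - ε) ^ n) {j : ℕ} (hj : j ≤ n) :
    y0 / (1 - ε) ^ j ∈ Set.Icc (0:ℝ) 1 := by
  have hb : (0:ℝ) < 1 - ε := by linarith
  refine ⟨by positivity, ?_⟩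
  rw [div_le_one (by positivity)]
  exact hn.trans (pow_le_pow_of_le_one hb.le (by linarith) hj)

/-- The telescoped one-step estimates. The initial energy, that of the zero sequence, is nonpositive,
and the quadratic errors add up to `O(ε)` because there are `O(1 / ε)` steps. -/
lemma chain_energy {m : ℕ} {Q T : ℕ → Polynomial ℝ} (h : DBSystem m Q T) (y0 : ℝ) (hy : 0 < y0) :
    ∃ C : ℝ, 0 ≤ C ∧ ∀ ε : ℝ, 0 < ε → ε ≤ 1 / 2 → ∀ n : ℕ, y0 ≤ (1 - ε) ^ n →
    ∀ κ : ℕ → ℂ, (∀ j, ‖κ j‖ = 1) →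
      EE m T (y0 / (1 - ε) ^ n) (chainC (1 - ε) κ n) ≤ C * ε -
       ε * ∑ l ∈ Finset.range n, DD m Q (y0 / (1 - ε) ^ (l + 1)) (fun k => (κ l)⁻¹ ^ k * chainC (1 - ε) κ l k) := by
  obtain ⟨B, hB, hb⟩ := chain_bound m y0 hy
  obtain ⟨C, hC, hs⟩ := one_step h B
  refine ⟨C * |Real.log y0|, by positivity, fun ε h0 h1 n hn κ hκ => ?_⟩
  have hβ : (0:ℝ) < 1 - ε := by linarith
  have key : ∀ j ≤ n, EE m T (y0 / (1 - ε) ^ j) (chainC (1 - ε) κ j) ≤ C * ε ^ 2 * j -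
       ε * ∑ l ∈ Finset.range j, DD m Q (y0 / (1 - ε) ^ (l + 1)) (fun k => (κ l)⁻¹ ^ k * chainC (1 - ε) κ l k) := by
    intro j
    induction j with
    | zero =>
      intro _
      have hy01 : y0 ∈ Set.Icc (0:ℝ) 1 := by simpa using y_mem h0 h1 hy hn (Nat.zero_le n)
      simp only [pow_zero, div_one, chainC, Finset.range_zero, Finset.sum_empty, Nat.cast_zero, mul_zero, sub_zero]
      refine Finset.sum_nonpos fun k _ => mul_nonpos_of_nonneg_of_nonpos (h.T_nonneg _ _ hy01) ?_
      simp; positivity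
    | succ j ih =>
      intro hj
      have i1 := ih (by omega)
      have i2 := hs ε h0.le h1 (κ j) (hκ j) (chainC (1 - ε) κ j) (fun k hk => (norm_le_NN m _ (chainC_zero _ _ _) k hk).trans (hb ε h0 h1 n hn κ hκ j (by omega)))
        (y0 / (1 - ε) ^ (j + 1)) (y_mem h0 h1 hy hn hj)
      have : (1 - ε) * (y0 / (1 - ε) ^ (j + 1)) = y0 / (1 - ε) ^ j := by rw [pow_succ]; field_simp
      rw [this] at i2
      rw [Finset.sum_range_succ]
      change EE m T (y0 / (1 - ε) ^ (j + 1)) (stepMap (1 - ε) (κ j) (chainC (1 - ε) κ j)) ≤ _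
      push_cast
      nlinarith
  refine (key n le_rfl).trans ?_
  have := chain_time h0 h1 hy hn le_rfl
  have : C * ε ^ 2 * n ≤ C * |Real.log y0| * ε := by
    calc C * ε ^ 2 * n = C * ε * (n * ε) := by ring
      _ ≤ C * ε * |Real.log y0| := by gcongr; exact this.trans (neg_le_abs _)
      _ = _ := by ring
  linarith

lemma DD_nonneg {m : ℕ} {Q T : ℕ → Polynomial ℝ} (h : DBSystem m Q T) {y : ℝ} (hy : y ∈ Set.Icc (0:ℝ) 1) (c : ℕ → ℂ) : 0 ≤ DD m Q y c :=
  Finset.sum_nonneg fun k _ => mul_nonneg (h.Q_nonneg _ y hy) (by positivity)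

end

/-! ### The energy inequality along a chain -/

section

lemma chain_nonstrict {m : ℕ} {Q T : ℕ → Polynomial ℝ} (h : DBSystem m Q T) (y0 : ℝ) (hy : 0 < y0) :
    ∃ C : ℝ, 0 ≤ C ∧ ∀ ε : ℝ, 0 < ε → ε ≤ 1 / 2 → ∀ n : ℕ, y0 ≤ (1 - ε) ^ n →
    ∀ κ : ℕ → ℂ, (∀ j, ‖κ j‖ = 1) →
      EE m T (y0 / (1 - ε) ^ n) (chainC (1 - ε) κ n) ≤ C * ε := by
  obtain ⟨C, hC, hc⟩ := chain_energy h y0 hy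
  refine ⟨C, hC, fun ε h0 h1 n hn κ hκ => (hc ε h0 h1 n hn κ hκ).trans ?_⟩
  have : 0 ≤ ∑ l ∈ Finset.range n, DD m Q (y0 / (1 - ε) ^ (l + 1)) (fun k => (κ l)⁻¹ ^ k * chainC (1 - ε) κ l k) :=
    Finset.sum_nonneg fun l hl => DD_nonneg h (y_mem h0 h1 hy hn (by rw [Finset.mem_range] at hl; omega)) _
  have := mul_nonneg h0.le this
  linarith

lemma bb_lip (m : ℕ) (c d : ℕ → ℂ) (κ : ℂ) (hκ : ‖κ‖ = 1) (k : ℕ) (hk : k ≤ m) :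
    ‖bb (fun k => κ⁻¹ ^ k * c k) k - bb (fun k => κ⁻¹ ^ k * d k) k‖ ≤ m * NN m (c - d) := by
  induction k with
  | zero => simp only [bb_zero, sub_zero, norm_zero]; exact mul_nonneg (Nat.cast_nonneg _) (NN_nonneg _ _)
  | succ k _ =>
    unfold bb NN
    rw [← Finset.sum_sub_distrib, Finset.sum_range_succ', Finset.mul_sum]
    simp only [Nat.cast_zero, zero_mul, sub_zero, add_zero]
    refine (norm_sum_le _ _).trans ?_
    refine (Finset.sum_le_sum_of_subset_of_nonneg (Finset.range_subset_range.mpr hk) fun _ _ _ => norm_nonneg _).trans' ?_ |>.trans (Finset.sum_le_sum (f := fun j => ‖((j + 1 : ℕ) : ℂ) * (κ⁻¹ ^ (j + 1) * c (j + 1)) - ((j + 1 : ℕ) : ℂ) * (κ⁻¹ ^ (j + 1) * d (j + 1))‖) ?_)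
    · exact le_rfl
    · intro j hj
      rw [Finset.mem_range] at hj
      have : ((j + 1 : ℕ) : ℂ) * (κ⁻¹ ^ (j + 1) * c (j + 1)) - ((j + 1 : ℕ) : ℂ) * (κ⁻¹ ^ (j + 1) * d (j + 1)) = ((j + 1 : ℕ) : ℂ) * (κ⁻¹ ^ (j + 1) * (c - d) (j + 1)) := by
        simp; ring
      rw [this, norm_mul, norm_rot' hκ, Complex.norm_natCast]
      gcongr
      omega

/-- If the squares in `DD` cannot all vanish for `cs`, whatever the direction `κ`, then the dissipation
of the summed system is bounded below for `c` near `cs` and `y ≥ 1 / 2`. -/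
lemma DD_window (m : ℕ) (cs : ℕ → ℂ) (δ ρ : ℝ) (hρ : 2 * m ^ 2 * ρ ≤ δ / 2)
    (hδ : ∀ κ : ℂ, ‖κ‖ = 1 → δ ≤ ∑ k ∈ Finset.range m,
      ‖bb (fun k => κ⁻¹ ^ k * cs k) (k + 1) + bb (fun k => κ⁻¹ ^ k * cs k) k + 2‖) (hδ0 : 0 < δ)
    (c : ℕ → ℂ) (hc : NN m (c - cs) ≤ ρ) (κ : ℂ) (hκ : ‖κ‖ = 1) (y : ℝ) (hy : 1 / 2 ≤ y) (hy1 : y ≤ 1) :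
    (1 / 2) ^ m * ((δ / 2) ^ 2 / (m + 1)) ≤ DD m (fun k => ∑ i ∈ Finset.range (m + 1), QQ i (k : ℤ)) y (fun k => κ⁻¹ ^ k * c k) := by
  set v : ℕ → ℂ := fun k => bb (fun k => κ⁻¹ ^ k * c k) (k + 1) + bb (fun k => κ⁻¹ ^ k * c k) k + 2 with hv
  have h1 : δ / 2 ≤ ∑ k ∈ Finset.range m, ‖v k‖ := by
    have : ∀ k ∈ Finset.range m, ‖bb (fun k => κ⁻¹ ^ k * cs k) (k + 1) + bb (fun k => κ⁻¹ ^ k * cs k) k + 2‖ ≤ ‖v k‖ + 2 * m * ρ := by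
      intro k hk
      rw [Finset.mem_range] at hk
      have a1 := bb_lip m c cs κ hκ (k + 1) (by omega)
      have a2 := bb_lip m c cs κ hκ k (by omega)
      have a3 : (m:ℝ) * NN m (c - cs) ≤ m * ρ := by gcongr
      rw [norm_sub_rev] at a1 a2
      have e : bb (fun k => κ⁻¹ ^ k * cs k) (k + 1) + bb (fun k => κ⁻¹ ^ k * cs k) k + 2 = v k + (bb (fun k => κ⁻¹ ^ k * cs k) (k + 1) - bb (fun k => κ⁻¹ ^ k * c k) (k + 1)) + (bb (fun k => κ⁻¹ ^ k * cs k) k - bb (fun k => κ⁻¹ ^ k * c k) k) := by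
        simp only [hv]; ring
      rw [e]
      have := norm_add₃_le (a := v k) (b := (bb (fun k => κ⁻¹ ^ k * cs k) (k + 1) - bb (fun k => κ⁻¹ ^ k * c k) (k + 1))) (c := (bb (fun k => κ⁻¹ ^ k * cs k) k - bb (fun k => κ⁻¹ ^ k * c k) k))
      linarith
    have := (hδ κ hκ).trans (Finset.sum_le_sum this)
    rw [Finset.sum_add_distrib] at this
    simp at this
    nlinarith
  have h2 : (δ / 2) ^ 2 ≤ m * ∑ k ∈ Finset.range m, ‖v k‖ ^ 2 := by
    have := sq_sum_le_card_mul_sum_sq (s := Finset.range m) (f := fun k => ‖v k‖)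
    rw [Finset.card_range] at this
    refine le_trans ?_ this
    gcongr
  have h3 : (δ / 2) ^ 2 / (m + 1) ≤ ∑ k ∈ Finset.range m, ‖v k‖ ^ 2 := by
    rw [div_le_iff₀ (by positivity)]
    have : 0 ≤ ∑ k ∈ Finset.range m, ‖v k‖ ^ 2 := by positivity
    nlinarith
  refine (mul_le_mul_of_nonneg_left h3 (by positivity)).trans ?_
  rw [Finset.mul_sum]
  refine Finset.sum_le_sum fun k hk => ?_
  rw [Finset.mem_range] at hk
  refine mul_le_mul_of_nonneg_right ?_ (by positivity)
  refine le_trans ?_ (sum_system_Q_ge m (k + 1) (by omega) y ⟨by linarith, hy1⟩)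
  calc ((1:ℝ) / 2) ^ m ≤ (1 / 2) ^ (k + 1) := pow_le_pow_of_le_one (by norm_num) (by norm_num) (by omega)
    _ ≤ y ^ (k + 1) := by gcongr

set_option maxHeartbeats 800000 in
/-- A definite energy loss for chains that end near a sequence `cs` admitting no direction of zero
dissipation. By `step_speed` such a chain already stays near `cs` during a time bounded below, and the
dissipation is bounded below there. The loss `G` and the radius `ρ` do not depend on `y0`. -/
lemma chain_strict (m : ℕ) (cs : ℕ → ℂ) (δ : ℝ) (hδ0 : 0 < δ)
    (hδ : ∀ κ : ℂ, ‖κ‖ = 1 → δ ≤ ∑ k ∈ Finset.range m,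
      ‖bb (fun k => κ⁻¹ ^ k * cs k) (k + 1) + bb (fun k => κ⁻¹ ^ k * cs k) k + 2‖) :
    ∃ G ρ : ℝ, 0 < G ∧ 0 < ρ ∧ ∀ y0 : ℝ, 0 < y0 → y0 ≤ 1 / 4 → ∃ C ε1 : ℝ, 0 ≤ C ∧ 0 < ε1 ∧
      ∀ ε : ℝ, 0 < ε → ε ≤ ε1 → ∀ n : ℕ, y0 ≤ (1 - ε) ^ n → 3 / 4 ≤ y0 / (1 - ε) ^ n →
      ∀ κ : ℕ → ℂ, (∀ j, ‖κ j‖ = 1) → NN m (chainC (1 - ε) κ n - cs) ≤ ρ / 2 →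
        EE m (fun k => ∑ i ∈ Finset.range (m + 1), TT i k) (y0 / (1 - ε) ^ n) (chainC (1 - ε) κ n) ≤ C * ε - G := by
  obtain ⟨K, hK, hs⟩ := step_speed m
  set ρ : ℝ := min 1 (δ / (4 * (m ^ 2 + 1))) with hρd
  have hρ0 : 0 < ρ := by positivity
  have hρ1 : ρ ≤ 1 := min_le_left _ _
  have hρ2 : 2 * m ^ 2 * ρ ≤ δ / 2 := by
    have : ρ ≤ δ / (4 * (m ^ 2 + 1)) := min_le_right _ _
    rw [le_div_iff₀ (by positivity)] at this
    nlinarith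
  set g : ℝ := (1 / 2) ^ m * ((δ / 2) ^ 2 / (m + 1)) with hg
  have hg0 : 0 < g := by positivity
  set S : ℝ := K * (2 + NN m cs) + 1 with hS
  have hNs := NN_nonneg m cs
  have hS1 : 1 ≤ S := by have : 0 ≤ K * (2 + NN m cs) := by positivity
                         linarith
  set τ : ℝ := min (1 / 6) (ρ / (4 * S)) with hτ
  have hτ0 : 0 < τ := by positivity
  refine ⟨g * τ, ρ, by positivity, hρ0, fun y0 hy hy4 => ?_⟩
  obtain ⟨B, hB, hb⟩ := chain_bound m y0 hy
  obtain ⟨C, hC, hce⟩ := chain_energy (sum_system m) y0 hy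
  refine ⟨C, min (1 / 6) (ρ / (4 * (K * (1 + B) + 1))), hC, by positivity, fun ε h0 h1 n hn hn2 κ hκ hcn => ?_⟩
  have hε6 : ε ≤ 1 / 6 := h1.trans (min_le_left _ _)
  have hεB : ε * (4 * (K * (1 + B) + 1)) ≤ ρ := by
    rw [← le_div_iff₀ (by positivity)]; exact h1.trans (min_le_right _ _)
  have hε2 : ε ≤ 1 / 2 := by linarith
  have hβ : (0:ℝ) < 1 - ε := by linarith
  set c := chainC (1 - ε) κ with hc
  refine (hce ε h0 hε2 n hn κ hκ).trans ?_
  suffices H : g * τ ≤ ε * ∑ l ∈ Finset.range n, DD m (fun k => ∑ i ∈ Finset.range (m + 1), QQ i (k : ℤ)) (y0 / (1 - ε) ^ (l + 1)) (fun k => (κ l)⁻¹ ^ k * c l k) by linarith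
  have hstep : ∀ j, NN m (c (j + 1) - c j) ≤ K * ε * (1 + NN m (c j)) := fun j => hs ε h0.le hε2 (κ j) (hκ j) (c j) (chainC_zero _ _ _)
  -- `P j`: from step `j` on, the chain is within `ρ` of `cs` and the time is at least `1 / 2`.
  -- The least such `j` is followed by a window of steps of total length at least `τ`.
  let P : ℕ → Prop := fun j => ∀ i, j ≤ i → i ≤ n → NN m (c i - cs) ≤ ρ ∧ 1 / 2 ≤ y0 / (1 - ε) ^ i
  have hPn : P n := by
    intro i h1 h2
    obtain rfl : i = n := by omega
    exact ⟨by linarith, by linarith⟩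
  classical
  have hex : ∃ j, P j := ⟨n, hPn⟩
  set j0 := Nat.find hex with hj0
  have hPj : P j0 := Nat.find_spec hex
  have hj0n : j0 ≤ n := Nat.find_min' hex hPn
  have hj0p : j0 ≠ 0 := by
    intro h
    have := (hPj 0 (by omega) (by omega)).2
    simp at this; linarith
  obtain ⟨i, hi⟩ := Nat.exists_eq_succ_of_ne_zero hj0p
  have hnP : ¬ P i := Nat.find_min hex (by omega)
  have hbad : ¬ (NN m (c i - cs) ≤ ρ ∧ 1 / 2 ≤ y0 / (1 - ε) ^ i) := by
    intro h
    apply hnP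
    intro l h1 h2
    rcases h1.eq_or_lt with rfl | h1
    · exact h
    · exact hPj l (by omega) h2
  have hlen : τ ≤ (n - j0 : ℕ) * ε := by
    rw [not_and_or] at hbad
    rcases hbad with hbad | hbad
    · refine (min_le_right _ _).trans ?_
      rw [div_le_iff₀ (by positivity)]
      have hwalk : ∀ l, j0 + l ≤ n → NN m (c (j0 + l) - c j0) ≤ l * (ε * S) := by
        intro l
        induction l with
        | zero => intro _; simp [NN]
        | succ l ih =>
          intro hl
          have a1 := ih (by omega)
          have a2 := hstep (j0 + l)
          have a3 := NN_tri m (c (j0 + l + 1)) (c (j0 + l)) (c j0)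
          have a4 := NN_le m (c (j0 + l)) cs
          have a5 := (hPj (j0 + l) (by omega) (by omega)).1
          have a6 : K * ε * (1 + NN m (c (j0 + l))) ≤ ε * S := by
            have : 1 + NN m (c (j0 + l)) ≤ 2 + NN m cs := by linarith
            have := mul_le_mul_of_nonneg_left this (mul_nonneg hK h0.le)
            rw [hS]; nlinarith
          rw [← add_assoc]
          push_cast
          linarith
      have w := hwalk (n - j0) (by omega)
      rw [Nat.add_sub_cancel' hj0n] at w
      have b1 := hstep i
      have b2 := hb ε h0 hε2 n hn κ hκ i (by omega)
      have b3 : K * ε * (1 + NN m (c i)) ≤ ρ / 4 := by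
        have : K * ε * (1 + NN m (c i)) ≤ K * ε * (1 + B) := by gcongr
        nlinarith
      rw [← hi.trans (Nat.succ_eq_add_one i)] at b1
      have b4 := NN_tri m (c i) (c j0) cs
      have b5 := NN_tri m (c j0) (c n) cs
      rw [NN_sub_comm m (c i) (c j0)] at b4
      rw [NN_sub_comm m (c j0) (c n)] at b5
      push Not at hbad
      have b6 : ((n - j0 : ℕ) : ℝ) * ε * (4 * S) = 4 * ((n - j0 : ℕ) * (ε * S)) := by ring
      rw [b6]
      linarith
    · refine (min_le_left _ _).trans ?_
      push Not at hbad
      have hin : n - i = (n - j0) + 1 := by omega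
      have hb1 := one_add_mul_le_pow (a := -ε) (by linarith) (n - i)
      have e1 : (1 - ε) ^ n = (1 - ε) ^ i * (1 - ε) ^ (n - i) := by rw [← pow_add]; congr 1; omega
      rw [e1] at hn2
      have p1 : 0 < (1 - ε) ^ i := by positivity
      have p2 : 0 < (1 - ε) ^ (n - i) := by positivity
      rw [div_lt_iff₀ p1] at hbad
      rw [le_div_iff₀ (by positivity)] at hn2
      have : (1 - ε) ^ (n - i) ≤ 2 / 3 := by
        by_contra hcon
        push Not at hcon
        nlinarith
      rw [← sub_eq_add_neg, hin] at hb1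
      rw [hin] at this
      rw [Nat.cast_add, Nat.cast_one] at hb1
      linarith
  have hsum : ((n - j0 : ℕ) : ℝ) * g ≤ ∑ l ∈ Finset.range n, DD m (fun k => ∑ i ∈ Finset.range (m + 1), QQ i (k : ℤ)) (y0 / (1 - ε) ^ (l + 1)) (fun k => (κ l)⁻¹ ^ k * c l k) := by
    have hsub : Finset.Ico j0 n ⊆ Finset.range n := by intro x hx; simp at hx ⊢; omega
    refine le_trans ?_ (Finset.sum_le_sum_of_subset_of_nonneg hsub fun l hl _ => DD_nonneg (sum_system m) (y_mem h0 hε2 hy hn (by rw [Finset.mem_range] at hl; omega)) _)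
    rw [← Nat.card_Ico j0 n, ← nsmul_eq_mul]
    refine Finset.card_nsmul_le_sum _ _ _ fun l hl => ?_
    rw [Finset.mem_Ico] at hl
    exact DD_window m cs δ ρ hρ2 hδ hδ0 (c l) (hPj l hl.1 (by omega)).1 (κ l) (hκ l) _ (hPj (l + 1) (by omega) (by omega)).2 (y_mem h0 hε2 hy hn (by omega)).2
  calc g * τ ≤ g * ((n - j0 : ℕ) * ε) := by gcongr
    _ = ε * ((n - j0 : ℕ) * g) := by ring
    _ ≤ _ := by gcongr

end

/-! ### Jets at the origin -/

section

open Asymptotics Filter Topology Polynomial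

/-- `P` approximates `f` to order `m` at `0`: `f z = P z + O(z ^ (m + 1))`. The coefficients of `P` of
index larger than `m` are arbitrary. -/
def Jet (m : ℕ) (f : ℂ → ℂ) (P : ℂ[X]) : Prop :=
  (fun z => f z - P.eval z) =O[𝓝 0] fun z : ℂ => z ^ (m + 1)

namespace Jet
variable {m : ℕ} {f g : ℂ → ℂ} {P Q : ℂ[X]}

lemma congr (h : Jet m f P) (e : f =ᶠ[𝓝 0] g) : Jet m g P :=
  IsBigO.congr' h (by filter_upwards [e] with z hz; rw [hz]) EventuallyEq.rfl

lemma poly (m : ℕ) (P : ℂ[X]) : Jet m (fun z => P.eval z) P := by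
  simp only [Jet, sub_self]; exact isBigO_zero _ _

lemma add (hf : Jet m f P) (hg : Jet m g Q) : Jet m (fun z => f z + g z) (P + Q) := by
  refine (IsBigO.add hf hg).congr_left fun z => ?_
  simp; ring

lemma sub (hf : Jet m f P) (hg : Jet m g Q) : Jet m (fun z => f z - g z) (P - Q) := by
  refine (IsBigO.sub hf hg).congr_left fun z => ?_
  simp; ring

lemma pow_isBigO_one (n : ℕ) : (fun z : ℂ => z ^ n) =O[𝓝 0] fun _ : ℂ => (1 : ℂ) :=
  ((continuous_pow n).tendsto (0:ℂ)).isBigO_one ℂ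

lemma poly_isBigO_one (P : ℂ[X]) : (fun z : ℂ => P.eval z) =O[𝓝 0] fun _ : ℂ => (1 : ℂ) :=
  (P.continuous.tendsto (0:ℂ)).isBigO_one ℂ

lemma isBigO_one (hf : Jet m f P) : f =O[𝓝 0] fun _ : ℂ => (1 : ℂ) := by
  have := (IsBigO.trans hf (pow_isBigO_one _)).add (poly_isBigO_one P)
  exact this.congr_left fun z => by simp

lemma mul (hf : Jet m f P) (hg : Jet m g Q) : Jet m (fun z => f z * g z) (P * Q) := by
  have h1 := IsBigO.mul hf hg.isBigO_one
  have h2 := (poly_isBigO_one P).mul hg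
  have h1' := h1.congr_right (g₂ := fun z => z ^ (m + 1)) fun z => by simp
  have h2' := h2.congr_right (g₂ := fun z => z ^ (m + 1)) fun z => by simp
  refine (h1'.add h2').congr_left fun z => ?_
  simp; ring

lemma pow (hf : Jet m f P) (n : ℕ) : Jet m (fun z => f z ^ n) (P ^ n) := by
  induction n with
  | zero => simpa using poly m (1 : ℂ[X])
  | succ n ih => simpa only [pow_succ] using ih.mul hf

lemma const (m : ℕ) (a : ℂ) : Jet m (fun _ => a) (C a) := by simpa using poly m (C a)

lemma poly_comp (hg : Jet m g Q) (P : ℂ[X]) : Jet m (fun z => P.eval (g z)) (P.comp Q) := by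
  induction P using Polynomial.induction_on' with
  | add p q hp hq => simpa using hp.add hq
  | monomial n a =>
    simpa using (const m a).mul (hg.pow n)

lemma isBigO_id (hg : Jet m g Q) (h0 : Q.coeff 0 = 0) : g =O[𝓝 0] fun z => z := by
  have h1 : (fun z : ℂ => z ^ (m + 1)) =O[𝓝 0] fun z => z := by
    have := (pow_isBigO_one m).mul (isBigO_refl (fun z : ℂ => z) (𝓝 0))
    exact (this.congr_left fun z => (pow_succ z m).symm).congr_right fun z => by simp
  have h2 : (fun z : ℂ => Q.eval z) =O[𝓝 0] fun z => z := by
    have := (poly_isBigO_one Q.divX).mul (isBigO_refl (fun z : ℂ => z) (𝓝 0))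
    refine (this.congr_left fun z => ?_).congr_right fun z => by simp
    conv_rhs => rw [← divX_mul_X_add Q]
    simp [h0]
  have := (IsBigO.trans hg h1).add h2
  exact this.congr_left fun z => by simp

lemma comp (hf : Jet m f P) (hg : Jet m g Q) (h0 : Q.coeff 0 = 0) : Jet m (fun z => f (g z)) (P.comp Q) := by
  have hb := hg.isBigO_id h0
  have ht : Tendsto g (𝓝 0) (𝓝 0) := hb.trans_tendsto tendsto_id
  have h1 := (IsBigO.comp_tendsto hf ht).trans (hb.pow (m + 1))
  have h2 := hg.poly_comp P
  refine (h1.add h2).congr_left fun z => ?_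
  simp

lemma mono {n : ℕ} (hf : Jet m f P) (h : n ≤ m) : Jet n f P := by
  refine IsBigO.trans hf ?_
  have := (pow_isBigO_one (m - n)).mul (isBigO_refl (fun z : ℂ => z ^ (n + 1)) (𝓝 0))
  refine (this.congr_left fun z => ?_).congr_right fun z => by simp
  rw [← pow_add]; congr 1; omega

lemma small (P : ℂ[X]) (n : ℕ) (h : (fun z : ℂ => P.eval z) =O[𝓝[≠] 0] fun z : ℂ => z ^ n) : ∀ i < n, P.coeff i = 0 := by
  induction n generalizing P with
  | zero => intro i hi; omega
  | succ n ih =>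
    have hz : Tendsto (fun z : ℂ => z ^ (n + 1)) (𝓝[≠] 0) (𝓝 0) := by
      have := ((continuous_pow (n + 1)).tendsto (0:ℂ)).mono_left (nhdsWithin_le_nhds (s := {0}ᶜ))
      simpa using this
    have h1 : Tendsto (fun z : ℂ => P.eval z) (𝓝[≠] 0) (𝓝 0) := h.trans_tendsto hz
    have h2 : Tendsto (fun z : ℂ => P.eval z) (𝓝[≠] 0) (𝓝 (P.eval 0)) := (P.continuous.tendsto (0:ℂ)).mono_left nhdsWithin_le_nhds
    have h3 : P.coeff 0 = 0 := by rw [coeff_zero_eq_eval_zero]; exact tendsto_nhds_unique h2 h1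
    have h4 : (fun z : ℂ => (divX P).eval z) =O[𝓝[≠] 0] fun z : ℂ => z ^ n := by
      have h5 := h.mul (isBigO_refl (fun z : ℂ => z⁻¹) (𝓝[≠] 0))
      refine h5.congr' ?_ ?_
      · filter_upwards [self_mem_nhdsWithin] with z hz
        have hz' : z ≠ 0 := hz
        have : P.eval z = (divX P).eval z * z := by
          conv_lhs => rw [← divX_mul_X_add P]
          simp [h3]
        rw [this]; field_simp
      · filter_upwards [self_mem_nhdsWithin] with z hz
        have hz' : z ≠ 0 := hz
        rw [pow_succ]; field_simp
    intro i hi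
    rcases i with _ | i
    · exact h3
    · have := ih _ h4 i (by omega)
      rwa [coeff_divX] at this

lemma unique (hP : Jet m f P) (hQ : Jet m f Q) {i : ℕ} (hi : i ≤ m) : P.coeff i = Q.coeff i := by
  have h : (fun z : ℂ => (Q - P).eval z) =O[𝓝[≠] 0] fun z : ℂ => z ^ (m + 1) := by
    refine IsBigO.mono (l' := 𝓝 0) ?_ nhdsWithin_le_nhds
    refine (IsBigO.sub hP hQ).congr_left fun z => ?_
    simp
  have := small _ _ h i (by omega)
  rw [coeff_sub, sub_eq_zero] at this
  exact this.symm

lemma of_coeff (hP : Jet m f P) (h : ∀ i ≤ m, P.coeff i = Q.coeff i) : Jet m f Q := by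
  have hX : (X : ℂ[X]) ^ (m + 1) ∣ P - Q := by
    rw [X_pow_dvd_iff]
    intro d hd
    rw [coeff_sub, h d (by omega), sub_self]
  obtain ⟨R, hR⟩ := hX
  have h2 : (fun z : ℂ => (P - Q).eval z) =O[𝓝 0] fun z : ℂ => z ^ (m + 1) := by
    have := (isBigO_refl (fun z : ℂ => z ^ (m + 1)) (𝓝 0)).mul (poly_isBigO_one R)
    refine (this.congr_left fun z => ?_).congr_right fun z => by simp
    rw [hR]; simp
  refine (IsBigO.add hP h2).congr_left fun z => ?_
  simp

lemma of_mul_unit {u : ℂ[X]} (hu : u.eval 0 ≠ 0) (h : Jet m (fun z => u.eval z * f z) (u * P)) : Jet m f P := by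
  have hinv : (fun z : ℂ => (u.eval z)⁻¹) =O[𝓝 0] fun _ : ℂ => (1 : ℂ) :=
    ((u.continuous.tendsto (0:ℂ)).inv₀ hu).isBigO_one ℂ
  have hne : ∀ᶠ z in 𝓝 (0:ℂ), u.eval z ≠ 0 := (u.continuous.tendsto (0:ℂ)).eventually_ne hu
  have := hinv.mul h
  refine this.congr' ?_ ?_
  · filter_upwards [hne] with z hz
    rw [eval_mul]
    field_simp
  · filter_upwards with z; simp

/-- The Taylor polynomial of an analytic germ is a jet. -/
lemma of_analytic (m : ℕ) (hf : AnalyticAt ℂ f 0) :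
    Jet m f (∑ i ∈ Finset.range (m + 1), C (iteratedDeriv i f 0 / i.factorial) * X ^ i) := by
  obtain ⟨p, hp⟩ := id hf
  have h := hp.isBigO_sub_partialSum_pow (m + 1)
  have hp2 := hf.hasFPowerSeriesAt
  obtain rfl : p = _ := hp.eq_formalMultilinearSeries hp2
  simp only [zero_add] at h
  have := h.trans (g := fun y : ℂ => ‖y‖ ^ (m + 1)) (k := fun z : ℂ => z ^ (m + 1)) (by
    refine IsBigO.of_norm_right ?_
    simp only [norm_pow]; exact isBigO_refl _ _)
  refine this.congr_left fun z => ?_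
  rw [FormalMultilinearSeries.partialSum, eval_finsetSum]
  congr 1
  refine Finset.sum_congr rfl fun i _ => ?_
  rw [FormalMultilinearSeries.ofScalars_apply_eq]
  simp only [eval_mul, eval_C, eval_pow, eval_X, smul_eq_mul]

lemma exists_of_analytic (m : ℕ) (hf : AnalyticAt ℂ f 0) : ∃ P, Jet m f P := ⟨_, of_analytic m hf⟩

lemma coeff_eq (hf : AnalyticAt ℂ f 0) (hP : Jet m f P) {i : ℕ} (hi : i ≤ m) : P.coeff i = iteratedDeriv i f 0 / i.factorial := by
  rw [hP.unique (of_analytic m hf) hi, finsetSum_coeff]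
  simp only [coeff_C_mul_X_pow]
  rw [Finset.sum_ite_eq, if_pos (Finset.mem_range.mpr (by omega))]

/-- The term `i = 0` of the sum is `0`, as `α ^ 0 / 0 = 0`. -/
lemma log_one_sub (m : ℕ) (α : ℂ) : Jet m (fun z => Complex.log (1 - α * z)) (∑ i ∈ Finset.range (m + 1), C (-(α ^ i / i)) * X ^ i) := by
  have h1 : Jet m (fun z => Complex.log (1 + z)) (∑ i ∈ Finset.range (m + 1), C ((-1 : ℂ) ^ (i + 1) / (i : ℂ)) * X ^ i) := by
    refine IsBigO.of_bound (2 : ℝ) ?_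
    have : ∀ᶠ z : ℂ in 𝓝 0, ‖z‖ < 1 / 2 := by
      have := Metric.ball_mem_nhds (0:ℂ) (by norm_num : (0:ℝ) < 1/2)
      filter_upwards [this] with z hz
      simpa using hz
    filter_upwards [this] with z hz
    have := Complex.norm_log_sub_logTaylor_le m (by linarith : ‖z‖ < 1)
    have e : Complex.logTaylor (m + 1) z = (∑ i ∈ Finset.range (m + 1), C ((-1) ^ (i + 1) / (i:ℂ)) * X ^ i).eval z := by
      rw [Complex.logTaylor, eval_finsetSum]
      refine Finset.sum_congr rfl fun i _ => ?_
      simp; ring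
    rw [← e]
    refine this.trans ?_
    rw [norm_pow]
    have i1 : (1 - ‖z‖)⁻¹ ≤ 2 := by
      rw [inv_le_comm₀ (by linarith) (by norm_num)]; linarith
    calc ‖z‖ ^ (m + 1) * (1 - ‖z‖)⁻¹ / (m + 1) ≤ ‖z‖ ^ (m + 1) * (1 - ‖z‖)⁻¹ := by
          apply div_le_self
          · have : 0 ≤ (1 - ‖z‖)⁻¹ := inv_nonneg.mpr (by linarith)
            positivity
          · have : (0:ℝ) ≤ m := Nat.cast_nonneg _
            linarith
      _ ≤ ‖z‖ ^ (m + 1) * 2 := by gcongr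
      _ = _ := by ring
  have h2 : Jet m (fun z : ℂ => -α * z) (C (-α) * X) := (poly m (C (-α) * X)).congr (Eventually.of_forall fun z => by simp)
  have h3 := h1.comp h2 (by simp)
  refine (h3.congr (g := fun z => Complex.log (1 - α * z)) (Eventually.of_forall fun z => ?_)).of_coeff fun i hi => ?_
  · simp [sub_eq_add_neg]
  · rw [Polynomial.sum_comp]
    simp only [mul_comp, C_comp, pow_comp, X_comp, mul_pow, ← C_pow, ← mul_assoc, ← C_mul, finsetSum_coeff]
    refine Finset.sum_congr rfl fun j _ => ?_
    congr 3
    rw [pow_succ, neg_pow α]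
    have : (-1:ℂ) ^ j * (-1) ^ j = 1 := by rw [← mul_pow]; simp
    linear_combination (- α ^ j / j) * this

end Jet

end

/-! ### Jets of the Koebe step -/

section

open Asymptotics Filter Topology Polynomial

lemma AA_lt (β : ℝ) (i k : ℕ) (h : i < k) : AA β k i = 0 := by
  induction i using Nat.strong_induction_on generalizing k with
  | _ i ih =>
    rcases k with _ | k
    · omega
    rcases i with _ | _ | i
    · simp [AA]
    · rw [AA, ih 0 (by omega) k (by omega), mul_zero]
    · rw [AA, ih (i + 1) (by omega) (k + 1) (by omega), ih (i + 1) (by omega) k (by omega), ih i (by omega) k (by omega)]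
      ring

/-- The `m`-jet of `(z * (β - z) / (1 - β * z)) ^ k`. -/
noncomputable def AApoly (β : ℝ) (m k : ℕ) : ℂ[X] := ∑ i ∈ Finset.range (m + 1), C ((AA β k i : ℝ) : ℂ) * X ^ i

lemma AApoly_coeff (β : ℝ) {m k i : ℕ} (hi : i ≤ m) : (AApoly β m k).coeff i = AA β k i := by
  rw [AApoly, finsetSum_coeff]
  simp only [coeff_C_mul_X_pow]
  rw [Finset.sum_ite_eq, if_pos (Finset.mem_range.mpr (by omega))]

lemma jet_phi_pow (β : ℝ) (m k : ℕ) : Jet m (fun z => (z * (β - z) / (1 - β * z)) ^ k) (AApoly β m k) := by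
  induction k with
  | zero =>
    refine ((Jet.const m 1).congr (g := fun z : ℂ => (z * (β - z) / (1 - β * z)) ^ 0) (Eventually.of_forall fun z => by simp)).of_coeff fun i hi => ?_
    rw [AApoly_coeff β hi, AA, coeff_C]
    split_ifs <;> simp
  | succ k ih =>
    have hu : (1 - C (β:ℂ) * X : ℂ[X]).eval 0 ≠ 0 := by simp
    refine Jet.of_mul_unit hu ?_
    have h1 := (Jet.poly m (C (β:ℂ) * X - X * X)).mul ih
    have hne : ∀ᶠ z in 𝓝 (0:ℂ), (1 - C (β:ℂ) * X : ℂ[X]).eval z ≠ 0 := ((1 - C (β:ℂ) * X : ℂ[X]).continuous.tendsto (0:ℂ)).eventually_ne hu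
    refine (h1.congr ?_).of_coeff fun i hi => ?_
    · filter_upwards [hne] with z hz
      simp only [eval_sub, eval_mul, eval_C, eval_X, eval_one] at hz ⊢
      rw [pow_succ]; field_simp
    · have e1 : (C (β:ℂ) * X - X * X) * AApoly β m k = C (β:ℂ) * (X * AApoly β m k) - X * (X * AApoly β m k) := by ring
      have e2 : (1 - C (β:ℂ) * X) * AApoly β m (k + 1) = AApoly β m (k + 1) - C (β:ℂ) * (X * AApoly β m (k + 1)) := by ring
      rw [e1, e2]
      rcases i with _ | _ | i
      · simp only [coeff_sub, coeff_C_mul, mul_coeff_zero, coeff_X_zero, zero_mul, mul_zero, AApoly_coeff β hi]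
        simp [AA]
      · simp only [coeff_sub, coeff_C_mul, coeff_X_mul, mul_coeff_zero, coeff_X_zero, zero_mul, AApoly_coeff β hi, AApoly_coeff β (Nat.zero_le m)]
        simp [AA]
      · simp only [coeff_sub, coeff_C_mul, coeff_X_mul, AApoly_coeff β hi, AApoly_coeff β (show i + 1 ≤ m by omega), AApoly_coeff β (show i ≤ m by omega)]
        rw [AA]; push_cast; ring

/-- The Koebe step: up to rotation, the Blaschke product of degree two with zeros `0` and `β * κ⁻¹`.
It fixes `0` and has derivative `β` there. -/
noncomputable def phiK (β : ℝ) (κ w : ℂ) : ℂ := w * (β - κ * w) / (1 - β * (κ * w))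

/-- The logarithm of `phiK β κ w / w`, for `w` near `0`. -/
noncomputable def lamK (β : ℝ) (κ w : ℂ) : ℂ := Complex.log ((β - κ * w) / (1 - β * (κ * w)))

lemma jet_phiK_pow (β : ℝ) {κ : ℂ} (hκ : κ ≠ 0) (m k : ℕ) : ∃ P, Jet m (fun z => phiK β κ z ^ k) P ∧ ∀ i ≤ m, P.coeff i = κ ^ i * κ⁻¹ ^ k * AA β k i := by
  have h1 := (jet_phi_pow β m k).comp (g := fun z => κ * z) (Q := C κ * X) ((Jet.poly m (C κ * X)).congr (Eventually.of_forall fun z => by simp)) (by simp)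
  have h2 := (Jet.const m (κ⁻¹ ^ k)).mul h1
  refine ⟨_, h2.congr (Eventually.of_forall fun z => ?_), fun i hi => ?_⟩
  · simp only [phiK]; rw [← mul_pow]; congr 1; field_simp
  · rw [coeff_C_mul, comp_C_mul_X_coeff, AApoly_coeff β hi]; ring

lemma jet_phiK (β : ℝ) {κ : ℂ} (hκ : κ ≠ 0) (m : ℕ) : ∃ P, Jet m (phiK β κ) P ∧ P.coeff 0 = 0 := by
  obtain ⟨P, h1, h2⟩ := jet_phiK_pow β hκ m 1
  refine ⟨P, by simpa using h1, ?_⟩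
  rw [h2 0 (Nat.zero_le _)]; simp [AA]

lemma jet_lamK {β : ℝ} (h0 : 0 < β) (h1 : β < 1) (κ : ℂ) (m : ℕ) : ∃ P, Jet m (lamK β κ) P ∧ ∀ i, 1 ≤ i → i ≤ m → P.coeff i = κ ^ i * (((β ^ i - β⁻¹ ^ i) / i : ℝ) : ℂ) := by
  have j := ((Jet.const m (Complex.log β)).add (Jet.log_one_sub m (κ / β))).sub (Jet.log_one_sub m (β * κ))
  have hβ : (β:ℂ) ≠ 0 := by exact_mod_cast h0.ne'
  refine ⟨_, j.congr ?_, fun i hi him => ?_⟩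
  · have t1 : Tendsto (fun z : ℂ => Complex.arg (1 - κ / β * z)) (𝓝 0) (𝓝 0) := by
      have : ContinuousAt (fun z : ℂ => Complex.arg (1 - κ / β * z)) 0 :=
        ContinuousAt.comp (g := Complex.arg) (Complex.continuousAt_arg (by simp)) (by fun_prop)
      simpa using this.tendsto
    have t2 : Tendsto (fun z : ℂ => Complex.arg (1 - β * κ * z)) (𝓝 0) (𝓝 0) := by
      have : ContinuousAt (fun z : ℂ => Complex.arg (1 - β * κ * z)) 0 :=
        ContinuousAt.comp (g := Complex.arg) (Complex.continuousAt_arg (by simp)) (by fun_prop)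
      simpa using this.tendsto
    have n1 : ∀ᶠ z : ℂ in 𝓝 0, 1 - κ / β * z ≠ 0 := by
      have : ContinuousAt (fun z : ℂ => 1 - κ / β * z) 0 := by fun_prop
      exact this.eventually_ne (by simp)
    have n2 : ∀ᶠ z : ℂ in 𝓝 0, 1 - β * κ * z ≠ 0 := by
      have : ContinuousAt (fun z : ℂ => 1 - β * κ * z) 0 := by fun_prop
      exact this.eventually_ne (by simp)
    have I : Set.Ioo (-1:ℝ) 1 ∈ 𝓝 (0:ℝ) := Ioo_mem_nhds (by norm_num) (by norm_num)
    filter_upwards [t1 I, t2 I, n1, n2] with z a1 a2 z1 z2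
    have pi3 := Real.pi_gt_three
    have b1 : Complex.log (β * (1 - κ / β * z)) = Complex.log β + Complex.log (1 - κ / β * z) := by
      rw [Complex.log_ofReal_mul h0 z1, Complex.ofReal_log h0.le]
    have e1 : β * (1 - κ / β * z) = β - κ * z := by field_simp
    have z3 : β * (1 - κ / β * z) ≠ 0 := mul_ne_zero hβ z1
    have arg1 : Complex.arg (β * (1 - κ / β * z)) = Complex.arg (1 - κ / β * z) := Complex.arg_real_mul _ h0
    have hlog : Complex.log (β * (1 - κ / β * z) / (1 - β * κ * z)) = Complex.log (β * (1 - κ / β * z)) - Complex.log (1 - β * κ * z) := by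
      have hne : Complex.arg (1 - β * κ * z) ≠ π := by have := a2.2; intro h; rw [Set.mem_preimage, h] at a2; linarith [a2.2]
      have a1' := a1.1; have a1'' := a1.2; have a2' := a2.1; have a2'' := a2.2
      rw [div_eq_mul_inv, Complex.log_mul z3 (inv_ne_zero z2), Complex.log_inv _ hne, ← sub_eq_add_neg]
      rw [arg1, Complex.arg_inv, if_neg hne]
      constructor <;> linarith
    rw [lamK, ← e1, ← mul_assoc, hlog, b1]
  · rw [coeff_sub, coeff_add, coeff_C, if_neg (by omega), zero_add, finsetSum_coeff, finsetSum_coeff]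
    simp only [coeff_C_mul_X_pow]
    rw [Finset.sum_ite_eq, if_pos (Finset.mem_range.mpr (by omega)), Finset.sum_ite_eq, if_pos (Finset.mem_range.mpr (by omega))]
    push_cast
    rw [div_pow, mul_pow, inv_pow]
    field_simp
    ring

lemma stepMap_congr (β : ℝ) (κ : ℂ) (c d : ℕ → ℂ) (i : ℕ) (hi : 1 ≤ i) (h : ∀ k, 1 ≤ k → k ≤ i → c k = d k) : stepMap β κ c i = stepMap β κ d i := by
  unfold stepMap
  congr 1
  refine Finset.sum_congr rfl fun k hk => ?_
  rw [Finset.mem_range] at hk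
  rcases k with _ | k
  · obtain ⟨i, rfl⟩ : ∃ j, i = j + 1 := ⟨i - 1, by omega⟩
    rw [AA_zero_succ]; simp
  · rw [h (k + 1) (by omega) (by omega)]

/-- The link between `stepMap` and the function-theoretic step. -/
lemma jet_step {β : ℝ} (h0 : 0 < β) (h1 : β < 1) {κ : ℂ} (hκ : κ ≠ 0) {m : ℕ} {f : ℂ → ℂ} {P : ℂ[X]} (hf : Jet m f P) :
    ∃ P', Jet m (fun w => f (phiK β κ w) + lamK β κ w) P' ∧ ∀ i, 1 ≤ i → i ≤ m → P'.coeff i = stepMap β κ P.coeff i := by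
  obtain ⟨Q, hQ, hQ0⟩ := jet_phiK β hκ m
  obtain ⟨R, hR, hR'⟩ := jet_lamK h0 h1 κ m
  have hf' : Jet m f (∑ k ∈ Finset.range (m + 1), C (P.coeff k) * X ^ k) := by
    refine hf.of_coeff fun i hi => ?_
    rw [finsetSum_coeff]
    simp only [coeff_C_mul_X_pow]
    rw [Finset.sum_ite_eq, if_pos (Finset.mem_range.mpr (by omega))]
  refine ⟨_, (hf'.comp hQ hQ0).add hR, fun i hi him => ?_⟩
  rw [coeff_add, hR' i hi him, stepMap]
  congr 1
  rw [Polynomial.sum_comp, finsetSum_coeff]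
  rw [← Finset.sum_subset (Finset.range_subset_range.mpr (show i + 1 ≤ m + 1 by omega))]
  · refine Finset.sum_congr rfl fun k hk => ?_
    rw [Finset.mem_range] at hk
    obtain ⟨S, hS, hS'⟩ := jet_phiK_pow β hκ m k
    rw [mul_comp, C_comp, pow_comp, X_comp, coeff_C_mul, (hQ.pow k).unique hS him, hS' i him, inv_pow, pow_sub₀ _ hκ (by omega)]
    ring
  · intro k _ hk
    rw [Finset.mem_range] at hk
    obtain ⟨S, hS, hS'⟩ := jet_phiK_pow β hκ m k
    rw [mul_comp, C_comp, pow_comp, X_comp, coeff_C_mul, (hQ.pow k).unique hS him, hS' i him, AA_lt β i k (by omega)]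
    simp

end

/-! ### Univalent self-maps of the disk and the osculation step -/

section

open Asymptotics Filter Topology Polynomial

/-- Univalent self-maps of the unit disk fixing `0`. -/
structure Uni (ω : ℂ → ℂ) : Prop where
  diff : DifferentiableOn ℂ ω (ball 0 1)
  inj : Set.InjOn ω (ball 0 1)
  maps : Set.MapsTo ω (ball 0 1) (ball 0 1)
  zero : ω 0 = 0

/-- A zero-free holomorphic function on the disk has a holomorphic logarithm with prescribed value
`w` at `0`. -/
lemma exists_log {h : ℂ → ℂ} (hd : DifferentiableOn ℂ h (ball 0 1)) (hne : ∀ z ∈ ball (0:ℂ) 1, h z ≠ 0) {w : ℂ} (hw : Complex.exp w = h 0) :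
    ∃ g : ℂ → ℂ, DifferentiableOn ℂ g (ball 0 1) ∧ g 0 = w ∧ ∀ z ∈ ball (0:ℂ) 1, Complex.exp (g z) = h z := by
  have h0 : (0:ℂ) ∈ ball (0:ℂ) 1 := by simp
  have hq : DifferentiableOn ℂ (fun z => deriv h z / h z) (ball 0 1) := (hd.deriv isOpen_ball).div hd hne
  obtain ⟨g, hg0, hg⟩ := hq.isExactOn_ball.with_val_at 0 w
  refine ⟨g, fun z hz => (hg z hz).differentiableAt.differentiableWithinAt, hg0, fun z hz => ?_⟩
  have hu : ∀ z ∈ ball (0:ℂ) 1, HasDerivAt (fun z => h z * Complex.exp (- g z)) 0 z := by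
    intro z hz
    have a := (hd.differentiableAt (isOpen_ball.mem_nhds hz)).hasDerivAt
    have b := (hg z hz).neg.cexp
    refine (a.mul b).congr_deriv ?_
    have := hne z hz
    simp only [Pi.neg_apply]
    field_simp
    ring
  have := IsOpen.eqOn_of_deriv_eq (f := fun z => h z * Complex.exp (- g z)) (g := fun _ => (1:ℂ)) isOpen_ball
    (convex_ball (0:ℂ) 1).isPreconnected (fun z hz => (hu z hz).differentiableAt.differentiableWithinAt) (differentiableOn_const _)
    (fun z hz => by rw [(hu z hz).deriv]; simp) h0 (by simp only [hg0, Complex.exp_neg, hw]; exact mul_inv_cancel₀ (hne 0 h0)) hz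
  simp only [Complex.exp_neg] at this
  have e := Complex.exp_ne_zero (g z)
  field_simp at this
  exact this.symm

/-- Open mapping for injective holomorphic functions. -/
lemma inj_open {ω : ℂ → ℂ} (hd : DifferentiableOn ℂ ω (ball 0 1)) (hi : Set.InjOn ω (ball 0 1)) {s : Set ℂ} (hs : s ⊆ ball 0 1) (ho : IsOpen s) : IsOpen (ω '' s) := by
  rcases (hd.analyticOnNhd isOpen_ball).is_constant_or_isOpen (convex_ball (0:ℂ) 1).isPreconnected with ⟨w, hw⟩ | h
  · exfalso
    have a : (0:ℂ) ∈ ball (0:ℂ) 1 := by simp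
    have b : (1/2:ℂ) ∈ ball (0:ℂ) 1 := by simp; norm_num
    have := hi a b ((hw _ a).trans (hw _ b).symm)
    norm_num at this
  · exact h s hs ho

/-- The inverse of an injective holomorphic function is continuous on the image. -/
lemma inv_cont {ω : ℂ → ℂ} (hd : DifferentiableOn ℂ ω (ball 0 1)) (hi : Set.InjOn ω (ball 0 1)) :
    ∃ ψ : ℂ → ℂ, ContinuousOn ψ (ω '' ball 0 1) ∧ (∀ w ∈ ω '' ball 0 1, ψ w ∈ ball (0:ℂ) 1 ∧ ω (ψ w) = w) ∧ ∀ z ∈ ball (0:ℂ) 1, ψ (ω z) = z := by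
  have hψ : ∀ w ∈ ω '' ball 0 1, Function.invFunOn ω (ball 0 1) w ∈ ball (0:ℂ) 1 ∧ ω (Function.invFunOn ω (ball 0 1) w) = w := fun w hw =>
    ⟨Function.invFunOn_mem hw, Function.invFunOn_eq hw⟩
  refine ⟨Function.invFunOn ω (ball 0 1), ?_, hψ, fun z hz => hi.leftInvOn_invFunOn hz⟩
  rw [_root_.continuousOn_iff]
  intro w hw t ht hwt
  refine ⟨ω '' (t ∩ ball 0 1), inj_open hd hi Set.inter_subset_right (ht.inter isOpen_ball), ⟨_, ⟨hwt, (hψ w hw).1⟩, (hψ w hw).2⟩, ?_⟩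
  rintro _ ⟨⟨z, hz, rfl⟩, -⟩
  have : Function.invFunOn ω (ball 0 1) (ω z) = z := hi.leftInvOn_invFunOn hz.2
  rw [Set.mem_preimage, this]
  exact hz.1

/-- If a univalent function omits `a` with `‖a‖ ≤ s`, then it omits a point of the circle `‖w‖ = s`.
Otherwise `w - a` would have a holomorphic logarithm near that circle, transported from the disk, and
the integral of `(w - a)⁻¹` around the circle would vanish. -/
lemma omit_circle {ω : ℂ → ℂ} (hd : DifferentiableOn ℂ ω (ball 0 1)) (hi : Set.InjOn ω (ball 0 1)) {a : ℂ} {s : ℝ}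
    (ha : a ∉ ω '' ball 0 1) (has : ‖a‖ ≤ s) : ∃ a', ‖a'‖ = s ∧ a' ∉ ω '' ball 0 1 := by
  rcases has.eq_or_lt with h | h
  · exact ⟨a, h, ha⟩
  by_contra hcon
  push Not at hcon
  have hne : ∀ z ∈ ball (0:ℂ) 1, ω z - a ≠ 0 := fun z hz e => ha ⟨z, hz, sub_eq_zero.mp e⟩
  obtain ⟨g, hg, -, he⟩ := exists_log (h := fun z => ω z - a) (hd.sub (differentiableOn_const a)) hne (w := Complex.log (ω 0 - a)) (Complex.exp_log (hne 0 (by simp)))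
  obtain ⟨ψ, hψc, hψ, -⟩ := inv_cont hd hi
  have hU : IsOpen (ω '' ball 0 1) := inj_open hd hi subset_rfl isOpen_ball
  have hder : ∀ w ∈ ω '' ball 0 1, HasDerivAt (fun w => g (ψ w)) (w - a)⁻¹ w := by
    intro w hw
    have hE : ∀ w ∈ ω '' ball 0 1, Complex.exp (g (ψ w)) + a = w := fun w hw => by
      rw [he _ (hψ w hw).1, (hψ w hw).2]; ring
    have e1 : Complex.exp (g (ψ w)) = w - a := eq_sub_of_add_eq (hE w hw)
    have c1 : ContinuousAt (fun w => g (ψ w)) w := by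
      refine ContinuousAt.comp (g := g) ?_ (hψc.continuousAt (hU.mem_nhds hw))
      exact (hg.differentiableAt (isOpen_ball.mem_nhds (hψ w hw).1)).continuousAt
    refine HasDerivAt.of_local_left_inverse (f := fun v => Complex.exp v + a) c1 ?_ ?_ ?_
    · rw [← e1]; exact (Complex.hasDerivAt_exp _).add_const a
    · rw [← e1]; exact Complex.exp_ne_zero _
    · filter_upwards [hU.mem_nhds hw] with v hv using hE v hv
  have hs : 0 < s := (norm_nonneg a).trans_lt h
  have I1 : (∮ z in C(0, s), (z - a)⁻¹) = 0 :=
    circleIntegral.integral_eq_zero_of_hasDerivWithinAt hs.le fun z hz => (hder z (hcon z (by simpa using hz))).hasDerivWithinAt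
  rw [circleIntegral.integral_sub_inv_of_mem_ball (by simpa using h)] at I1
  simp at I1

/-- The disk automorphism `u ↦ (a - u) / (1 - a * u)` maps the disk into itself. -/
lemma norm_T {a : ℝ} (h0 : 0 < a) (h1 : a < 1) {u : ℂ} (hu : ‖u‖ < 1) : ‖(a:ℂ) - u‖ < ‖1 - a * u‖ := by
  have h2 : Complex.normSq u < 1 := by
    rw [Complex.normSq_eq_norm_sq]; have := norm_nonneg u; nlinarith
  rw [← sq_lt_sq₀ (norm_nonneg _) (norm_nonneg _), ← Complex.normSq_eq_norm_sq, ← Complex.normSq_eq_norm_sq]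
  rw [Complex.normSq_apply] at *
  simp [Complex.normSq_apply]
  nlinarith [mul_pos (show 0 < 1 - a ^ 2 by nlinarith) (sub_pos.mpr h2)]

lemma one_sub_ne {a : ℝ} (h0 : 0 < a) (h1 : a < 1) {u : ℂ} (hu : ‖u‖ < 1) : 1 - a * u ≠ 0 := by
  rw [← norm_pos_iff]; exact (norm_nonneg _).trans_lt (norm_T h0 h1 hu)

/-- The osculation step of Koebe: a univalent self-map `ω` omitting `b ^ 2 * κ⁻¹` factors through
`phiK`, and the inner factor is again a univalent self-map. That factor is obtained by moving the omitted point to `0`, taking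
a square root, and moving the image of `0` back to `0`. -/
lemma Uni.step {ω : ℂ → ℂ} (hω : Uni ω) {b : ℝ} (hb0 : 0 < b) (hb1 : b < 1) {κ : ℂ} (hκ : ‖κ‖ = 1)
    (ho : (b:ℂ) ^ 2 * κ⁻¹ ∉ ω '' ball 0 1) :
    ∃ ω' : ℂ → ℂ, Uni ω' ∧ ∀ z ∈ ball (0:ℂ) 1, ω z = phiK (2 * b / (1 + b ^ 2)) κ (ω' z) := by
  have hκ0 : κ ≠ 0 := by rintro rfl; simp at hκ
  have hb2 : 0 < b ^ 2 := by positivity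
  have hb21 : b ^ 2 < 1 := by nlinarith
  have hn : ∀ z ∈ ball (0:ℂ) 1, ‖κ * ω z‖ < 1 := fun z hz => by
    rw [norm_mul, hκ, one_mul]; simpa using hω.maps hz
  have hden : ∀ z ∈ ball (0:ℂ) 1, 1 - (b:ℂ) ^ 2 * (κ * ω z) ≠ 0 := fun z hz => by
    have := one_sub_ne hb2 hb21 (hn z hz); push_cast at this; exact this
  set h : ℂ → ℂ := fun z => ((b:ℂ) ^ 2 - κ * ω z) / (1 - (b:ℂ) ^ 2 * (κ * ω z)) with hh
  have hhd : DifferentiableOn ℂ h (ball 0 1) :=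
    DifferentiableOn.div ((differentiableOn_const _).sub (hω.diff.const_mul _)) ((differentiableOn_const _).sub ((hω.diff.const_mul _).const_mul _)) hden
  have hh0 : h 0 = (b:ℂ) ^ 2 := by simp [hh, hω.zero]
  have hhne : ∀ z ∈ ball (0:ℂ) 1, h z ≠ 0 := by
    intro z hz
    refine div_ne_zero (fun e => ho ⟨z, hz, ?_⟩) (hden z hz)
    rw [sub_eq_zero] at e
    rw [e]; field_simp
  have hhn : ∀ z ∈ ball (0:ℂ) 1, ‖h z‖ < 1 := by
    intro z hz
    rw [hh]; simp only [norm_div]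
    rw [div_lt_one (norm_pos_iff.mpr (hden z hz))]
    have := norm_T hb2 hb21 (hn z hz); push_cast at this; exact this
  have hbC : (b:ℂ) ≠ 0 := by exact_mod_cast hb0.ne'
  obtain ⟨g, hg, hg0, hge⟩ := exists_log hhd hhne (w := 2 * Complex.log b) (by
    rw [hh0, two_mul, Complex.exp_add, Complex.exp_log hbC]; ring)
  set s : ℂ → ℂ := fun z => Complex.exp (g z / 2) with hs
  have hs2 : ∀ z ∈ ball (0:ℂ) 1, s z ^ 2 = h z := by
    intro z hz
    rw [← hge z hz, hs]; simp only [← Complex.exp_nat_mul]; congr 1; push_cast; ring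
  have hs0 : s 0 = b := by
    rw [hs]; simp only [hg0]; rw [mul_div_cancel_left₀ _ two_ne_zero, Complex.exp_log hbC]
  have hsd : DifferentiableOn ℂ s (ball 0 1) := (hg.div_const 2).cexp
  have hsn : ∀ z ∈ ball (0:ℂ) 1, ‖s z‖ < 1 := by
    intro z hz
    have := hhn z hz
    rw [← hs2 z hz, norm_pow] at this
    by_contra hc; push Not at hc
    nlinarith
  have hsden : ∀ z ∈ ball (0:ℂ) 1, 1 - (b:ℂ) * s z ≠ 0 := fun z hz => one_sub_ne hb0 hb1 (hsn z hz)
  set ω' : ℂ → ℂ := fun z => κ⁻¹ * (((b:ℂ) - s z) / (1 - b * s z)) with hω'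
  have hc : (1:ℂ) - (b:ℂ) ^ 2 ≠ 0 := by
    rw [sub_ne_zero]; exact_mod_cast hb21.ne'
  have hc2 : (1:ℂ) + (b:ℂ) ^ 2 ≠ 0 := by
    have : (1:ℝ) + b ^ 2 ≠ 0 := by positivity
    exact_mod_cast this
  have hmaps : Set.MapsTo ω' (ball 0 1) (ball 0 1) := by
    intro z hz
    rw [mem_ball_zero_iff, hω']; simp only [norm_mul, norm_inv, hκ, norm_div, inv_one, one_mul]
    rw [div_lt_one (norm_pos_iff.mpr (hsden z hz))]
    exact norm_T hb0 hb1 (hsn z hz)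
  have hrel : ∀ z ∈ ball (0:ℂ) 1, ω z = phiK (2 * b / (1 + b ^ 2)) κ (ω' z) := by
    intro z hz
    have d1 := hsden z hz
    have d2 := hden z hz
    have e1 : h z * (1 - (b:ℂ) ^ 2 * (κ * ω z)) = (b:ℂ) ^ 2 - κ * ω z := div_mul_cancel₀ _ d2
    rw [← hs2 z hz] at e1
    have e2 : κ * ω' z = ((b:ℂ) - s z) / (1 - b * s z) := by rw [hω']; simp only; field_simp
    have u1 : ‖κ * ω' z‖ < 1 := by rw [norm_mul, hκ, one_mul]; simpa using hmaps hz
    have hβ0 : 0 < 2 * b / (1 + b ^ 2) := by positivity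
    have hβ1 : 2 * b / (1 + b ^ 2) < 1 := by rw [div_lt_one (by positivity)]; nlinarith
    have d3 := one_sub_ne hβ0 hβ1 u1
    have e3 : κ * ω z * (1 - ((2 * b / (1 + b ^ 2) : ℝ):ℂ) * (κ * ω' z)) = κ * ω' z * (((2 * b / (1 + b ^ 2) : ℝ):ℂ) - κ * ω' z) := by
      rw [e2]
      push_cast
      field_simp
      ring_nf
      ring_nf at e1
      linear_combination (1 - (b:ℂ) ^ 2) * e1
    rw [phiK, eq_div_iff d3]
    apply mul_left_cancel₀ hκ0
    rw [← mul_assoc, e3]; ring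
  refine ⟨ω', ⟨?_, ?_, hmaps, ?_⟩, hrel⟩
  · exact (DifferentiableOn.div ((differentiableOn_const _).sub hsd) ((differentiableOn_const _).sub (hsd.const_mul _)) hsden).const_mul _
  · intro z hz w hw e
    apply hω.inj hz hw
    rw [hrel z hz, hrel w hw, e]
  · simp [hω', hs0]

end

/-! ### Osculation until the derivative is near one -/

section

open Asymptotics Filter Topology Polynomial

/-- `log (ω z / z)` near `0`, the value at `0` being the logarithm of the derivative. -/
noncomputable def Lg (ω : ℂ → ℂ) (z : ℂ) : ℂ := Complex.log (dslope ω 0 z)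

/-- After `n` osculation steps with directions `κ`, the map `ω0` has become `ω`: the derivative at `0`
has grown by the factor `β⁻¹` at each step, and `log (ω0 z / z) = F (ω z) + log (ω z / z)` near `0`,
where the coefficients of `F` of index `1, …, m` are those of the chain. -/
structure Reach (β : ℝ) (m : ℕ) (ω0 : ℂ → ℂ) (n : ℕ) (κ : ℕ → ℂ) (ω : ℂ → ℂ) : Prop where
  uni : Uni ω
  der : deriv ω 0 * (β:ℂ) ^ n = deriv ω0 0
  unim : ∀ j, ‖κ j‖ = 1
  germ : ∃ F P, Jet m F P ∧ (∀ i, 1 ≤ i → i ≤ m → P.coeff i = chainC β κ n i) ∧ ∀ᶠ z in 𝓝 0, Lg ω0 z = F (ω z) + Lg ω z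

lemma chainC_congr (β : ℝ) {κ κ' : ℕ → ℂ} {n : ℕ} (h : ∀ j < n, κ j = κ' j) : chainC β κ n = chainC β κ' n := by
  induction n with
  | zero => rfl
  | succ n ih => rw [chainC, chainC, ih fun j hj => h j (by omega), h n (by omega)]

lemma Uni.differentiableAt {ω : ℂ → ℂ} (h : Uni ω) : DifferentiableAt ℂ ω 0 :=
  h.diff.differentiableAt (ball_mem_nhds 0 one_pos)

lemma reach_zero (β : ℝ) (m : ℕ) {ω0 : ℂ → ℂ} (h : Uni ω0) : Reach β m ω0 0 (fun _ => 1) ω0 where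
  uni := h
  der := by simp
  unim := by simp
  germ := ⟨fun _ => 0, C 0, Jet.const m 0, fun i _ _ => by simp [chainC], by simp⟩

lemma hasDerivAt_phiK (β : ℝ) (κ : ℂ) : HasDerivAt (phiK β κ) β 0 := by
  have h1 : HasDerivAt (fun w : ℂ => w * (β - κ * w)) (1 * (β - κ * 0) + 0 * (0 - κ * 1)) 0 :=
    (hasDerivAt_id (0:ℂ)).mul ((hasDerivAt_const (0:ℂ) (β:ℂ)).sub ((hasDerivAt_id (0:ℂ)).const_mul κ))
  have h2 : HasDerivAt (fun w : ℂ => 1 - (β:ℂ) * (κ * w)) (0 - β * (κ * 1)) 0 :=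
    (hasDerivAt_const (0:ℂ) (1:ℂ)).sub (((hasDerivAt_id (0:ℂ)).const_mul κ).const_mul (β:ℂ))
  have := h1.div h2 (by simp)
  refine this.congr_deriv ?_
  simp

/-- Additivity of the principal branch near `0` for factors with positive value at `0`. -/
lemma log_mul_near {u v : ℂ → ℂ} (hu : ContinuousAt u 0) (hv : ContinuousAt v 0) {a b : ℝ} (ha : 0 < a) (hb : 0 < b) (hua : u 0 = a) (hvb : v 0 = b) :
    ∀ᶠ z in 𝓝 (0:ℂ), Complex.log (u z * v z) = Complex.log (u z) + Complex.log (v z) := by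
  have I : Set.Ioo (-1:ℝ) 1 ∈ 𝓝 (0:ℝ) := Ioo_mem_nhds (by norm_num) (by norm_num)
  have key : ∀ {u : ℂ → ℂ} (_ : ContinuousAt u 0) {a : ℝ} (_ : 0 < a) (_ : u 0 = a), ∀ᶠ z in 𝓝 (0:ℂ), u z ≠ 0 ∧ Complex.arg (u z) ∈ Set.Ioo (-1:ℝ) 1 := by
    intro u hu a ha hua
    have h1 : ∀ᶠ z in 𝓝 (0:ℂ), u z ≠ 0 := hu.eventually_ne (by rw [hua]; exact_mod_cast ha.ne')
    have h2 : ContinuousAt (fun z => Complex.arg (u z)) 0 :=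
      ContinuousAt.comp (g := Complex.arg) (Complex.continuousAt_arg (by rw [hua]; exact Complex.ofReal_mem_slitPlane.mpr ha)) hu
    have h3 : Tendsto (fun z => Complex.arg (u z)) (𝓝 0) (𝓝 0) := by
      have := h2.tendsto
      rwa [hua, Complex.arg_ofReal_of_nonneg ha.le] at this
    exact h1.and (h3 I)
  filter_upwards [key hu ha hua, key hv hb hvb] with z ⟨h1, h2, h2'⟩ ⟨h3, h4, h4'⟩
  have := Real.pi_gt_three
  exact Complex.log_mul h1 h3 ⟨by linarith, by linarith⟩

/-- As long as the current map omits a point of the closed disk of radius `b ^ 2`, one more step is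
possible. -/
lemma reach_step {b : ℝ} (hb0 : 0 < b) (hb1 : b < 1) {β : ℝ} (hβ : β = 2 * b / (1 + b ^ 2)) {m : ℕ} {ω0 : ℂ → ℂ} {y0 : ℝ} (hy : 0 < y0) (hω0 : deriv ω0 0 = y0) {n : ℕ} {κ : ℕ → ℂ} {ω : ℂ → ℂ}
    (h : Reach β m ω0 n κ ω) {a : ℂ} (ha : a ∉ ω '' ball 0 1) (hab : ‖a‖ ≤ b ^ 2) :
    ∃ κ' ω', Reach β m ω0 (n + 1) κ' ω' := by
  have hβ0 : 0 < β := by rw [hβ]; positivity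
  have hβ1 : β < 1 := by rw [hβ, div_lt_one (by positivity)]; nlinarith
  have hβC : (β:ℂ) ≠ 0 := by exact_mod_cast hβ0.ne'
  obtain ⟨a', ha', hao⟩ := omit_circle h.uni.diff h.uni.inj ha hab
  have ha0 : a' ≠ 0 := by rintro rfl; rw [norm_zero] at ha'; have : 0 < b ^ 2 := by positivity
                          linarith
  have hbC : (b:ℂ) ≠ 0 := by exact_mod_cast hb0.ne'
  set k : ℂ := (b:ℂ) ^ 2 / a' with hk
  have hk1 : ‖k‖ = 1 := by
    rw [hk, norm_div, norm_pow, Complex.norm_real, Real.norm_of_nonneg hb0.le, ha']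
    exact div_self (by positivity)
  have hk0 : k ≠ 0 := by rintro h; rw [h, norm_zero] at hk1; norm_num at hk1
  have hka : (b:ℂ) ^ 2 * k⁻¹ = a' := by rw [hk]; field_simp
  obtain ⟨ω', hω', hrel⟩ := h.uni.step hb0 hb1 hk1 (by rw [hka]; exact hao)
  rw [← hβ] at hrel
  have hev : ω =ᶠ[𝓝 0] fun z => phiK β k (ω' z) := by
    filter_upwards [ball_mem_nhds (0:ℂ) one_pos] with z hz using hrel z hz
  have hder : deriv ω 0 = β * deriv ω' 0 := by
    have h1 : HasDerivAt (fun z => phiK β k (ω' z)) (β * deriv ω' 0) 0 := by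
      refine HasDerivAt.comp (h₂ := phiK β k) 0 ?_ hω'.differentiableAt.hasDerivAt
      rw [hω'.zero]; exact hasDerivAt_phiK β k
    rw [hev.deriv_eq, h1.deriv]
  have hder2 : deriv ω' 0 * (β:ℂ) ^ (n + 1) = deriv ω0 0 := by rw [← h.der, hder]; ring
  have hdr : deriv ω' 0 = ((y0 / β ^ (n + 1) : ℝ) : ℂ) := by
    push_cast
    rw [eq_div_iff (pow_ne_zero _ hβC), hder2, hω0]
  obtain ⟨F, P, hF, hP, hg⟩ := h.germ
  obtain ⟨P', hF', hP'⟩ := jet_step hβ0 hβ1 hk0 hF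
  refine ⟨Function.update κ n k, ω', hω', hder2, ?_, _, P', hF', ?_, ?_⟩
  · intro j
    by_cases hj : j = n
    · subst hj; simpa using hk1
    · simpa [hj] using h.unim j
  · intro i hi him
    rw [hP' i hi him, chainC, Function.update_self]
    refine stepMap_congr β k _ _ i hi fun l hl hli => ?_
    rw [hP l hl (by omega)]
    exact congrFun (chainC_congr β fun j hj => by rw [Function.update_of_ne (by omega)]) l
  · have hc' := hω'.differentiableAt.continuousAt
    have hcB : ContinuousAt (fun z => ((β:ℂ) - k * ω' z) / (1 - β * (k * ω' z))) 0 := by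
      refine ContinuousAt.div (by fun_prop) (by fun_prop) ?_
      simp [hω'.zero]
    have hcd : ContinuousAt (dslope ω' 0) 0 := continuousAt_dslope_same.mpr hω'.differentiableAt
    have hlog := log_mul_near hcB hcd hβ0 (show 0 < y0 / β ^ (n + 1) by positivity) (by simp [hω'.zero]) (by rw [dslope_same, hdr])
    filter_upwards [hg, hlog, hev] with z h1 h2 h3
    have hz : dslope ω 0 z = ((β:ℂ) - k * ω' z) / (1 - β * (k * ω' z)) * dslope ω' 0 z := by
      by_cases hz : z = 0
      · subst hz
        rw [dslope_same, dslope_same, hder, hω'.zero]; simp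
      · rw [dslope_of_ne _ hz, dslope_of_ne _ hz, slope_def_field, slope_def_field, h.uni.zero, hω'.zero, h3, phiK]
        ring
    rw [h1, ← h3, add_assoc]
    congr 1
    rw [Lg, hz, h2, lamK, Lg]

/-- A univalent self-map whose image contains the closed disk of radius `s` has derivative at least `s`
at `0`: the maximum principle for `z / ω z` on the preimage of the disk, a form of the Schwarz lemma
for the inverse. -/
lemma deriv_ge {ω : ℂ → ℂ} (h : Uni ω) {s : ℝ} (hs : 0 < s) (hd0 : deriv ω 0 ≠ 0) (hfull : ∀ a : ℂ, ‖a‖ ≤ s → a ∈ ω '' ball 0 1) : s ≤ ‖deriv ω 0‖ := by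
  obtain ⟨ψ, hψc, hψ, hψ'⟩ := inv_cont h.diff h.inj
  have h0 : (0:ℂ) ∈ ball (0:ℂ) 1 := by simp
  have hqd : DifferentiableOn ℂ (dslope ω 0) (ball 0 1) := (differentiableOn_dslope (isOpen_ball.mem_nhds h0)).mpr h.diff
  have hK : IsCompact (ψ '' closedBall 0 s) := (isCompact_closedBall (0:ℂ) s).image_of_continuousOn (hψc.mono fun a ha => hfull a (by simpa using ha))
  have hKD : ψ '' closedBall 0 s ⊆ ball 0 1 := by
    rintro _ ⟨a, ha, rfl⟩; exact (hψ a (hfull a (by simpa using ha))).1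
  set V : Set ℂ := {z ∈ ball (0:ℂ) 1 | ‖ω z‖ < s} with hV
  have hVo : IsOpen V := by
    have : V = ball 0 1 ∩ ω ⁻¹' (ball 0 s) := by ext z; simp [hV]
    rw [this]; exact h.diff.continuousOn.isOpen_inter_preimage isOpen_ball isOpen_ball
  have hVK : closure V ⊆ ψ '' closedBall 0 s := by
    refine closure_minimal ?_ hK.isClosed
    intro z hz
    exact ⟨ω z, by simpa using hz.2.le, hψ' z hz.1⟩
  have hVb : Bornology.IsBounded V := (isBounded_ball (x := (0:ℂ)) (r := 1)).subset fun z hz => hz.1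
  have hq0 : ∀ z ∈ ball (0:ℂ) 1, dslope ω 0 z ≠ 0 := by
    intro z hz
    by_cases hz0 : z = 0
    · rw [hz0, dslope_same]; exact hd0
    · rw [dslope_of_ne _ hz0, slope_def_field, h.zero, sub_zero, sub_zero]
      exact div_ne_zero (fun e => hz0 (h.inj hz h0 (e.trans h.zero.symm))) hz0
  have hfd : DifferentiableOn ℂ (fun z => (dslope ω 0 z)⁻¹) (ball 0 1) := hqd.inv hq0
  have hcl : DiffContOnCl ℂ (fun z => (dslope ω 0 z)⁻¹) V :=
    (hfd.mono (hVK.trans hKD)).diffContOnCl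
  have hbd : ∀ z ∈ frontier V, ‖(dslope ω 0 z)⁻¹‖ ≤ s⁻¹ := by
    intro z hz
    have hzc := hVK hz.1
    have hzD := hKD hzc
    have hzV : z ∉ V := by have := hz.2; rwa [hVo.interior_eq] at this
    have hωs : s ≤ ‖ω z‖ := by
      by_contra hc; push Not at hc; exact hzV ⟨hzD, hc⟩
    have hz0 : z ≠ 0 := by rintro rfl; rw [h.zero, norm_zero] at hωs; linarith
    rw [dslope_of_ne _ hz0, slope_def_field, h.zero, sub_zero, sub_zero, inv_div, norm_div, ← one_div]
    have : ‖z‖ ≤ 1 := by simpa using (mem_ball_zero_iff.mp hzD).le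
    gcongr
  have := Complex.norm_le_of_forall_mem_frontier_norm_le hVb hcl hbd (z := 0) (subset_closure ⟨h0, by rw [h.zero, norm_zero]; exact hs⟩)
  rw [dslope_same, norm_inv] at this
  exact (inv_le_inv₀ (norm_pos_iff.mpr hd0) hs).mp this

lemma Uni.deriv_le {ω : ℂ → ℂ} (h : Uni ω) : ‖deriv ω 0‖ ≤ 1 :=
  Complex.norm_deriv_le_one_of_mapsTo_ball h.diff (by rw [h.zero]; exact fun z hz => ball_subset_closedBall (h.maps hz)) one_pos

lemma Reach.deriv_eq {β : ℝ} (hβ : 0 < β) {m : ℕ} {ω0 : ℂ → ℂ} {y0 : ℝ} (hω0 : deriv ω0 0 = y0) {n : ℕ} {κ : ℕ → ℂ} {ω : ℂ → ℂ}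
    (h : Reach β m ω0 n κ ω) : deriv ω 0 = ((y0 / β ^ n : ℝ) : ℂ) := by
  have hβC : (β:ℂ) ≠ 0 := by exact_mod_cast hβ.ne'
  push_cast
  rw [eq_div_iff (pow_ne_zero _ hβC), h.der, hω0]

lemma Reach.le {β : ℝ} (hβ : 0 < β) {m : ℕ} {ω0 : ℂ → ℂ} {y0 : ℝ} (hy : 0 < y0) (hω0 : deriv ω0 0 = y0) {n : ℕ} {κ : ℕ → ℂ} {ω : ℂ → ℂ}
    (h : Reach β m ω0 n κ ω) : y0 ≤ β ^ n := by
  have := h.uni.deriv_le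
  rw [h.deriv_eq hβ hω0, Complex.norm_real, Real.norm_of_nonneg (by positivity), div_le_one (by positivity)] at this
  exact this

/-- The osculation process makes the derivative reach `b ^ 2` after finitely many steps: otherwise it
never stops, while each step multiplies by `β⁻¹ > 1` a derivative bounded by `1`. -/
lemma reach_end {b : ℝ} (hb0 : 0 < b) (hb1 : b < 1) {β : ℝ} (hβ : β = 2 * b / (1 + b ^ 2)) (m : ℕ) {ω0 : ℂ → ℂ} (hu : Uni ω0) {y0 : ℝ} (hy : 0 < y0) (hω0 : deriv ω0 0 = y0) :
    ∃ n κ ω, Reach β m ω0 n κ ω ∧ b ^ 2 ≤ y0 / β ^ n := by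
  have hβ0 : 0 < β := by rw [hβ]; positivity
  have hβ1 : β < 1 := by rw [hβ, div_lt_one (by positivity)]; nlinarith
  by_contra hcon
  push Not at hcon
  have key : ∀ n, ∃ κ ω, Reach β m ω0 n κ ω := by
    intro n
    induction n with
    | zero => exact ⟨_, _, reach_zero β m hu⟩
    | succ n ih =>
      obtain ⟨κ, ω, h⟩ := ih
      have hlt := hcon n κ ω h
      have : ∃ a : ℂ, ‖a‖ ≤ b ^ 2 ∧ a ∉ ω '' ball 0 1 := by
        by_contra hc
        push Not at hc
        have hd := h.deriv_eq hβ0 hω0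
        have hp : 0 < y0 / β ^ n := by positivity
        have := deriv_ge h.uni (s := b ^ 2) (by positivity) (by rw [hd]; exact_mod_cast hp.ne') hc
        rw [hd, Complex.norm_real, Real.norm_of_nonneg hp.le] at this
        linarith
      obtain ⟨a, ha, hao⟩ := this
      exact reach_step hb0 hb1 hβ hy hω0 h hao ha
  obtain ⟨n, hn⟩ := exists_pow_lt_of_lt_one hy hβ1
  obtain ⟨κ, ω, h⟩ := key n
  exact absurd (h.le hβ0 hy hω0) (not_le.mpr hn)

end

/-! ### Univalent self-maps as limits of chains -/

section

open Asymptotics Filter Topology Polynomial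

/-- Stability in the Schwarz lemma: if the derivative at `0` is close to `1` then `ω z / z` is close to `1` on
`‖z‖ ≤ 1 / 2`, by the Borel–Carathéodory inequality. -/
lemma dslope_near_one {ω : ℂ → ℂ} (h : Uni ω) {y η : ℝ} (hη : 0 < η) (hd : deriv ω 0 = y) (hy : 1 - η ≤ y) (hy1 : y ≤ 1) {z : ℂ} (hz : ‖z‖ ≤ 1 / 2) :
    ‖dslope ω 0 z - 1‖ ≤ 3 * η := by
  have hq : DifferentiableOn ℂ (dslope ω 0) (ball 0 1) :=
    (differentiableOn_dslope (isOpen_ball.mem_nhds (mem_ball_self one_pos))).2 h.diff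
  have hb : ∀ z ∈ ball (0:ℂ) 1, ‖dslope ω 0 z‖ ≤ 1 := by
    intro z hz
    have := Complex.norm_dslope_le_div_of_mapsTo_ball (R₂ := 1) h.diff (by
      intro w hw
      rw [h.zero]
      exact ball_subset_closedBall (h.maps hw)) hz
    simpa using this
  have h0 : dslope ω 0 0 = y := by rw [dslope_same, hd]
  have := borelCaratheodory_zero (M := η) (R := 1) (f := fun z => dslope ω 0 z - y) (z := z) hη (hq.sub_const _) (by
    intro w hw
    have := (Complex.re_le_norm _).trans (hb w hw)
    simp only [Set.mem_ofPred_eq, sub_re, ofReal_re]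
    linarith) one_pos (by simp; linarith) (by simp [hd])
  have h2 : ‖dslope ω 0 z - y‖ ≤ 2 * η := by
    refine this.trans ?_
    rw [div_le_iff₀ (by linarith)]
    nlinarith
  calc ‖dslope ω 0 z - 1‖ = ‖(dslope ω 0 z - y) + ((y - 1 : ℝ) : ℂ)‖ := by push_cast; ring_nf
    _ ≤ 2 * η + η := by
      refine (norm_add_le _ _).trans (add_le_add h2 ?_)
      rw [Complex.norm_real, Real.norm_eq_abs, abs_le]; constructor <;> linarith
    _ = _ := by ring

/-- The Cauchy estimates on the circle of radius `1 / 2`. -/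
lemma iter_le {F : ℂ → ℂ} (hF : DifferentiableOn ℂ F (ball 0 1)) {s : ℝ} (h : ∀ z : ℂ, ‖z‖ = 1 / 2 → ‖F z‖ ≤ s) (i : ℕ) :
    ‖iteratedDeriv i F 0 / i.factorial‖ ≤ s * 2 ^ i := by
  have hd : DiffContOnCl ℂ F (ball 0 (1/2)) :=
    (hF.mono (closedBall_subset_ball (by norm_num))).diffContOnCl_ball subset_rfl
  have := Complex.norm_iteratedDeriv_le_of_forall_mem_sphere_norm_le (R := 1/2) i (by norm_num) hd (fun z hz => h z (by simpa using hz))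
  have hf : (0:ℝ) < i.factorial := by exact_mod_cast i.factorial_pos
  rw [norm_div, Complex.norm_natCast, div_le_iff₀ hf]
  refine this.trans (le_of_eq ?_)
  rw [one_div, inv_pow, div_inv_eq_mul]; ring

/-- A univalent self-map with derivative close to `1` has jets close to those of the identity. -/
lemma jets_near {ω : ℂ → ℂ} (h : Uni ω) {y η : ℝ} (hη : 0 < η) (hη1 : η ≤ 1 / 6) (hd : deriv ω 0 = y) (hy : 1 - η ≤ y) (hy1 : y ≤ 1) (m : ℕ) :
    (∃ L, Jet m (Lg ω) L ∧ ∀ i ≤ m, ‖L.coeff i‖ ≤ 5 * η * 2 ^ i) ∧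
    (∃ W, Jet m ω W ∧ W.coeff 0 = 0 ∧ ∀ i, ‖W.coeff i - (X : ℂ[X]).coeff i‖ ≤ 3 * η * 2 ^ i) := by
  have hq : DifferentiableOn ℂ (dslope ω 0) (ball 0 1) :=
    (differentiableOn_dslope (isOpen_ball.mem_nhds (mem_ball_self one_pos))).2 h.diff
  have hn : ∀ z : ℂ, ‖z‖ ≤ 1 / 2 → ‖dslope ω 0 z - 1‖ ≤ 3 * η := fun z hz => dslope_near_one h hη hd hy hy1 hz
  have hball : ∀ {F : ℂ → ℂ}, DifferentiableOn ℂ F (ball 0 1) → AnalyticAt ℂ F 0 := fun hF =>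
    hF.analyticAt (isOpen_ball.mem_nhds (mem_ball_self one_pos))
  constructor
  · have hLd : DifferentiableOn ℂ (Lg ω) (closedBall 0 (1/2)) := by
      refine DifferentiableOn.clog (hq.mono (closedBall_subset_ball (by norm_num))) ?_
      intro z hz
      have h1 := hn z (by simpa using hz)
      left
      have := Complex.abs_re_le_norm (dslope ω 0 z - 1)
      have h2 := abs_le.1 (this.trans h1)
      simp at h2
      linarith
    have hLa : AnalyticAt ℂ (Lg ω) 0 := hLd.analyticAt (closedBall_mem_nhds _ (by norm_num))
    refine ⟨_, Jet.of_analytic m hLa, fun i hi => ?_⟩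
    rw [Jet.coeff_eq hLa (Jet.of_analytic m hLa) hi]
    have hC : ∀ z ∈ sphere (0:ℂ) (1/2), ‖Lg ω z‖ ≤ 5 * η := by
      intro z hz
      have h1 := hn z (by simp at hz; simp [hz])
      have := Complex.norm_log_one_add_half_le_self (z := dslope ω 0 z - 1) (h1.trans (by linarith))
      rw [add_sub_cancel] at this
      refine this.trans (by linarith)
    have := Complex.norm_iteratedDeriv_le_of_forall_mem_sphere_norm_le (R := 1/2) i (by norm_num) (hLd.diffContOnCl_ball subset_rfl) hC
    have hf : (0:ℝ) < i.factorial := by exact_mod_cast i.factorial_pos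
    rw [norm_div, Complex.norm_natCast, div_le_iff₀ hf]
    refine this.trans (le_of_eq ?_)
    rw [one_div, inv_pow, div_inv_eq_mul]; ring
  · have hDd : DifferentiableOn ℂ (fun z => ω z - z) (ball 0 1) := h.diff.sub differentiableOn_id
    have hDa := hball hDd
    have hJ := Jet.of_analytic m hDa
    refine ⟨(∑ i ∈ Finset.range (m + 1), C (iteratedDeriv i (fun z => ω z - z) 0 / i.factorial) * X ^ i) + X, ?_, ?_, ?_⟩
    · have := hJ.add (Jet.poly m X)
      refine this.congr (Eventually.of_forall fun z => ?_)
      simp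
    · simp [h.zero]
    · intro i
      rw [coeff_add, add_sub_cancel_right, finsetSum_coeff]
      simp only [coeff_C_mul, coeff_X_pow, mul_ite, mul_one, mul_zero]
      rw [Finset.sum_ite_eq]
      split_ifs
      · refine iter_le hDd (fun z hz => ?_) i
        have e : ω z - z = z * (dslope ω 0 z - 1) := by
          have := sub_smul_dslope ω 0 z
          simp only [sub_zero, smul_eq_mul, h.zero] at this
          rw [mul_sub, this, mul_one]
        rw [e, norm_mul, hz]
        have := hn z hz.le
        nlinarith [norm_nonneg (dslope ω 0 z - 1)]
      · simp; positivity

lemma pow_coeff_tendsto {ι : Type*} {l : Filter ι} {W : ι → ℂ[X]} (h : ∀ i, Tendsto (fun N => (W N).coeff i) l (𝓝 ((X : ℂ[X]).coeff i))) (k : ℕ) :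
    ∀ i, Tendsto (fun N => (W N ^ k).coeff i) l (𝓝 (((X : ℂ[X]) ^ k).coeff i)) := by
  induction k with
  | zero => intro i; simpa only [pow_zero] using tendsto_const_nhds
  | succ k ih =>
    intro i
    simp only [pow_succ, coeff_mul]
    exact tendsto_finsetSum _ fun p _ => (ih _).mul (h _)

/-- The logarithmic coefficients of a univalent self-map are limits of end points of chains, with step
size tending to `0` and final time `y0 / (1 - ε) ^ n` tending to `1`. -/
lemma chain_limit (m : ℕ) {ω0 : ℂ → ℂ} (hu : Uni ω0) {y0 : ℝ} (hy : 0 < y0) (hω0 : deriv ω0 0 = y0) :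
    ∃ (ε : ℕ → ℝ) (n : ℕ → ℕ) (κ : ℕ → ℕ → ℂ), (∀ N, 0 < ε N) ∧ (∀ N, ε N ≤ 1 / 2) ∧ Tendsto ε atTop (𝓝 0) ∧
      (∀ N j, ‖κ N j‖ = 1) ∧ (∀ N, y0 ≤ (1 - ε N) ^ n N) ∧
      Tendsto (fun N => y0 / (1 - ε N) ^ n N) atTop (𝓝 1) ∧
      ∀ A, Jet m (Lg ω0) A → ∀ i, 1 ≤ i → i ≤ m → Tendsto (fun N => chainC (1 - ε N) (κ N) (n N) i) atTop (𝓝 (A.coeff i)) := by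
  -- The parameter `b` of the Koebe step tends to `1`.
  set b : ℕ → ℝ := fun N => 1 - 1 / ((N : ℝ) + 3) with hb
  have hb0 : ∀ N, 2 / 3 ≤ b N := fun N => by
    have : 1 / ((N : ℝ) + 3) ≤ 1 / 3 := one_div_le_one_div_of_le (by norm_num) (by linarith [(Nat.cast_nonneg N : (0:ℝ) ≤ N)])
    simp only [hb]; linarith
  have hb1 : ∀ N, b N < 1 := fun N => by
    have : 0 < 1 / ((N : ℝ) + 3) := by positivity
    simp only [hb]; linarith
  have hbt : Tendsto b atTop (𝓝 1) := by
    have h1 : Tendsto (fun N : ℕ => (N : ℝ) + 3) atTop atTop := tendsto_atTop_add_const_right _ _ tendsto_natCast_atTop_atTop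
    have := (tendsto_const_nhds (x := (1:ℝ))).sub h1.inv_tendsto_atTop
    simpa [hb, one_div] using this
  set β : ℕ → ℝ := fun N => 2 * b N / (1 + b N ^ 2) with hβ
  have hex := fun N => reach_end (b := b N) (by linarith [hb0 N]) (hb1 N) (hβ := (rfl : β N = _)) m hu hy hω0
  choose n κ ω hR hend using hex
  have hβ0 : ∀ N, 1 / 2 ≤ β N := fun N => by
    simp only [hβ]; rw [le_div_iff₀ (by positivity)]; nlinarith [hb0 N, hb1 N]
  have hβ1 : ∀ N, β N < 1 := fun N => by
    simp only [hβ]; rw [div_lt_iff₀ (by positivity)]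
    have : 0 < (1 - b N) ^ 2 := by have := hb1 N; have : 0 < 1 - b N := by linarith
                                   positivity
    nlinarith
  have hβt : Tendsto β atTop (𝓝 1) := by
    have := (hbt.const_mul 2).div ((tendsto_const_nhds (x := (1:ℝ))).add (hbt.pow 2)) (by norm_num)
    norm_num at this
    exact this
  have e1 : ∀ N, 1 - (1 - β N) = β N := fun N => by ring
  have hle : ∀ N, y0 ≤ β N ^ n N := fun N => Reach.le (by linarith [hβ0 N]) hy hω0 (hR N)
  have hde : ∀ N, deriv (ω N) 0 = ((y0 / β N ^ n N : ℝ) : ℂ) := fun N => Reach.deriv_eq (by linarith [hβ0 N]) hω0 (hR N)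
  have hy1 : ∀ N, y0 / β N ^ n N ≤ 1 := fun N => by
    have : 0 < β N := by linarith [hβ0 N]
    rw [div_le_one (by positivity)]; exact hle N
  have hyt : Tendsto (fun N => y0 / β N ^ n N) atTop (𝓝 1) := by
    refine tendsto_of_tendsto_of_tendsto_of_le_of_le (g := fun N => b N ^ 2) (h := fun _ => 1) ?_ tendsto_const_nhds (fun N => hend N) hy1
    simpa using hbt.pow 2
  refine ⟨fun N => 1 - β N, n, κ, fun N => by linarith [hβ1 N], fun N => by linarith [hβ0 N], ?_, fun N j => (hR N).unim j, ?_, ?_, ?_⟩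
  · simpa using (tendsto_const_nhds (x := (1:ℝ))).sub hβt
  · simpa only [e1] using hle
  · simpa only [e1] using hyt
  intro A hA i hi1 him
  simp only [e1]
  obtain ⟨B, hB0, hB⟩ := chain_bound m y0 hy
  have hc : ∀ N k, k ∈ Finset.range m → ‖chainC (β N) (κ N) (n N) (k + 1)‖ ≤ B := by
    intro N k hk
    have := hB (1 - β N) (by linarith [hβ1 N]) (by linarith [hβ0 N]) (n N) (by rw [e1]; exact hle N) (κ N) (fun j => (hR N).unim j) (n N) le_rfl
    rw [e1] at this
    refine le_trans ?_ this
    exact Finset.single_le_sum (f := fun k => ‖chainC (β N) (κ N) (n N) (k + 1)‖) (fun _ _ => norm_nonneg _) hk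
  -- The jets of the last map of each chain, close to those of the identity.
  set η : ℕ → ℝ := fun N => 1 - b N ^ 2 with hη
  have hηt : Tendsto η atTop (𝓝 0) := by
    have := (tendsto_const_nhds (x := (1:ℝ))).sub (hbt.pow 2)
    simpa [hη] using this
  have hη0 : ∀ N, 0 < η N := fun N => by simp only [hη]; nlinarith [hb0 N, hb1 N]
  have hjets : ∀ N, ∃ L W : ℂ[X], η N ≤ 1 / 6 → (Jet m (Lg (ω N)) L ∧ (∀ i ≤ m, ‖L.coeff i‖ ≤ 5 * η N * 2 ^ i) ∧
      Jet m (ω N) W ∧ W.coeff 0 = 0 ∧ ∀ i, ‖W.coeff i - (X : ℂ[X]).coeff i‖ ≤ 3 * η N * 2 ^ i) := by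
    intro N
    by_cases h6 : η N ≤ 1 / 6
    · obtain ⟨⟨L, hL, hL2⟩, W, hW, hW0, hW2⟩ := jets_near (hR N).uni (hη0 N) h6 (hde N) (by simp only [hη]; linarith [hend N]) (hy1 N) m
      exact ⟨L, W, fun _ => ⟨hL, hL2, hW, hW0, hW2⟩⟩
    · exact ⟨0, 0, fun h => absurd h h6⟩
  choose L W hLW using hjets
  have hev : ∀ᶠ N in atTop, η N ≤ 1 / 6 := hηt.eventually (ge_mem_nhds (by norm_num))
  have hLt : Tendsto (fun N => (L N).coeff i) atTop (𝓝 0) := by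
    refine squeeze_zero_norm' (a := fun N => 5 * η N * 2 ^ i) ?_ (by simpa using (hηt.const_mul 5).mul_const (2 ^ i))
    filter_upwards [hev] with N hN
    exact (hLW N hN).2.1 i him
  have hWt : ∀ i, Tendsto (fun N => (W N).coeff i) atTop (𝓝 ((X : ℂ[X]).coeff i)) := by
    intro i
    rw [tendsto_iff_norm_sub_tendsto_zero]
    refine squeeze_zero_norm' (a := fun N => 3 * η N * 2 ^ i) ?_ (by simpa using (hηt.const_mul 3).mul_const (2 ^ i))
    filter_upwards [hev] with N hN
    rw [norm_norm]
    exact (hLW N hN).2.2.2.2 i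
  -- Comparison of coefficients in `Lg ω0 = F ∘ ω_N + Lg ω_N`.
  have key : ∀ᶠ N in atTop, A.coeff i - chainC (β N) (κ N) (n N) i =
      ∑ k ∈ Finset.range m, chainC (β N) (κ N) (n N) (k + 1) * ((W N ^ (k + 1)).coeff i - ((X : ℂ[X]) ^ (k + 1)).coeff i) + (L N).coeff i := by
    filter_upwards [hev] with N hN
    obtain ⟨hL, -, hW, hW0, -⟩ := hLW N hN
    obtain ⟨F, P, hF, hP, hg⟩ := (hR N).germ
    set P' : ℂ[X] := ∑ k ∈ Finset.range (m + 1), C (P.coeff k) * X ^ k with hP'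
    have hF' : Jet m F P' := hF.of_coeff fun k hk => by
      rw [hP', finsetSum_coeff]
      simp only [coeff_C_mul, coeff_X_pow, mul_ite, mul_one, mul_zero]
      rw [Finset.sum_ite_eq, if_pos (Finset.mem_range.2 (by omega))]
    have hJ := (hF'.comp hW hW0).add hL
    have hJ2 : Jet m (Lg ω0) (P'.comp (W N) + L N) := hJ.congr (by
      filter_upwards [hg] with z hz; exact hz.symm)
    rw [hA.unique hJ2 him, coeff_add, add_sub_right_comm]
    congr 1
    rw [hP', Polynomial.sum_comp, finsetSum_coeff, Finset.sum_range_succ']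
    simp only [mul_comp, C_comp, pow_comp, X_comp, coeff_C_mul, pow_zero, mul_one, coeff_C, mul_sub, Finset.sum_sub_distrib]
    rw [if_neg (by omega), add_zero]
    congr 1
    · refine Finset.sum_congr rfl fun k hk => ?_
      rw [hP (k+1) (by omega) (by have := Finset.mem_range.1 hk; omega)]
    · obtain ⟨j, rfl⟩ : ∃ j, i = j + 1 := ⟨i - 1, by omega⟩
      simp only [coeff_X_pow, mul_ite, mul_one, mul_zero, add_left_inj]
      rw [Finset.sum_ite_eq, if_pos (Finset.mem_range.2 (by omega))]
  have hsum : Tendsto (fun N => ∑ k ∈ Finset.range m, chainC (β N) (κ N) (n N) (k + 1) * ((W N ^ (k + 1)).coeff i - ((X : ℂ[X]) ^ (k + 1)).coeff i) + (L N).coeff i) atTop (𝓝 0) := by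
    have h1 : Tendsto (fun N => ∑ k ∈ Finset.range m, chainC (β N) (κ N) (n N) (k + 1) * ((W N ^ (k + 1)).coeff i - ((X : ℂ[X]) ^ (k + 1)).coeff i)) atTop (𝓝 (∑ k ∈ Finset.range m, 0)) := by
      refine tendsto_finsetSum _ fun k hk => ?_
      have h2 : Tendsto (fun N => ((W N ^ (k + 1)).coeff i - ((X : ℂ[X]) ^ (k + 1)).coeff i)) atTop (𝓝 0) := by
        simpa using (pow_coeff_tendsto hWt (k+1) i).sub_const (((X : ℂ[X]) ^ (k + 1)).coeff i)
      have h3 : Tendsto (fun N => B * ‖(W N ^ (k + 1)).coeff i - ((X : ℂ[X]) ^ (k + 1)).coeff i‖) atTop (𝓝 0) := by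
        simpa using h2.norm.const_mul B
      refine squeeze_zero_norm (fun N => ?_) h3
      rw [norm_mul]
      exact mul_le_mul_of_nonneg_right (hc N k hk) (norm_nonneg _)
    simpa using h1.add hLt
  have hfin : Tendsto (fun N => A.coeff i - chainC (β N) (κ N) (n N) i) atTop (𝓝 0) :=
    hsum.congr' (by filter_upwards [key] with N hN; exact hN.symm)
  have := (tendsto_const_nhds (x := A.coeff i)).sub hfin
  simpa using this

end

/-! ### From chains to univalent functions -/

section

open Asymptotics Filter Topology Polynomial

lemma EE_tendsto {ι : Type*} {l : Filter ι} (m : ℕ) (T : ℕ → ℝ[X]) {y : ι → ℝ} {y' : ℝ} {c : ι → ℕ → ℂ} {c' : ℕ → ℂ}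
    (hy : Tendsto y l (𝓝 y')) (hc : ∀ i, 1 ≤ i → i ≤ m → Tendsto (fun N => c N i) l (𝓝 (c' i))) :
    Tendsto (fun N => EE m T (y N) (c N)) l (𝓝 (EE m T y' c')) := by
  unfold EE
  refine tendsto_finsetSum _ fun k hk => ?_
  have hk' := Finset.mem_range.1 hk
  exact (((T (k + 1)).continuous.tendsto y').comp hy).mul ((((hc (k+1) (by omega) (by omega)).norm.pow 2).const_mul _).sub_const _)

lemma NN_tendsto {ι : Type*} {l : Filter ι} (m : ℕ) {c : ι → ℕ → ℂ} {c' : ℕ → ℂ} (d : ℕ → ℂ)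
    (hc : ∀ i, 1 ≤ i → i ≤ m → Tendsto (fun N => c N i) l (𝓝 (c' i))) :
    Tendsto (fun N => NN m (c N - d)) l (𝓝 (NN m (c' - d))) := by
  unfold NN
  refine tendsto_finsetSum _ fun k hk => ?_
  have hk' := Finset.mem_range.1 hk
  exact ((hc (k+1) (by omega) (by omega)).sub_const _).norm

/-- The energy inequality for a univalent self-map, as the limit of `chain_nonstrict`. -/
lemma EE_uni_nonpos {m : ℕ} {Q T : ℕ → ℝ[X]} (h : DBSystem m Q T) {ω0 : ℂ → ℂ} (hu : Uni ω0) {y0 : ℝ} (hy : 0 < y0) (hω0 : deriv ω0 0 = y0)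
    {A : ℂ[X]} (hA : Jet m (Lg ω0) A) : EE m T 1 A.coeff ≤ 0 := by
  obtain ⟨C, -, hC⟩ := chain_nonstrict h y0 hy
  obtain ⟨ε, n, κ, h0, h1, ht, hκ, hn, hyt, hc⟩ := chain_limit m hu hy hω0
  have hE := EE_tendsto m T hyt (fun i hi him => hc A hA i hi him)
  have hr : Tendsto (fun N => C * ε N) atTop (𝓝 0) := by simpa using ht.const_mul C
  exact le_of_tendsto_of_tendsto' hE hr fun N => hC (ε N) (h0 N) (h1 N) (n N) (hn N) (κ N) (hκ N)

/-- The strict energy inequality near a sequence `cs` that admits no direction of zero dissipation.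
The gap `G` is uniform over all maps, so that it survives the limit `r → 1`. -/
lemma EE_uni_neg {m : ℕ} {cs : ℕ → ℂ} {δ : ℝ} (hδ0 : 0 < δ)
    (hδ : ∀ κ : ℂ, ‖κ‖ = 1 → δ ≤ ∑ k ∈ Finset.range m,
      ‖bb (fun k => κ⁻¹ ^ k * cs k) (k + 1) + bb (fun k => κ⁻¹ ^ k * cs k) k + 2‖) :
    ∃ G ρ : ℝ, 0 < G ∧ 0 < ρ ∧ ∀ {ω0 : ℂ → ℂ} (_ : Uni ω0) {y0 : ℝ} (_ : 0 < y0) (_ : y0 ≤ 1 / 4) (_ : deriv ω0 0 = y0)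
      {A : ℂ[X]} (_ : Jet m (Lg ω0) A), NN m (A.coeff - cs) < ρ →
      EE m (fun k => ∑ i ∈ Finset.range (m + 1), TT i k) 1 A.coeff ≤ - G := by
  obtain ⟨G, ρ, hG, hρ, H⟩ := chain_strict m cs δ hδ0 hδ
  refine ⟨G, ρ / 2, hG, by positivity, ?_⟩
  intro ω0 hu y0 hy hy4 hω0 A hA hN
  obtain ⟨C, ε1, -, hε1, hC⟩ := H y0 hy hy4
  obtain ⟨ε, n, κ, h0, h1, ht, hκ, hn, hyt, hc⟩ := chain_limit m hu hy hω0
  have hE := EE_tendsto m (fun k => ∑ i ∈ Finset.range (m + 1), TT i k) hyt (fun i hi him => hc A hA i hi him)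
  have hNt := NN_tendsto m cs (fun i hi him => hc A hA i hi him)
  have hr : Tendsto (fun N => C * ε N - G) atTop (𝓝 (-G)) := by simpa using (ht.const_mul C).sub_const G
  refine le_of_tendsto_of_tendsto hE hr ?_
  filter_upwards [hNt.eventually (gt_mem_nhds hN), hyt.eventually (le_mem_nhds (show (3:ℝ)/4 < 1 by norm_num)), ht.eventually (ge_mem_nhds hε1)] with N a1 a2 a3
  exact hC (ε N) (h0 N) a3 (n N) (hn N) a2 (κ N) (hκ N) a1.le

/-- The dilation `f (r * z) / M` is a univalent self-map for `M` large. The choice `M ≥ 4` gives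
derivative at most `1 / 4`. -/
lemma exists_dilation {f g : ℂ → ℂ} (hf : DifferentiableOn ℂ f (ball 0 1)) (hinj : Set.InjOn f (ball 0 1)) (hf0 : f 0 = 0) (hf1 : deriv f 0 = 1)
    (hg : AnalyticAt ℂ g 0) (hg0 : g 0 = 0) (hgf : ∀ z ∈ ball (0:ℂ) 1, z ≠ 0 → Complex.exp (g z) = f z / z) {r : ℝ} (hr0 : 0 < r) (hr1 : r < 1) :
    ∃ (ω : ℂ → ℂ) (y0 : ℝ), Uni ω ∧ 0 < y0 ∧ y0 ≤ 1 / 4 ∧ deriv ω 0 = y0 ∧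
      ∀ m, ∃ A, Jet m (Lg ω) A ∧ ∀ i, 1 ≤ i → i ≤ m → A.coeff i = (r : ℂ) ^ i * (iteratedDeriv i g 0 / i.factorial) := by
  obtain ⟨B, hB⟩ := (isCompact_closedBall (0:ℂ) r).exists_bound_of_continuousOn (hf.continuousOn.mono (closedBall_subset_ball hr1))
  set M : ℝ := max 4 (B + 1) with hM
  have hM4 : 4 ≤ M := le_max_left _ _
  have hMB : B < M := lt_of_lt_of_le (by linarith) (le_max_right _ _)
  have hM0 : 0 < M := by linarith
  have hMc : (M : ℂ) ≠ 0 := by exact_mod_cast hM0.ne'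
  have hrc : (r : ℂ) ≠ 0 := by exact_mod_cast hr0.ne'
  have hmaps : Set.MapsTo (fun z : ℂ => (r : ℂ) * z) (ball 0 1) (ball 0 1) := by
    intro z hz
    simp only [mem_ball_zero_iff, norm_mul, Complex.norm_real, Real.norm_eq_abs, abs_of_pos hr0] at *
    nlinarith [norm_nonneg z]
  have hder : HasDerivAt (fun z => f (r * z) / M) ((r / M : ℝ) : ℂ) 0 := by
    have h1 : HasDerivAt f 1 ((r:ℂ) * 0) := by
      rw [mul_zero, ← hf1]
      exact (hf.differentiableAt (isOpen_ball.mem_nhds (mem_ball_self one_pos))).hasDerivAt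
    have h2 : HasDerivAt (fun z : ℂ => (r:ℂ) * z) r 0 := by simpa using (hasDerivAt_id (0:ℂ)).const_mul (r:ℂ)
    have := (h1.comp 0 h2).div_const (M:ℂ)
    simpa using this
  refine ⟨fun z => f (r * z) / M, r / M, ⟨?_, ?_, ?_, by simp [hf0]⟩, by positivity, ?_, hder.deriv, fun m => ?_⟩
  · exact (hf.comp (by fun_prop) hmaps).div_const _
  · intro z hz w hw h
    have h2 : f (r * z) = f (r * w) := by
      have := congrArg (· * (M:ℂ)) h
      simpa [div_mul_cancel₀ _ hMc] using this
    exact mul_left_cancel₀ hrc (hinj (hmaps hz) (hmaps hw) h2)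
  · intro z hz
    have := hB (r * z) (by
      simp only [mem_ball_zero_iff, mem_closedBall_zero_iff, norm_mul, Complex.norm_real, Real.norm_eq_abs, abs_of_pos hr0] at *
      nlinarith [norm_nonneg z])
    simp only [mem_ball_zero_iff, norm_div, Complex.norm_real, Real.norm_eq_abs, abs_of_pos hM0]
    rw [div_lt_one hM0]; linarith
  · rw [div_le_iff₀ hM0]; linarith
  · have hJg := Jet.of_analytic m hg
    set P := (∑ i ∈ Finset.range (m + 1), C (iteratedDeriv i g 0 / i.factorial) * X ^ i : ℂ[X])
    have hJ := (Jet.const m ((Real.log (r / M) : ℝ) : ℂ)).add (hJg.comp (Jet.poly m (C (r:ℂ) * X)) (by simp))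
    refine ⟨_, hJ.congr ?_, fun i hi him => ?_⟩
    · have hct : Tendsto (fun z : ℂ => g (r * z)) (𝓝 0) (𝓝 0) := by
        have : ContinuousAt (fun z : ℂ => g (r * z)) 0 := by
          refine ContinuousAt.comp (g := g) ?_ (by fun_prop)
          simpa using hg.continuousAt
        simpa [ContinuousAt, hg0] using this
      have him : Tendsto (fun z : ℂ => (g (r * z)).im) (𝓝 0) (𝓝 0) := by
        simpa [Function.comp_def] using (Complex.continuous_im.tendsto (0:ℂ)).comp hct
      filter_upwards [isOpen_ball.mem_nhds (mem_ball_self (x := (0:ℂ)) one_pos), him.eventually (gt_mem_nhds Real.pi_pos), him.eventually (lt_mem_nhds (neg_neg_iff_pos.2 Real.pi_pos))] with z hz h1 h2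
      have hd : dslope (fun z => f (r * z) / M) 0 z = ((r / M : ℝ) : ℂ) * Complex.exp (g (r * z)) := by
        by_cases hz0 : z = 0
        · subst hz0
          rw [dslope_same, hder.deriv]; simp [hg0]
        · rw [dslope_of_ne _ hz0, slope_def_field, hgf _ (hmaps hz) (mul_ne_zero hrc hz0)]
          simp only [mul_zero, hf0]
          push_cast
          field_simp
          simp only [sub_zero]
          ring
      simp only [Lg, hd]
      rw [Complex.log_ofReal_mul (by positivity) (Complex.exp_ne_zero _), Complex.log_exp h2 h1.le]
      simp
    · rw [coeff_add, coeff_C, if_neg (by omega), zero_add, comp_C_mul_X_coeff, Jet.coeff_eq hg hJg him, mul_comm]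

end

/-! ### The Milin inequalities and the equality case -/

section

open Asymptotics Filter Topology Polynomial

/-- The Milin functional `∑_{k=1}^{m} (m + 1 - k) * (k * |c_k| ^ 2 - 4 / k)` of the coefficients
`c_k = 2 γ_k` of `log (f z / z)`, with the summation index shifted by one. -/
noncomputable def Mil (m : ℕ) (c : ℕ → ℂ) : ℝ :=
  ∑ k ∈ Finset.range m, ((m : ℝ) - k) * (((k : ℝ) + 1) * ‖c (k + 1)‖ ^ 2 - 4 / ((k : ℝ) + 1))

lemma EE_TT_one (M m : ℕ) (h : m ≤ M) (c : ℕ → ℂ) : EE M (TT m) 1 c = Mil m c := by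
  unfold EE Mil
  rw [← Finset.sum_subset (Finset.range_subset_range.2 h)]
  · refine Finset.sum_congr rfl fun k hk => ?_
    rw [TT_one]
    have := Finset.mem_range.1 hk
    rw [Nat.add_sub_add_right, Nat.cast_sub this.le]
  · intro k _ hk
    have : m ≤ k := by simpa using hk
    rw [TT_one, Nat.add_sub_add_right, Nat.sub_eq_zero_of_le this]; simp

lemma EE_sum_one (m : ℕ) (c : ℕ → ℂ) : EE m (fun k => ∑ i ∈ Finset.range (m + 1), TT i k) 1 c = ∑ i ∈ Finset.range (m + 1), Mil i c := by
  have h1 : ∀ i ∈ Finset.range (m + 1), Mil i c = EE m (TT i) 1 c := fun i hi =>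
    (EE_TT_one m i (by have := Finset.mem_range.1 hi; omega) c).symm
  rw [Finset.sum_congr rfl h1]
  unfold EE
  rw [Finset.sum_comm]
  refine Finset.sum_congr rfl fun k _ => ?_
  rw [eval_finsetSum, Finset.sum_mul]

/-- Radii in `(0, 1)` tending to `1`. -/
noncomputable def rad (N : ℕ) : ℝ := 1 - 1 / ((N : ℝ) + 2)

lemma rad_pos (N : ℕ) : 0 < rad N := by
  have : 1 / ((N : ℝ) + 2) ≤ 1 / 2 := one_div_le_one_div_of_le (by norm_num) (by linarith [(Nat.cast_nonneg N : (0:ℝ) ≤ N)])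
  unfold rad; linarith

lemma rad_lt (N : ℕ) : rad N < 1 := by
  have : 0 < 1 / ((N : ℝ) + 2) := by positivity
  unfold rad; linarith

lemma rad_tendsto : Tendsto rad atTop (𝓝 1) := by
  have h1 : Tendsto (fun N : ℕ => (N : ℝ) + 2) atTop atTop := tendsto_atTop_add_const_right _ _ tendsto_natCast_atTop_atTop
  have := (tendsto_const_nhds (x := (1:ℝ))).sub h1.inv_tendsto_atTop
  have e : rad = fun N : ℕ => 1 - ((N : ℝ) + 2)⁻¹ := by funext N; simp [rad]
  rw [e]
  simpa using this

lemma rad_coeff_tendsto (c : ℕ → ℂ) (i : ℕ) : Tendsto (fun N => (rad N : ℂ) ^ i * c i) atTop (𝓝 (c i)) := by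
  have h : Tendsto (fun N => (rad N : ℂ)) atTop (𝓝 ((1:ℝ):ℂ)) := (Complex.continuous_ofReal.tendsto 1).comp rad_tendsto
  have := (h.pow i).mul_const (c i)
  simpa using this

/-- The Milin inequalities for univalent functions, due to de Branges. -/
lemma milin {f g : ℂ → ℂ} (hf : DifferentiableOn ℂ f (ball 0 1)) (hinj : Set.InjOn f (ball 0 1)) (hf0 : f 0 = 0) (hf1 : deriv f 0 = 1)
    (hg : AnalyticAt ℂ g 0) (hg0 : g 0 = 0) (hgf : ∀ z ∈ ball (0:ℂ) 1, z ≠ 0 → Complex.exp (g z) = f z / z) (m : ℕ) : Mil m (fun i => iteratedDeriv i g 0 / i.factorial) ≤ 0 := by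
  have hex := fun N => exists_dilation hf hinj hf0 hf1 hg hg0 hgf (rad_pos N) (rad_lt N)
  choose ω y0 hu hy hy4 hd hA using hex
  choose A hA hAc using fun N => hA N m
  rw [← EE_TT_one m m le_rfl]
  have hE := EE_tendsto (l := atTop) m (TT m) (y := fun _ => 1) (y' := 1) (c := fun N => (A N).coeff) (c' := fun i => iteratedDeriv i g 0 / i.factorial) tendsto_const_nhds (by
    intro i hi him
    simp only [hAc _ i hi him]
    exact rad_coeff_tendsto (fun i => iteratedDeriv i g 0 / i.factorial) i)
  exact le_of_tendsto' hE fun N => EE_uni_nonpos (TT_system m) (hu N) (hy N) (hd N) (hA N)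

/-- Some Milin inequality is strict unless the coefficients admit, at every order, a direction of zero
dissipation. -/
lemma milin_strict {f g : ℂ → ℂ} (hf : DifferentiableOn ℂ f (ball 0 1)) (hinj : Set.InjOn f (ball 0 1)) (hf0 : f 0 = 0) (hf1 : deriv f 0 = 1)
    (hg : AnalyticAt ℂ g 0) (hg0 : g 0 = 0) (hgf : ∀ z ∈ ball (0:ℂ) 1, z ≠ 0 → Complex.exp (g z) = f z / z) {m : ℕ} {δ : ℝ} (hδ0 : 0 < δ)
    (hδ : ∀ κ : ℂ, ‖κ‖ = 1 → δ ≤ ∑ k ∈ Finset.range m,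
      ‖bb (fun k => κ⁻¹ ^ k * (iteratedDeriv k g 0 / k.factorial)) (k + 1) + bb (fun k => κ⁻¹ ^ k * (iteratedDeriv k g 0 / k.factorial)) k + 2‖) :
    ∃ i, Mil i (fun i => iteratedDeriv i g 0 / i.factorial) < 0 := by
  have hex := fun N => exists_dilation hf hinj hf0 hf1 hg hg0 hgf (rad_pos N) (rad_lt N)
  choose ω y0 hu hy hy4 hd hA using hex
  choose A hA hAc using fun N => hA N m
  have hAt : ∀ i, 1 ≤ i → i ≤ m → Tendsto (fun N => (A N).coeff i) atTop (𝓝 (iteratedDeriv i g 0 / i.factorial)) := by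
    intro i hi him
    simp only [hAc _ i hi him]
    exact rad_coeff_tendsto (fun i => iteratedDeriv i g 0 / i.factorial) i
  obtain ⟨G, ρ, hG, hρ, H⟩ := EE_uni_neg (cs := fun k => iteratedDeriv k g 0 / k.factorial) hδ0 hδ
  have hE := EE_tendsto (l := atTop) m (fun k => ∑ i ∈ Finset.range (m + 1), TT i k) (y := fun _ => 1) (y' := 1) (c := fun N => (A N).coeff) (c' := fun i => iteratedDeriv i g 0 / i.factorial) tendsto_const_nhds hAt
  have hN := NN_tendsto (l := atTop) m (c := fun N => (A N).coeff) (c' := fun i => iteratedDeriv i g 0 / i.factorial) (fun i => iteratedDeriv i g 0 / i.factorial) hAt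
  rw [sub_self] at hN
  have h0 : NN m 0 = 0 := by simp [NN]
  rw [h0] at hN
  have hle : EE m (fun k => ∑ i ∈ Finset.range (m + 1), TT i k) 1 (fun i => iteratedDeriv i g 0 / i.factorial) ≤ -G := by
    refine le_of_tendsto hE ?_
    filter_upwards [hN.eventually (gt_mem_nhds hρ)] with N h
    exact H (hu N) (hy N) (hy4 N) (hd N) (hA N) h
  rw [EE_sum_one] at hle
  by_contra hcon
  push Not at hcon
  have := Finset.sum_nonneg fun i (_ : i ∈ Finset.range (m+1)) => hcon i
  linarith

/-- Either at some order no direction `κ` makes all squares in the dissipation vanish, with a uniform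
lower bound by compactness of the circle, or the sequence is that of a rotation of the Koebe function.
In the second case the equation of index `0` determines `κ` independently of the order. -/
lemma gap_or_extremal (c : ℕ → ℂ) :
    (∃ m, ∃ δ : ℝ, 0 < δ ∧ ∀ κ : ℂ, ‖κ‖ = 1 → δ ≤ ∑ k ∈ Finset.range m,
      ‖bb (fun k => κ⁻¹ ^ k * c k) (k + 1) + bb (fun k => κ⁻¹ ^ k * c k) k + 2‖) ∨
    ∃ α : ℂ, ‖α‖ = 1 ∧ ∀ k, 1 ≤ k → c k = 2 * α ^ k / k := by
  by_cases h : ∃ m, ∀ κ : ℂ, ‖κ‖ = 1 → 0 < ∑ k ∈ Finset.range m,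
      ‖bb (fun k => κ⁻¹ ^ k * c k) (k + 1) + bb (fun k => κ⁻¹ ^ k * c k) k + 2‖
  · left
    obtain ⟨m, hm⟩ := h
    have hcont : ContinuousOn (fun κ : ℂ => ∑ k ∈ Finset.range m,
      ‖bb (fun k => κ⁻¹ ^ k * c k) (k + 1) + bb (fun k => κ⁻¹ ^ k * c k) k + 2‖) (sphere 0 1) := by
      have hinv : ContinuousOn (fun κ : ℂ => κ⁻¹) (sphere 0 1) := continuousOn_inv₀.mono fun κ hκ => by
        intro h0; simp only [Set.mem_singleton_iff] at h0; subst h0; simp at hκ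
      have hbb : ∀ j, ContinuousOn (fun κ : ℂ => bb (fun k => κ⁻¹ ^ k * c k) j) (sphere 0 1) := by
        intro j
        unfold bb
        exact continuousOn_finsetSum _ fun i _ => continuousOn_const.mul ((hinv.pow i).mul continuousOn_const)
      exact continuousOn_finsetSum _ fun k _ => (((hbb (k+1)).add (hbb k)).add continuousOn_const).norm
    obtain ⟨κ, hκ, hmin⟩ := (isCompact_sphere (0:ℂ) 1).exists_isMinOn ⟨1, by simp⟩ hcont
    exact ⟨m, _, hm κ (by simpa using hκ), fun κ' h' => hmin (by simpa using h')⟩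
  · right
    push Not at h
    have h2 : ∀ m, ∃ κ : ℂ, ‖κ‖ = 1 ∧ ∀ k < m, bb (fun k => κ⁻¹ ^ k * c k) (k + 1) + bb (fun k => κ⁻¹ ^ k * c k) k + 2 = 0 := by
      intro m
      obtain ⟨κ, hκ, hs⟩ := h m
      refine ⟨κ, hκ, fun k hk => ?_⟩
      have h3 := (Finset.sum_eq_zero_iff_of_nonneg (fun k _ => norm_nonneg _)).1 (le_antisymm hs (Finset.sum_nonneg fun k _ => norm_nonneg _))
      exact norm_eq_zero.1 (h3 k (Finset.mem_range.2 hk))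
    have h1 : ∀ m κ, 1 ≤ m → ‖κ‖ = 1 → (∀ k < m, bb (fun k => κ⁻¹ ^ k * c k) (k + 1) + bb (fun k => κ⁻¹ ^ k * c k) k + 2 = 0) → κ = - c 1 / 2 := by
      intro m κ hm hκ hk
      have hκ0 : κ ≠ 0 := by rintro rfl; simp at hκ
      have := hk 0 (by omega)
      simp [bb, Finset.sum_range_succ] at this
      field_simp at this
      linear_combination this / 2
    obtain ⟨κ, hκ, hk1⟩ := h2 1
    have hκe := h1 1 κ le_rfl hκ hk1
    have hκ0 : κ ≠ 0 := by rintro rfl; simp at hκ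
    have hall : ∀ k, bb (fun k => κ⁻¹ ^ k * c k) (k + 1) + bb (fun k => κ⁻¹ ^ k * c k) k + 2 = 0 := by
      intro k
      obtain ⟨κ', hκ', hk'⟩ := h2 (k + 1)
      have := h1 (k + 1) κ' (by omega) hκ' hk'
      rw [← hκe] at this
      subst this
      exact hk' k (by omega)
    have hb : ∀ k, bb (fun k => κ⁻¹ ^ k * c k) k = (-1) ^ k - 1 := by
      intro k
      induction k with
      | zero => simp [bb]
      | succ k ih => have := hall k; rw [ih] at this; rw [pow_succ]; linear_combination this
    refine ⟨-κ, by simpa using hκ, fun k hk => ?_⟩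
    obtain ⟨j, rfl⟩ : ∃ j, k = j + 1 := ⟨k - 1, by omega⟩
    have e1 := hb (j + 1)
    rw [bb_succ, hb j] at e1
    have hj : ((j + 1 : ℕ) : ℂ) ≠ 0 := by exact_mod_cast (Nat.succ_ne_zero j)
    rw [eq_div_iff hj]
    have e2 : ((j + 1 : ℕ) : ℂ) * (κ⁻¹ ^ (j + 1) * c (j + 1)) = 2 * (-1) ^ (j + 1) := by
      rw [pow_succ] at e1 ⊢; push_cast at e1 ⊢; linear_combination e1
    have e3 : κ ^ (j + 1) * κ⁻¹ ^ (j + 1) = 1 := by rw [← mul_pow, mul_inv_cancel₀ hκ0, one_pow]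
    rw [neg_pow κ]
    linear_combination κ ^ (j+1) * e2 - c (j+1) * ((j + 1 : ℕ) : ℂ) * e3

/-- The coefficients `2 α ^ k / k` are those of `-2 * log (1 - α * z)`. -/
lemma koebe_of_coeff {f g : ℂ → ℂ} (hf0 : f 0 = 0) (hg : DifferentiableOn ℂ g (ball 0 1)) (hg0 : g 0 = 0)
    (hgf : ∀ z ∈ ball (0:ℂ) 1, z ≠ 0 → Complex.exp (g z) = f z / z) {α : ℂ} (hα : ‖α‖ = 1)
    (hc : ∀ k : ℕ, 1 ≤ k → iteratedDeriv k g 0 / k.factorial = 2 * α ^ k / k) :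
    ∃ θ : ℝ, Set.EqOn f (fun z => z / (1 - Complex.exp (θ * Complex.I) * z) ^ 2) (ball (0 : ℂ) 1) := by
  refine ⟨Complex.arg α, ?_⟩
  have hαe : Complex.exp (Complex.arg α * Complex.I) = α := by
    have := Complex.norm_mul_exp_arg_mul_I α
    rwa [hα, Complex.ofReal_one, one_mul] at this
  rw [hαe]
  have hsl : ∀ z ∈ ball (0:ℂ) 1, 1 - α * z ∈ Complex.slitPlane := by
    intro z hz
    left
    have h1 : ‖α * z‖ < 1 := by rw [norm_mul, hα, one_mul]; simpa using hz
    have := (Complex.re_le_norm (α * z)).trans_lt h1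
    rw [sub_re, one_re]; linarith
  set G : ℂ → ℂ := fun z => -2 * Complex.log (1 - α * z) with hG
  have hGd : DifferentiableOn ℂ G (ball 0 1) := by
    have : DifferentiableOn ℂ (fun z : ℂ => 1 - α * z) (ball 0 1) := by fun_prop
    exact (this.clog hsl).const_mul _
  have hGa : AnalyticAt ℂ G 0 := hGd.analyticAt (isOpen_ball.mem_nhds (mem_ball_self one_pos))
  have hco : ∀ k, iteratedDeriv k g 0 = iteratedDeriv k G 0 := by
    intro k
    rcases Nat.eq_zero_or_pos k with rfl | hk
    · simp [hg0, hG]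
    · have hJ := (Jet.const k (-2)).mul (Jet.log_one_sub k α)
      have h1 := Jet.coeff_eq hGa hJ (le_refl k)
      rw [coeff_C_mul, finsetSum_coeff] at h1
      simp only [coeff_C_mul, coeff_X_pow, mul_ite, mul_one, mul_zero] at h1
      rw [Finset.sum_ite_eq, if_pos (Finset.mem_range.2 (by omega))] at h1
      have hkf : (k.factorial : ℂ) ≠ 0 := by exact_mod_cast k.factorial_ne_zero
      have h2 := hc k hk
      have h3 : iteratedDeriv k g 0 / k.factorial = iteratedDeriv k G 0 / k.factorial := by
        rw [h2, ← h1]; ring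
      exact (div_left_inj' hkf).1 h3
  intro z hz
  by_cases hz0 : z = 0
  · subst hz0; simp [hf0]
  have e : g z = G z := by
    rw [← Complex.taylorSeries_eq_on_ball' hz hg, ← Complex.taylorSeries_eq_on_ball' hz hGd]
    simp only [hco]
  have h1 := hgf z hz hz0
  have hne := Complex.slitPlane_ne_zero (hsl z hz)
  have h2 : Complex.exp (G z) = ((1 - α * z) ^ 2)⁻¹ := by
    have : G z = -(Complex.log (1 - α * z) + Complex.log (1 - α * z)) := by simp only [hG]; ring
    rw [this, Complex.exp_neg, Complex.exp_add, Complex.exp_log hne, sq]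
  rw [e, h2, eq_div_iff hz0] at h1
  simp only
  rw [← h1]; ring

end

/-! ### Summation with the weights -/

section

open Filter Topology

/-- The weights of the final summation, in terms of `k * |γ_k| ^ 2`; the index is shifted by one. -/
noncomputable def lam (k : ℕ) : ℝ := ((k : ℝ) + 1) / ((k : ℝ) + 2) ^ 3

/-- The first differences of `lam`, with the sign that makes them nonnegative. -/
noncomputable def lamD (k : ℕ) : ℝ := lam k - lam (k + 1)

/-- Strict convexity of the weights. -/
lemma lamD_pos (k : ℕ) : 0 < lamD k - lamD (k + 1) := by
  unfold lamD lam
  push_cast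
  have hk : (0:ℝ) ≤ k := Nat.cast_nonneg k
  set x : ℝ := (k : ℝ)
  have e : (x + 1) / (x + 2) ^ 3 - (x + 1 + 1) / (x + 1 + 2) ^ 3 - ((x + 1 + 1) / (x + 1 + 2) ^ 3 - (x + 1 + 1 + 1) / (x + 1 + 1 + 2) ^ 3)
     = ((x + 1) * (x + 3) ^ 3 * (x + 4) ^ 3 - 2 * (x + 2) ^ 4 * (x + 4) ^ 3 + (x + 3) ^ 4 * (x + 2) ^ 3) / ((x + 2) ^ 3 * (x + 3) ^ 3 * (x + 4) ^ 3) := by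
    have h1 : x + 1 + 2 = x + 3 := by ring
    have h2 : x + 1 + 1 + 2 = x + 4 := by ring
    rw [h1, h2]
    field_simp
    ring
  rw [e]
  refine div_pos ?_ (by positivity)
  ring_nf
  positivity

lemma lamD_nonneg (k : ℕ) : 0 ≤ lamD k := by
  have e : lamD k = ((k + 1) * (k + 3) ^ 3 - (k + 2) ^ 4) / (((k:ℝ) + 2) ^ 3 * (k + 3) ^ 3) := by
    unfold lamD lam
    push_cast
    have h1 : (k : ℝ) + 1 + 2 = k + 3 := by ring
    rw [h1]; field_simp; ring
  rw [e]
  refine div_nonneg ?_ (by positivity)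
  ring_nf
  positivity

/-- The double partial sums `∑_{l ≤ m} ∑_{k < l} a k`. -/
noncomputable def dsum (a : ℕ → ℝ) (m : ℕ) : ℝ := ∑ k ∈ Finset.range m, ((m : ℝ) - k) * a k

lemma dsum_succ (a : ℕ → ℝ) (m : ℕ) : dsum a (m + 1) = dsum a m + ∑ k ∈ Finset.range (m + 1), a k := by
  unfold dsum
  rw [Finset.sum_range_succ, Finset.sum_range_succ, ← add_assoc, ← Finset.sum_add_distrib]
  congr 1
  · exact Finset.sum_congr rfl fun k _ => by push_cast; ring
  · push_cast; ring

/-- Summation by parts, twice. -/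
lemma abel (a : ℕ → ℝ) (n : ℕ) : ∑ k ∈ Finset.range n, lam k * a k =
    lam n * ∑ k ∈ Finset.range n, a k + lamD n * dsum a n + ∑ k ∈ Finset.range n, (lamD k - lamD (k + 1)) * dsum a (k + 1) := by
  induction n with
  | zero => simp [dsum]
  | succ n ih =>
    rw [Finset.sum_range_succ, ih, Finset.sum_range_succ (fun k => (lamD k - lamD (k + 1)) * dsum a (k + 1)), dsum_succ, Finset.sum_range_succ a]
    simp only [lamD]
    ring

lemma dsum_lower (a : ℕ → ℝ) (ha : ∀ k : ℕ, -(1 / ((k : ℝ) + 1)) ≤ a k) (n : ℕ) : - (n * ∑ k ∈ Finset.range n, 1 / ((k : ℝ) + 1)) ≤ dsum a n := by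
  unfold dsum
  rw [Finset.mul_sum, ← Finset.sum_neg_distrib]
  refine Finset.sum_le_sum fun k hk => ?_
  have hk' : (k : ℝ) ≤ n := by exact_mod_cast (Finset.mem_range.1 hk).le
  have h1 : 0 ≤ 1 / ((k : ℝ) + 1) := by positivity
  have h0 : (0:ℝ) ≤ k := Nat.cast_nonneg k
  nlinarith [ha k]

/-- If all double partial sums are nonpositive, the weighted partial sums are bounded by a boundary term
tending to `0` plus any single one of the nonpositive convexity terms. -/
lemma partial_bound (a : ℕ → ℝ) (ha : ∀ k : ℕ, -(1 / ((k : ℝ) + 1)) ≤ a k) (hM : ∀ m, dsum a m ≤ 0) (j n : ℕ) (hj : j < n) :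
    ∑ k ∈ Finset.range n, lam k * a k ≤ (n : ℝ)⁻¹ * ∑ k ∈ Finset.range n, 1 / ((k : ℝ) + 1) + (lamD j - lamD (j + 1)) * dsum a (j + 1) := by
  rw [abel]
  have h1 : lamD n * dsum a n ≤ 0 := mul_nonpos_of_nonneg_of_nonpos (lamD_nonneg n) (hM n)
  have h2 : ∑ k ∈ Finset.range n, (lamD k - lamD (k + 1)) * dsum a (k + 1) ≤ (lamD j - lamD (j + 1)) * dsum a (j + 1) := by
    rw [← Finset.add_sum_erase _ _ (Finset.mem_range.2 hj)]
    have : ∑ k ∈ (Finset.range n).erase j, (lamD k - lamD (k + 1)) * dsum a (k + 1) ≤ 0 :=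
      Finset.sum_nonpos fun k _ => mul_nonpos_of_nonneg_of_nonpos (lamD_pos k).le (hM _)
    linarith
  obtain ⟨p, rfl⟩ : ∃ p, n = p + 1 := ⟨n - 1, by omega⟩
  have hH : 0 ≤ ∑ k ∈ Finset.range p, 1 / ((k : ℝ) + 1) := Finset.sum_nonneg fun k _ => by positivity
  set H := ∑ k ∈ Finset.range p, 1 / ((k : ℝ) + 1)
  have h3 : ∑ k ∈ Finset.range (p + 1), a k ≤ p * H := by
    have e1 := dsum_succ a p
    have e2 := hM (p + 1)
    have e3 := dsum_lower a ha p
    linarith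
  have h4 : lam (p + 1) * ∑ k ∈ Finset.range (p + 1), a k ≤ ((p + 1 : ℕ) : ℝ)⁻¹ * H := by
    have hl : 0 ≤ lam (p + 1) := by unfold lam; positivity
    refine (mul_le_mul_of_nonneg_left h3 hl).trans ?_
    have : lam (p + 1) * p ≤ ((p + 1 : ℕ) : ℝ)⁻¹ := by
      unfold lam
      push_cast
      rw [div_mul_eq_mul_div, ← one_div, div_le_div_iff₀ (by positivity) (by positivity)]
      ring_nf
      have hp : (0:ℝ) ≤ p := Nat.cast_nonneg p
      nlinarith [pow_nonneg hp 2, pow_nonneg hp 3]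
    nlinarith
  have h5 : ((p + 1 : ℕ) : ℝ)⁻¹ * H ≤ ((p + 1 : ℕ) : ℝ)⁻¹ * ∑ k ∈ Finset.range (p + 1), 1 / ((k : ℝ) + 1) := by
    refine mul_le_mul_of_nonneg_left ?_ (by positivity)
    rw [Finset.sum_range_succ]
    have : 0 ≤ 1 / ((p : ℝ) + 1) := by positivity
    linarith
  linarith

lemma zeta_three : HasSum (fun n : ℕ => 1 / ((n : ℝ) + 2) ^ 3) ((riemannZeta 3).re - 1) := by
  have hs : Summable (fun n : ℕ => 1 / (n : ℝ) ^ 3) := Real.summable_one_div_nat_pow.2 (by norm_num)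
  have hz : (riemannZeta 3).re = ∑' n : ℕ, 1 / (n : ℝ) ^ 3 := by
    have := zeta_nat_eq_tsum_of_gt_one (k := 3) (by norm_num)
    have h3 : ((3 : ℕ) : ℂ) = 3 := by norm_num
    rw [h3] at this
    rw [this]
    have e : ∀ n : ℕ, 1 / (n : ℂ) ^ 3 = ((1 / (n : ℝ) ^ 3 : ℝ) : ℂ) := fun n => by push_cast; rfl
    simp only [e]
    rw [← Complex.ofReal_tsum, Complex.ofReal_re]
  have h := (hasSum_nat_add_iff' (f := fun n : ℕ => 1 / (n : ℝ) ^ 3) 2).2 hs.hasSum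
  rw [hz]
  simpa [Finset.sum_range_succ] using h

/-- The final summation. Keeping the convexity term of index `j` yields strictness as soon as
the Milin inequality of order `j + 1` is strict. -/
lemma tsum_bound (x : ℕ → ℝ) (hx : ∀ k, 0 ≤ x k) (hM : ∀ m, dsum (fun k => x k - 1 / ((k : ℝ) + 1)) m ≤ 0) (j : ℕ) :
    ∑' k, lam k * x k ≤ (riemannZeta 3).re - 1 + (lamD j - lamD (j + 1)) * dsum (fun k => x k - 1 / ((k : ℝ) + 1)) (j + 1) := by
  set a : ℕ → ℝ := fun k => x k - 1 / ((k : ℝ) + 1) with ha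
  have ha' : ∀ k : ℕ, -(1 / ((k : ℝ) + 1)) ≤ a k := fun k => by simp only [ha]; linarith [hx k]
  have hces : Tendsto (fun n : ℕ => (n : ℝ)⁻¹ * ∑ k ∈ Finset.range n, 1 / ((k : ℝ) + 1)) atTop (𝓝 0) :=
    (tendsto_one_div_add_atTop_nhds_zero_nat).cesaro
  have hp : ∀ n, j < n → ∑ k ∈ Finset.range n, lam k * x k ≤
      (n : ℝ)⁻¹ * ∑ k ∈ Finset.range n, 1 / ((k : ℝ) + 1) + (lamD j - lamD (j + 1)) * dsum a (j + 1) + ∑ k ∈ Finset.range n, 1 / ((k : ℝ) + 2) ^ 3 := by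
    intro n hn
    have h1 := partial_bound a ha' hM j n hn
    have h2 : ∑ k ∈ Finset.range n, lam k * x k = ∑ k ∈ Finset.range n, lam k * a k + ∑ k ∈ Finset.range n, 1 / ((k : ℝ) + 2) ^ 3 := by
      rw [← Finset.sum_add_distrib]
      refine Finset.sum_congr rfl fun k _ => ?_
      simp only [ha, lam]
      field_simp
      ring
    linarith
  have hR := (hces.add_const ((lamD j - lamD (j + 1)) * dsum a (j + 1))).add zeta_three.tendsto_sum_nat
  have hnn : ∀ k, 0 ≤ lam k * x k := fun k => mul_nonneg (by unfold lam; positivity) (hx k)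
  -- Summability is proved, so the infinite sum below is not a junk value.
  have hsum : Summable fun k => lam k * x k := by
    obtain ⟨B, hB⟩ := hR.bddAbove_range
    refine summable_of_sum_range_le (c := B) hnn fun n => ?_
    have h1 : ∑ k ∈ Finset.range n, lam k * x k ≤ ∑ k ∈ Finset.range (n + j + 1), lam k * x k :=
      Finset.sum_le_sum_of_subset_of_nonneg (Finset.range_subset_range.2 (by omega)) fun k _ _ => hnn k
    exact h1.trans ((hp (n + j + 1) (by omega)).trans (hB ⟨n + j + 1, rfl⟩))
  have := le_of_tendsto_of_tendsto hsum.hasSum.tendsto_sum_nat hR (by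
    filter_upwards [eventually_gt_atTop j] with n hn using hp n hn)
  linarith

end

theorem logcoeff_nsq_over_cube
    (f : ℂ → ℂ) (γ : ℕ → ℂ) (hf : InClassS f) (hγ : IsLogCoeffs f γ) :
    (∑' n : ℕ, (((n : ℝ) + 1) ^ 2 / (((n : ℝ) + 1) + 1) ^ 3) * ‖γ (n + 1)‖ ^ 2 ≤ (riemannZeta 3).re - 1) ∧
    (∑' n : ℕ, (((n : ℝ) + 1) ^ 2 / (((n : ℝ) + 1) + 1) ^ 3) * ‖γ (n + 1)‖ ^ 2 = (riemannZeta 3).re - 1 → IsKoebeRotation f) := by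
  obtain ⟨hfa, hinj, hf0, hf1⟩ := hf
  obtain ⟨g, hga, hg0, hgf, hgc⟩ := hγ
  have h0 : (0:ℂ) ∈ ball (0:ℂ) 1 := mem_ball_self one_pos
  have hc : ∀ k : ℕ, 1 ≤ k → iteratedDeriv k g 0 / k.factorial = 2 * γ k := fun k hk => by
    have : (k.factorial : ℂ) ≠ 0 := by exact_mod_cast k.factorial_ne_zero
    rw [hgc k hk]; field_simp
  set x : ℕ → ℝ := fun k => ((k : ℝ) + 1) * ‖γ (k + 1)‖ ^ 2 with hx
  have hterm : ∀ n : ℕ, (((n : ℝ) + 1) ^ 2 / (((n : ℝ) + 1) + 1) ^ 3) * ‖γ (n + 1)‖ ^ 2 = lam n * x n := fun n => by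
    simp only [hx, lam]
    have : (n : ℝ) + 1 + 1 = n + 2 := by ring
    rw [this]; ring
  have hmil : ∀ m, Mil m (fun i => iteratedDeriv i g 0 / i.factorial) = 4 * dsum (fun k => x k - 1 / ((k : ℝ) + 1)) m := by
    intro m
    unfold Mil dsum
    rw [Finset.mul_sum]
    refine Finset.sum_congr rfl fun k _ => ?_
    beta_reduce
    rw [hc (k + 1) (by omega), norm_mul, mul_pow]
    simp only [hx, Complex.norm_ofNat]
    ring
  have hM : ∀ m, dsum (fun k => x k - 1 / ((k : ℝ) + 1)) m ≤ 0 := fun m => by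
    have := milin hfa.differentiableOn hinj hf0 hf1 (hga 0 h0) hg0 hgf m
    rw [hmil] at this; linarith
  have hx0 : ∀ k, 0 ≤ x k := fun k => by positivity
  simp only [hterm]
  have hb := tsum_bound x hx0 hM
  have hprod : ∀ j, (lamD j - lamD (j + 1)) * dsum (fun k => x k - 1 / ((k : ℝ) + 1)) (j + 1) ≤ 0 := fun j =>
    mul_nonpos_of_nonneg_of_nonpos (lamD_pos j).le (hM _)
  refine ⟨by linarith [hb 0, hprod 0], fun heq => ?_⟩
  rcases gap_or_extremal (fun i => iteratedDeriv i g 0 / i.factorial) with ⟨m, δ, hδ0, hδ⟩ | ⟨α, hα, hαc⟩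
  · exfalso
    obtain ⟨i, hi⟩ := milin_strict hfa.differentiableOn hinj hf0 hf1 (hga 0 h0) hg0 hgf hδ0 hδ
    rw [hmil] at hi
    rcases i with _ | j
    · simp [dsum] at hi
    · have h1 : dsum (fun k => x k - 1 / ((k : ℝ) + 1)) (j + 1) < 0 := by linarith
      have h2 := mul_neg_of_pos_of_neg (lamD_pos j) h1
      have h3 := hb j
      rw [heq] at h3
      linarith
  · exact koebe_of_coeff hf0 hga.differentiableOn hg0 hgf hα hαc
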